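/- arXiv:2404.16615 — 2 statements merged into one kernel-verified Lean document; each statement's English description precedes it below -/
import Mathlib

section
/- Under Assumption (A), for every ε ∈ (0,t0) there exist a (D_{1,ε})-admissible measure μ_{1,ε} such that ∫ g dμ_{1,ε} ≥ ∫ g dμ for every (D_{1,ε})-admissible μ, and a (P_{1,ε})-admissible measure λ_{1,ε} such that λ_{1,ε}(Ω_ε) ≤ λ(Ω_ε) for every (P_{1,ε})-admissible λ; i.e. the optimal values d_{1,ε} := sup{∫ g dμ : μ (D_{1,ε})-admissible} and p_{1,ε} := inf{λ(Ω_ε) : λ (P_{1,ε})-admissible} are attained. -/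
open MeasureTheory Set Filter
open scoped ENNReal NNReal Topology

noncomputable def rTheta (θ t x : ℝ) : ℝ := Real.exp (-θ ^ 2 / (2 * t) + θ * x / t)

noncomputable def rMu (μ : Measure ℝ) (t x : ℝ) : ℝ≥0∞ :=
  ∫⁻ θ, ENNReal.ofReal (rTheta θ t x) ∂μ

/-- `(D_{1,ε})`-admissibility: a finite nonnegative Borel measure on `[2b(0),∞)`
with `r_μ(t, b(t)) ≤ 1` for all `t ∈ Ω_ε = [ε, t0]`. -/
def D1epsAdm (b : ℝ → ℝ) (t0 ε : ℝ) (μ : Measure ℝ) : Prop :=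
  IsFiniteMeasure μ ∧ μ (Set.Ici (2 * b 0))ᶜ = 0 ∧
    ∀ t ∈ Set.Icc ε t0, rMu μ t (b t) ≤ 1

/-- `(P_{1,ε})`-admissibility: a finite nonnegative Borel measure on `Ω_ε = [ε, t0]`
with `∫ r_θ(t, b(t)) λ(dt) ≥ g(θ) = r_θ(t0, x0)` for all `θ ∈ [2b(0),∞)`. -/
def P1epsAdm (b : ℝ → ℝ) (t0 x0 ε : ℝ) (lam : Measure ℝ) : Prop :=
  IsFiniteMeasure lam ∧ lam (Set.Icc ε t0)ᶜ = 0 ∧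
    ∀ θ ∈ Set.Ici (2 * b 0),
      ENNReal.ofReal (rTheta θ t0 x0) ≤ ∫⁻ t, ENNReal.ofReal (rTheta θ t (b t)) ∂lam

/-- complex kernel -/
noncomputable def fk (B : ℂ → ℂ) (θ : ℝ) (w : ℂ) : ℂ :=
  Complex.exp (-((θ : ℂ) ^ 2 / 2) * w + θ * B w)

structure GoodB (B : ℂ → ℂ) (ρ A : ℝ) : Prop where
  hρ : 0 < ρ
  hA : 0 ≤ A
  diff : DifferentiableOn ℂ B (Metric.ball 0 ρ)
  zero : B 0 = 0
  lip : ∀ w ∈ Metric.ball (0 : ℂ) ρ, ∀ w' ∈ Metric.ball (0 : ℂ) ρ, ‖B w - B w'‖ ≤ A * ‖w - w'‖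

lemma GoodB.bd {B : ℂ → ℂ} {ρ A : ℝ} (h : GoodB B ρ A) {w : ℂ} (hw : w ∈ Metric.ball (0 : ℂ) ρ) :
    ‖B w‖ ≤ A * ‖w‖ := by
  have := h.lip w hw 0 (Metric.mem_ball_self h.hρ)
  simpa [h.zero] using this

lemma GoodB.diff_fk {B : ℂ → ℂ} {ρ A : ℝ} (h : GoodB B ρ A) (θ : ℝ) :
    DifferentiableOn ℂ (fk B θ) (Metric.ball 0 ρ) := by
  unfold fk
  have := h.diff
  fun_prop

lemma GoodB.norm_fk_le {B : ℂ → ℂ} {ρ A : ℝ} (h : GoodB B ρ A) {θ : ℝ} (hθ : 0 ≤ θ) {w : ℂ}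
    (hw : w ∈ Metric.ball (0 : ℂ) ρ) :
    ‖fk B θ w‖ ≤ Real.exp (-(θ ^ 2 / 2) * w.re + θ * (A * ‖w‖)) := by
  unfold fk
  rw [Complex.norm_exp]
  apply Real.exp_le_exp.2
  have h1 : (-((θ : ℂ) ^ 2 / 2) * w).re = -(θ ^ 2 / 2) * w.re := by
    have : (-((θ : ℂ) ^ 2 / 2)) = ((-(θ ^ 2 / 2) : ℝ) : ℂ) := by push_cast; ring
    rw [this, Complex.re_ofReal_mul]
  rw [Complex.add_re, h1, Complex.re_ofReal_mul]
  have h2 : (B w).re ≤ A * ‖w‖ := (Complex.re_le_norm _).trans (h.bd hw)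
  have := mul_le_mul_of_nonneg_left h2 hθ
  linarith

lemma GoodB.norm_fk_le' {B : ℂ → ℂ} {ρ A : ℝ} (h : GoodB B ρ A) {θ : ℝ} (hθ : 0 ≤ θ) {w : ℂ}
    (hw : w ∈ Metric.ball (0 : ℂ) ρ) :
    ‖fk B θ w‖ ≤ Real.exp ((θ ^ 2 / 2) * ‖w‖ + θ * (A * ‖w‖)) := by
  refine (h.norm_fk_le hθ hw).trans (Real.exp_le_exp.2 ?_)
  have := Complex.abs_re_le_norm w
  have h2 := neg_abs_le w.re
  nlinarith [sq_nonneg θ]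

/-- Cauchy bound at 0 -/
lemma GoodB.cauchy {B : ℂ → ℂ} {ρ A : ℝ} (h : GoodB B ρ A) {θ : ℝ} (hθ : 0 ≤ θ) {r : ℝ}
    (hr : 0 < r) (hrρ : r < ρ) (k : ℕ) :
    ‖iteratedDeriv k (fk B θ) 0‖ ≤ k.factorial * Real.exp ((θ ^ 2 / 2) * r + θ * (A * r)) / r ^ k := by
  apply Complex.norm_iteratedDeriv_le_of_forall_mem_sphere_norm_le k hr
  · apply DifferentiableOn.diffContOnCl
    apply (h.diff_fk θ).mono
    rw [closure_ball _ hr.ne']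
    exact Metric.closedBall_subset_ball hrρ
  · intro z hz
    have hz' : ‖z‖ = r := by simpa using hz
    have := h.norm_fk_le' hθ (w := z) (by simpa [hz'] using hrρ)
    rwa [hz'] at this

lemma GoodB.shift {B : ℂ → ℂ} {ρ A : ℝ} (h : GoodB B ρ A) {t : ℂ} (ht : t ∈ Metric.ball (0 : ℂ) (ρ / 2)) :
    GoodB (fun w => B (t + w) - B t) (ρ / 2) A := by
  have ht' : ‖t‖ < ρ / 2 := by simpa using ht
  have key : ∀ w ∈ Metric.ball (0 : ℂ) (ρ / 2), t + w ∈ Metric.ball (0 : ℂ) ρ := by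
    intro w hw
    have hw' : ‖w‖ < ρ / 2 := by simpa using hw
    have := norm_add_le t w
    simp only [Metric.mem_ball, dist_zero_right]; linarith
  refine ⟨by linarith [h.hρ], h.hA, ?_, by simp, ?_⟩
  · apply DifferentiableOn.sub_const
    exact h.diff.comp (by fun_prop) key
  · intro w hw w' hw'
    have := h.lip _ (key w hw) _ (key w' hw')
    simpa using this

lemma fk_shift (B : ℂ → ℂ) (θ : ℝ) (t w : ℂ) :
    fk B θ (t + w) = fk B θ t * fk (fun w => B (t + w) - B t) θ w := by
  unfold fk
  rw [← Complex.exp_add]; congr 1; ring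

lemma iteratedDeriv_fk_shift (B : ℂ → ℂ) (θ : ℝ) (t : ℂ) (k : ℕ) :
    iteratedDeriv k (fk B θ) t = fk B θ t * iteratedDeriv k (fk (fun w => B (t + w) - B t) θ) 0 := by
  have h1 := congrFun (iteratedDeriv_comp_const_add k (fk B θ) t) 0
  simp only [add_zero] at h1
  rw [← h1, ← iteratedDeriv_const_mul_field]
  congr 1
  funext w
  exact fk_shift B θ t w

/-- The key derivative estimate for large θ. -/
lemma GoodB.deriv_large {B : ℂ → ℂ} {ρ A D : ℝ} (h : GoodB B ρ A) (hD : 2 + 4 * Real.exp A ≤ D)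
    (hD' : 1 / ρ < D) {k : ℕ} (hk : 1 ≤ k) {θ : ℝ} (hθ : D * k ≤ θ) :
    ‖iteratedDeriv k (fk B θ) 0 - (-((θ : ℂ) ^ 2 / 2)) ^ k‖ ≤ (θ ^ 2 / 2) ^ k / 2 := by
  have hA1 : 1 ≤ Real.exp A := Real.one_le_exp h.hA
  have hDpos : 6 ≤ D := by linarith
  have hk' : (1 : ℝ) ≤ k := by exact_mod_cast hk
  have hθD : D ≤ θ := by nlinarith
  have hθpos : 0 < θ := by linarith
  have hr : 1 / θ < ρ := by
    have hρ := h.hρ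
    rw [div_lt_iff₀ hθpos]
    rw [div_lt_iff₀ hρ] at hD'
    nlinarith
  have hE : ∀ m : ℕ, ‖iteratedDeriv m (fun w => Complex.exp (θ * B w)) 0‖
      ≤ m.factorial * Real.exp A * θ ^ m := by
    intro m
    have := Complex.norm_iteratedDeriv_le_of_forall_mem_sphere_norm_le (c := 0) (R := 1 / θ)
      (C := Real.exp A) (f := fun w => Complex.exp (θ * B w)) m (by positivity) ?_ ?_
    · refine this.trans (le_of_eq ?_)
      rw [one_div, inv_pow, div_inv_eq_mul]
    · apply DifferentiableOn.diffContOnCl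
      rw [closure_ball _ (by positivity)]
      have := h.diff.mono (Metric.closedBall_subset_ball hr)
      fun_prop
    · intro z hz
      have hz' : ‖z‖ = 1 / θ := by simpa using hz
      rw [Complex.norm_exp]
      apply Real.exp_le_exp.2
      refine (Complex.re_le_norm _).trans ?_
      rw [norm_mul]
      have hb := h.bd (w := z) (by simp only [Metric.mem_ball, dist_zero_right]; linarith)
      rw [hz'] at hb
      simp only [Complex.norm_real, Real.norm_eq_abs, abs_of_pos hθpos]
      calc θ * ‖B z‖ ≤ θ * (A * (1 / θ)) := by gcongr
        _ = A := by field_simp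
  have hsplit : iteratedDeriv k (fk B θ) 0 = ∑ i ∈ Finset.range (k + 1),
      (k.choose i : ℂ) * (-((θ : ℂ) ^ 2 / 2)) ^ i *
        iteratedDeriv (k - i) (fun w => Complex.exp (θ * B w)) 0 := by
    have h0 : fk B θ = (fun w => Complex.exp (-((θ : ℂ) ^ 2 / 2) * w)) *
        (fun w => Complex.exp (θ * B w)) := by
      funext w; simp [fk, Complex.exp_add]
    rw [h0, iteratedDeriv_mul]
    · apply Finset.sum_congr rfl
      intro i _
      rw [iteratedDeriv_cexp_const_mul]
      simp
    · fun_prop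
    · have : DifferentiableOn ℂ (fun w => Complex.exp (θ * B w)) (Metric.ball 0 ρ) := by
        have := h.diff
        fun_prop
      exact (this.analyticAt (Metric.ball_mem_nhds _ h.hρ)).contDiffAt
  rw [hsplit, Finset.sum_range_succ]
  have hlast : iteratedDeriv (k - k) (fun w => Complex.exp (θ * B w)) 0 = 1 := by
    simp [h.zero]
  rw [hlast]
  simp only [Nat.choose_self, Nat.cast_one, one_mul, mul_one, add_sub_cancel_right]
  refine (norm_sum_le _ _).trans ?_
  have hterm : ∀ i ∈ Finset.range k, ‖(k.choose i : ℂ) * (-((θ : ℂ) ^ 2 / 2)) ^ i *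
        iteratedDeriv (k - i) (fun w => Complex.exp (θ * B w)) 0‖ ≤
        (θ ^ 2 / 2) ^ k * Real.exp A * (2 / D) ^ (k - i) := by
    intro i hi
    have hi : i < k := by simpa using hi
    rw [norm_mul, norm_mul, norm_pow]
    have e1 : ‖(-((θ : ℂ) ^ 2 / 2))‖ = θ ^ 2 / 2 := by
      rw [norm_neg, norm_div, norm_pow]
      simp
    rw [e1, Complex.norm_natCast]
    obtain ⟨m, rfl⟩ : ∃ m, k = i + m := ⟨k - i, by omega⟩
    have hm : i + m - i = m := by omega
    rw [hm]
    have hch : ((i + m).choose i : ℝ) * m.factorial ≤ ((i + m : ℕ) : ℝ) ^ m := by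
      have h1 : (i + m).choose i = (i + m).choose m := by
        rw [Nat.choose_symm_add]
      rw [h1]
      have := Nat.descFactorial_eq_factorial_mul_choose (i + m) m
      have h2 := Nat.descFactorial_le_pow (i + m) m
      rw [this] at h2
      rw [mul_comm]
      exact_mod_cast h2
    have hratio : ((i + m : ℕ) : ℝ) * θ ≤ (θ ^ 2 / 2) * (2 / D) := by
      have : (θ ^ 2 / 2) * (2 / D) = θ * (θ / D) := by field_simp
      rw [this, mul_comm]
      gcongr
      rw [le_div_iff₀ (by linarith)]
      linarith
    calc ((i + m).choose i : ℝ) * (θ ^ 2 / 2) ^ i * ‖iteratedDeriv m (fun w => Complex.exp (θ * B w)) 0‖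
        ≤ ((i + m).choose i : ℝ) * (θ ^ 2 / 2) ^ i * (m.factorial * Real.exp A * θ ^ m) := by
          gcongr; exact hE m
      _ = (((i + m).choose i : ℝ) * m.factorial) * θ ^ m * ((θ ^ 2 / 2) ^ i * Real.exp A) := by ring
      _ ≤ (((i + m : ℕ) : ℝ) ^ m) * θ ^ m * ((θ ^ 2 / 2) ^ i * Real.exp A) := by gcongr
      _ = (((i + m : ℕ) : ℝ) * θ) ^ m * ((θ ^ 2 / 2) ^ i * Real.exp A) := by rw [mul_pow]
      _ ≤ ((θ ^ 2 / 2) * (2 / D)) ^ m * ((θ ^ 2 / 2) ^ i * Real.exp A) := by gcongr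
      _ = _ := by rw [mul_pow, pow_add]; ring
  refine (Finset.sum_le_sum hterm).trans ?_
  rw [← Finset.mul_sum]
  have hgeo : ∑ i ∈ Finset.range k, (2 / D) ^ (k - i) ≤ 1 / (2 * Real.exp A) := by
    have hx0 : 0 ≤ 2 / D := by positivity
    have hx1 : 2 / D < 1 := by rw [div_lt_one (by linarith)]; linarith
    have e : ∑ i ∈ Finset.range k, (2 / D) ^ (k - i) = ∑ i ∈ Finset.range k, (2 / D) ^ (i + 1) := by
      rw [← Finset.sum_range_reflect]
      apply Finset.sum_congr rfl
      intro i hi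
      have hi : i < k := by simpa using hi
      congr 1; omega
    rw [e]
    simp_rw [pow_succ]
    rw [← Finset.sum_mul]
    have hg : ∑ i ∈ Finset.range k, (2 / D) ^ i ≤ (1 - 2 / D)⁻¹ := by
      rw [← tsum_geometric_of_lt_one hx0 hx1]
      exact (summable_geometric_of_lt_one hx0 hx1).sum_le_tsum _ (fun _ _ => by positivity)
    calc _ ≤ (1 - 2 / D)⁻¹ * (2 / D) := by gcongr
      _ = 2 / (D - 2) := by
        have : D - 2 ≠ 0 := by linarith
        have : D ≠ 0 := by linarith
        field_simp
      _ ≤ 2 / (4 * Real.exp A) := by gcongr; linarith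
      _ = _ := by field_simp; norm_num
  calc _ ≤ (θ ^ 2 / 2) ^ k * Real.exp A * (1 / (2 * Real.exp A)) := by gcongr
    _ = _ := by field_simp

/-- Taylor bounds, real version. -/
lemma taylor_real_le (k : ℕ) : ∀ (ψ : ℕ → ℝ → ℝ) (s M : ℝ), 0 ≤ s →
    (∀ j < k, ∀ t ∈ Icc 0 s, HasDerivAt (ψ j) (ψ (j + 1) t) t) →
    (∀ t ∈ Icc 0 s, ψ k t ≤ M) →
    ψ 0 s - ∑ j ∈ Finset.range k, ψ j 0 * s ^ j / j.factorial ≤ M * s ^ k / k.factorial := by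
  induction k with
  | zero =>
    intro ψ s M hs _ hM
    simpa using hM s ⟨hs, le_rfl⟩
  | succ k ih =>
    intro ψ s M hs hd hM
    let G : ℝ → ℝ := fun t => M * t ^ (k + 1) / (k + 1).factorial -
      (ψ 0 t - ∑ j ∈ Finset.range (k + 1), ψ j 0 * t ^ j / j.factorial)
    let G' : ℝ → ℝ := fun t => M * t ^ k / k.factorial -
      (ψ 1 t - ∑ j ∈ Finset.range k, ψ (j + 1) 0 * t ^ j / j.factorial)
    have hG : ∀ t ∈ Icc 0 s, HasDerivAt G (G' t) t := by
      intro t ht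
      apply HasDerivAt.sub
      · have := ((hasDerivAt_pow (k + 1) t).const_mul M).div_const ((k + 1).factorial : ℝ)
        refine this.congr_deriv ?_
        rw [Nat.factorial_succ]; push_cast; field_simp
      · apply HasDerivAt.sub
        · exact hd 0 (by omega) t ht
        · have e : (fun t : ℝ => ∑ j ∈ Finset.range (k + 1), ψ j 0 * t ^ j / j.factorial) =
            fun t => (∑ j ∈ Finset.range k, ψ (j + 1) 0 * t ^ (j + 1) / (j + 1).factorial) + ψ 0 0 := by
            funext t; rw [Finset.sum_range_succ']; simp
          rw [e]
          apply HasDerivAt.add_const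
          apply HasDerivAt.fun_sum
          intro j _
          have := ((hasDerivAt_pow (j + 1) t).const_mul (ψ (j + 1) 0)).div_const ((j + 1).factorial : ℝ)
          refine this.congr_deriv ?_
          rw [Nat.factorial_succ]; push_cast; field_simp
    have hmono : MonotoneOn G (Icc 0 s) := by
      apply monotoneOn_of_deriv_nonneg (convex_Icc 0 s)
      · intro t ht; exact (hG t ht).continuousAt.continuousWithinAt
      · intro t ht; exact (hG t (interior_subset ht)).differentiableAt.differentiableWithinAt
      · intro t ht
        have ht := interior_subset ht
        rw [(hG t ht).deriv]
        have := ih (fun j => ψ (j + 1)) t M ht.1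
          (fun j hj u hu => hd (j + 1) (by omega) u ⟨hu.1, hu.2.trans ht.2⟩)
          (fun u hu => hM u ⟨hu.1, hu.2.trans ht.2⟩)
        simp only [zero_add] at this
        simp only [G']
        linarith
    have h0 : G 0 = 0 := by
      simp [G, Finset.sum_range_succ']
    have := hmono ⟨le_rfl, hs⟩ ⟨hs, le_rfl⟩ hs
    rw [h0] at this
    simp only [G] at this
    linarith

/-- Taylor bounds for the real part of a rotated holomorphic function. -/
lemma taylor_re_le {f : ℂ → ℂ} {ρ : ℝ} (hf : DifferentiableOn ℂ f (Metric.ball 0 ρ)) (k : ℕ)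
    (c : ℂ) {s M : ℝ} (hs : 0 ≤ s) (hsρ : s < ρ)
    (hM : ∀ t ∈ Icc 0 s, (c * iteratedDeriv k f (t : ℂ)).re ≤ M) :
    (c * (f s - ∑ j ∈ Finset.range k, iteratedDeriv j f 0 / j.factorial * (s : ℂ) ^ j)).re
      ≤ M * s ^ k / k.factorial := by
  have := taylor_real_le k (fun j t => (c * iteratedDeriv j f (t : ℂ)).re) s M hs ?_ hM
  · refine le_trans (le_of_eq ?_) this
    simp only [iteratedDeriv_zero, mul_sub, Complex.sub_re, Finset.mul_sum, Complex.re_sum]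
    congr 1
    apply Finset.sum_congr rfl
    intro j _
    have : c * (iteratedDeriv j f 0 / j.factorial * (s : ℂ) ^ j) =
      ((s ^ j / j.factorial : ℝ) : ℂ) * (c * iteratedDeriv j f 0) := by
      push_cast; ring
    rw [this, Complex.re_ofReal_mul]
    simp only [Complex.ofReal_zero]; ring
  · intro j _ t ht
    have hd : DifferentiableAt ℂ (iteratedDeriv j f) (t : ℂ) := by
      have hball : (t : ℂ) ∈ Metric.ball (0 : ℂ) ρ := by
        simp only [Metric.mem_ball, dist_zero_right, Complex.norm_real, Real.norm_eq_abs]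
        rw [abs_of_nonneg ht.1]; linarith [ht.2]
      have ha : AnalyticAt ℂ f (t : ℂ) := hf.analyticAt (Metric.isOpen_ball.mem_nhds hball)
      rw [iteratedDeriv_eq_iterate]
      exact (AnalyticAt.iterated_deriv ha j).differentiableAt
    have h1 : HasDerivAt (fun z => c * iteratedDeriv j f z) (c * iteratedDeriv (j + 1) f t) (t : ℂ) := by
      rw [iteratedDeriv_succ]
      exact hd.hasDerivAt.const_mul c
    exact h1.real_of_complex

lemma taylor_norm_le {f : ℂ → ℂ} {ρ : ℝ} (hf : DifferentiableOn ℂ f (Metric.ball 0 ρ)) (k : ℕ)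
    {s M : ℝ} (hs : 0 ≤ s) (hsρ : s < ρ)
    (hM : ∀ t ∈ Icc 0 s, ‖iteratedDeriv k f (t : ℂ)‖ ≤ M) :
    ‖f s - ∑ j ∈ Finset.range k, iteratedDeriv j f 0 / j.factorial * (s : ℂ) ^ j‖
      ≤ M * s ^ k / k.factorial := by
  set z := f s - ∑ j ∈ Finset.range k, iteratedDeriv j f 0 / j.factorial * (s : ℂ) ^ j with hz
  rcases eq_or_ne z 0 with h0 | h0
  · rw [h0, norm_zero]
    have : 0 ≤ M := (norm_nonneg _).trans (hM 0 ⟨le_rfl, hs⟩)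
    positivity
  · have hn : (‖z‖ : ℂ) ≠ 0 := by simpa using h0
    set c : ℂ := (starRingEnd ℂ) z / ‖z‖ with hc
    have hc1 : ‖c‖ = 1 := by
      rw [hc, norm_div]; simp [h0]
    have h1 := taylor_re_le hf k c hs hsρ (M := M) (by
      intro t ht
      refine (Complex.re_le_norm _).trans ?_
      rw [norm_mul, hc1, one_mul]
      exact hM t ht)
    rw [← hz] at h1
    have : c * z = (‖z‖ : ℂ) := by
      rw [hc, div_mul_eq_mul_div, mul_comm, Complex.mul_conj, Complex.normSq_eq_norm_sq]
      push_cast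
      field_simp
    rw [this, Complex.ofReal_re] at h1
    exact h1

lemma ball_ofReal {ρ t : ℝ} (h0 : 0 ≤ t) (h1 : t < ρ) : (t : ℂ) ∈ Metric.ball (0 : ℂ) ρ := by
  simp only [Metric.mem_ball, dist_zero_right, Complex.norm_real, Real.norm_eq_abs]
  rwa [abs_of_nonneg h0]

lemma GoodB.norm_fk_real_le {B : ℂ → ℂ} {ρ A : ℝ} (h : GoodB B ρ A) {θ : ℝ} (hθ : 0 ≤ θ) {t : ℝ}
    (ht : 0 ≤ t) (htρ : t < ρ) : ‖fk B θ t‖ ≤ Real.exp (A ^ 2 * ρ) := by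
  refine (h.norm_fk_le hθ (ball_ofReal ht htρ)).trans (Real.exp_le_exp.2 ?_)
  simp only [Complex.ofReal_re, Complex.norm_real, Real.norm_eq_abs, abs_of_nonneg ht]
  have h1 : 0 ≤ A ^ 2 * (ρ - t) := mul_nonneg (sq_nonneg _) (by linarith)
  nlinarith [mul_nonneg ht (sq_nonneg (θ - A)), mul_nonneg ht (sq_nonneg A)]

lemma GoodB.iter_le {B : ℂ → ℂ} {ρ A : ℝ} (h : GoodB B ρ A) {θ : ℝ} (hθ : 0 ≤ θ) {t : ℝ}
    (ht : 0 ≤ t) (htρ : t < ρ / 2) {r : ℝ} (hr : 0 < r) (hrρ : r < ρ / 2) (k : ℕ) :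
    ‖iteratedDeriv k (fk B θ) t‖ ≤
      Real.exp (A ^ 2 * ρ) * (k.factorial * Real.exp ((θ ^ 2 / 2) * r + θ * (A * r)) / r ^ k) := by
  rw [iteratedDeriv_fk_shift, norm_mul]
  have h1 := h.norm_fk_real_le hθ ht (by linarith [h.hρ] : t < ρ)
  have h2 := (h.shift (ball_ofReal ht htρ)).cauchy hθ hr hrρ k
  gcongr

noncomputable def RemK (B : ℂ → ℂ) (k : ℕ) (θ s : ℝ) : ℂ :=
  fk B θ s - ∑ j ∈ Finset.range k, iteratedDeriv j (fk B θ) 0 / j.factorial * (s : ℂ) ^ j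

lemma GoodB.rem_small {B : ℂ → ℂ} {ρ A D : ℝ} (h : GoodB B ρ A) (hD : 2 + 4 * Real.exp A ≤ D)
    (hD' : 2 / ρ < D) {k : ℕ} (hk : 1 ≤ k) {θ : ℝ} (hθ0 : 0 ≤ θ) (hθ : θ ≤ D * k)
    {s : ℝ} (hs : 0 ≤ s) (hsρ : s < ρ / 2) :
    ‖RemK B k θ s‖ ≤ Real.exp (A ^ 2 * ρ) * Real.exp A * (Real.exp (D / 2) * (D * k)) ^ k * s ^ k := by
  have hA1 : 1 ≤ Real.exp A := Real.one_le_exp h.hA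
  have hDpos : 6 ≤ D := by linarith
  have hk' : (1 : ℝ) ≤ k := by exact_mod_cast hk
  have hρ := h.hρ
  have hr : 1 / (D * k) < ρ / 2 := by
    rw [div_lt_iff₀ (by positivity)]
    rw [div_lt_iff₀ hρ] at hD'
    nlinarith
  have h1 := taylor_norm_le (h.diff_fk θ) k hs (by linarith : s < ρ) (fun t ht =>
    h.iter_le hθ0 ht.1 (by linarith [ht.2] : t < ρ / 2) (by positivity) hr k)
  refine h1.trans ?_
  have e : θ ^ 2 / 2 * (1 / (D * k)) + θ * (A * (1 / (D * k))) ≤ k * (D / 2) + A := by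
    have e1 : θ / (D * k) ≤ 1 := by rw [div_le_one (by positivity)]; exact hθ
    have e2 : θ ^ 2 / 2 * (1 / (D * k)) = θ / 2 * (θ / (D * k)) := by ring
    have e3 : θ * (A * (1 / (D * k))) = A * (θ / (D * k)) := by ring
    rw [e2, e3]
    have hA := h.hA
    have : θ / 2 * (θ / (D * k)) ≤ D * k / 2 * 1 := by gcongr
    nlinarith
  have e' := Real.exp_le_exp.2 e
  rw [Real.exp_add (k * (D / 2)) A, Real.exp_nat_mul] at e'
  have hkf : (0 : ℝ) < k.factorial := by positivity
  calc _ = Real.exp (A ^ 2 * ρ) * Real.exp (θ ^ 2 / 2 * (1 / (D * k)) + θ * (A * (1 / (D * k))))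
        * (D * k) ^ k * s ^ k := by
        rw [one_div, inv_pow]; field_simp
    _ ≤ Real.exp (A ^ 2 * ρ) * (Real.exp (D / 2) ^ k * Real.exp A) * (D * k) ^ k * s ^ k := by gcongr
    _ = _ := by rw [mul_pow]; ring

lemma GoodB.rem_large {B : ℂ → ℂ} {ρ A D : ℝ} (h : GoodB B ρ A) (hD : 2 + 4 * Real.exp A ≤ D)
    (hD' : 2 / ρ < D) {k : ℕ} (hk : 1 ≤ k) {θ : ℝ} (hθ : D * k ≤ θ)
    {s : ℝ} (hs : 0 ≤ s) (hsρ : s < ρ / 2) :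
    ‖RemK B k θ s‖ ≤ Real.exp (A ^ 2 * ρ) * 2 * θ ^ (2 * k) * s ^ k := by
  have hA1 : 1 ≤ Real.exp A := Real.one_le_exp h.hA
  have hDpos : 6 ≤ D := by linarith
  have hk' : (1 : ℝ) ≤ k := by exact_mod_cast hk
  have hρ := h.hρ
  have hθ0 : 0 ≤ θ := le_trans (by positivity) hθ
  have hM : ∀ t ∈ Icc 0 s, ‖iteratedDeriv k (fk B θ) (t : ℂ)‖ ≤
      Real.exp (A ^ 2 * ρ) * (2 * θ ^ (2 * k)) := by
    intro t ht
    have ht2 : t < ρ / 2 := by linarith [ht.2]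
    rw [iteratedDeriv_fk_shift, norm_mul]
    have h1 := h.norm_fk_real_le hθ0 ht.1 (by linarith [h.hρ] : t < ρ)
    have h2 := (h.shift (ball_ofReal ht.1 ht2)).deriv_large hD (by
      rw [show 1 / (ρ / 2) = 2 / ρ by field_simp]; exact hD') hk hθ
    have e1 : ‖(-((θ : ℂ) ^ 2 / 2)) ^ k‖ = (θ ^ 2 / 2) ^ k := by
      rw [norm_pow, norm_neg, norm_div, norm_pow]
      simp
    have h3 := norm_le_norm_add_norm_sub' (iteratedDeriv k (fk (fun w => B (t + w) - B t) θ) 0)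
      ((-((θ : ℂ) ^ 2 / 2)) ^ k)
    rw [e1] at h3
    have h4 : (θ ^ 2 / 2) ^ k ≤ θ ^ (2 * k) := by
      rw [pow_mul]; gcongr; linarith [sq_nonneg θ]
    gcongr
    linarith [show 0 ≤ (θ ^ 2 / 2) ^ k by positivity]
  have h1 := taylor_norm_le (h.diff_fk θ) k hs (by linarith : s < ρ) hM
  refine h1.trans ?_
  have : (1 : ℝ) ≤ k.factorial := by exact_mod_cast Nat.one_le_iff_ne_zero.2 (Nat.factorial_ne_zero k)
  calc _ ≤ Real.exp (A ^ 2 * ρ) * (2 * θ ^ (2 * k)) * s ^ k / 1 := by gcongr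
    _ = _ := by ring

lemma fk_real {B : ℂ → ℂ} {t : ℝ} (hB : (B t).im = 0) (θ : ℝ) :
    fk B θ t = ((Real.exp (-(θ ^ 2 / 2) * t + θ * (B t).re) : ℝ) : ℂ) := by
  have : B t = (((B t).re : ℝ) : ℂ) := by
    apply Complex.ext <;> simp [hB]
  unfold fk
  rw [this]
  push_cast
  simp

lemma GoodB.rem_lower {B : ℂ → ℂ} {ρ A D : ℝ} (h : GoodB B ρ A)
    (hreal : ∀ t : ℝ, 0 ≤ t → t < ρ → (B t).im = 0) (hD : 2 + 4 * Real.exp A ≤ D)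
    (hD' : 2 / ρ < D) {k : ℕ} (hk : 1 ≤ k) {θ : ℝ} (hθ : D * k ≤ θ)
    {s : ℝ} (hs : 0 ≤ s) (hsρ : s < ρ / 2) :
    (θ ^ 2 / 2) ^ k / 2 * Real.exp (-(θ ^ 2 / 2 + θ * A) * s) * s ^ k / k.factorial ≤
      ((-1) ^ k * RemK B k θ s).re := by
  have hA1 : 1 ≤ Real.exp A := Real.one_le_exp h.hA
  have hDpos : 6 ≤ D := by linarith
  have hk' : (1 : ℝ) ≤ k := by exact_mod_cast hk
  have hρ := h.hρ
  have hθ0 : 0 ≤ θ := le_trans (by positivity) hθ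
  have h1 := taylor_re_le (h.diff_fk θ) k (-(-1) ^ k) hs (by linarith : s < ρ)
    (M := -((θ ^ 2 / 2) ^ k / 2 * Real.exp (-(θ ^ 2 / 2 + θ * A) * s))) (by
    intro t ht
    have ht2 : t < ρ / 2 := by linarith [ht.2]
    have h2 := (h.shift (ball_ofReal ht.1 ht2)).deriv_large hD (by
      rw [show 1 / (ρ / 2) = 2 / ρ by field_simp]; exact hD') hk hθ
    rw [iteratedDeriv_fk_shift, fk_real (hreal t ht.1 (by linarith))]
    set I := iteratedDeriv k (fk (fun w => B (t + w) - B t) θ) 0 with hI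
    have h3 : ((-1) ^ k * (I - (-((θ : ℂ) ^ 2 / 2)) ^ k)).re ≥ - ((θ ^ 2 / 2) ^ k / 2) := by
      have h4 := Complex.abs_re_le_norm ((-1) ^ k * (I - (-((θ : ℂ) ^ 2 / 2)) ^ k))
      have h5 : ‖(-1) ^ k * (I - (-((θ : ℂ) ^ 2 / 2)) ^ k)‖ ≤ (θ ^ 2 / 2) ^ k / 2 := by
        rw [norm_mul]; simpa using h2
      linarith [neg_abs_le (((-1) ^ k * (I - (-((θ : ℂ) ^ 2 / 2)) ^ k)).re)]
    have h6 : ((-1 : ℂ)) ^ k * (-((θ : ℂ) ^ 2 / 2)) ^ k = (((θ ^ 2 / 2) ^ k : ℝ) : ℂ) := by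
      rw [← mul_pow]; push_cast; congr 1; ring
    rw [mul_sub, h6, Complex.sub_re, Complex.ofReal_re] at h3
    set e := Real.exp (-(θ ^ 2 / 2) * t + θ * (B t).re) with he
    have h7 : Real.exp (-(θ ^ 2 / 2 + θ * A) * s) ≤ e := by
      apply Real.exp_le_exp.2
      have h8 : -(A * s) ≤ (B t).re := by
        have h9 := h.bd (ball_ofReal ht.1 (by linarith : t < ρ))
        have h10 := Complex.abs_re_le_norm (B t)
        have h11 := neg_abs_le (B t).re
        simp only [Complex.norm_real, Real.norm_eq_abs, abs_of_nonneg ht.1] at h9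
        have : A * t ≤ A * s := mul_le_mul_of_nonneg_left ht.2 h.hA
        linarith
      have h12 := mul_le_mul_of_nonneg_left h8 hθ0
      have h13 := mul_le_mul_of_nonneg_left ht.2 (by positivity : 0 ≤ θ ^ 2 / 2)
      linarith
    have h14 : (-(-1) ^ k * ((e : ℂ) * I)) = ((-e : ℝ) : ℂ) * ((-1) ^ k * I) := by
      push_cast; ring
    rw [h14, Complex.re_ofReal_mul]
    have h15 : (θ ^ 2 / 2) ^ k / 2 ≤ ((-1) ^ k * I).re := by linarith
    have h16 : (θ ^ 2 / 2) ^ k / 2 * Real.exp (-(θ ^ 2 / 2 + θ * A) * s) ≤ ((-1) ^ k * I).re * e := by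
      gcongr
      exact le_trans (by positivity) h15
    linarith)
  rw [neg_mul, Complex.neg_re] at h1
  have : (θ ^ 2 / 2) ^ k / 2 * Real.exp (-(θ ^ 2 / 2 + θ * A) * s) * s ^ k / k.factorial =
    - (-((θ ^ 2 / 2) ^ k / 2 * Real.exp (-(θ ^ 2 / 2 + θ * A) * s)) * s ^ k / k.factorial) := by ring
  rw [this]
  unfold RemK
  linarith

lemma RemK_succ (B : ℂ → ℂ) (k : ℕ) (θ s : ℝ) :
    RemK B k θ s = RemK B (k + 1) θ s + iteratedDeriv k (fk B θ) 0 / k.factorial * (s : ℂ) ^ k := by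
  unfold RemK; rw [Finset.sum_range_succ]; ring

lemma GoodB.rem_tendsto {B : ℂ → ℂ} {ρ A : ℝ} (h : GoodB B ρ A) (k : ℕ) {θ : ℝ} (hθ : 0 ≤ θ)
    {u : ℕ → ℝ} (hu : Tendsto u atTop (𝓝 0)) (hu0 : ∀ n, 0 < u n) (huρ : ∀ n, u n < ρ / 2) :
    Tendsto (fun n => RemK B k θ (u n) / (u n : ℂ) ^ k) atTop
      (𝓝 (iteratedDeriv k (fk B θ) 0 / k.factorial)) := by
  have hρ := h.hρ
  rw [tendsto_iff_norm_sub_tendsto_zero]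
  set M := Real.exp (A ^ 2 * ρ) * ((k + 1).factorial * Real.exp ((θ ^ 2 / 2) * (ρ / 4) + θ * (A * (ρ / 4))) / (ρ / 4) ^ (k + 1)) with hM
  have hM0 : 0 ≤ M := by positivity
  have hb : ∀ n, ‖RemK B k θ (u n) / (u n : ℂ) ^ k - iteratedDeriv k (fk B θ) 0 / k.factorial‖ ≤
      M / (k + 1).factorial * u n := by
    intro n
    have hun : (u n : ℂ) ≠ 0 := by exact_mod_cast (hu0 n).ne'
    rw [RemK_succ, add_div, mul_div_assoc, div_self (pow_ne_zero _ hun), mul_one, add_sub_cancel_right,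
      norm_div, norm_pow, Complex.norm_real, Real.norm_eq_abs, abs_of_pos (hu0 n),
      div_le_iff₀ (pow_pos (hu0 n) k)]
    have h1 := taylor_norm_le (h.diff_fk θ) (k + 1) (hu0 n).le (by linarith [huρ n] : u n < ρ) (M := M)
      (fun t ht => h.iter_le hθ ht.1 (by linarith [ht.2, huρ n] : t < ρ / 2)
        (by positivity) (by linarith) (k + 1))
    refine h1.trans (le_of_eq ?_)
    rw [pow_succ]; ring
  refine squeeze_zero (fun n => norm_nonneg _) hb ?_
  simpa using hu.const_mul (M / (k + 1).factorial)

lemma continuous_fk_theta (B : ℂ → ℂ) (w : ℂ) : Continuous (fun θ : ℝ => fk B θ w) := by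
  unfold fk; fun_prop

lemma ae_nonneg_of {ν : Measure ℝ} (hν : ν (Iio 0) = 0) : ∀ᵐ θ ∂ν, 0 ≤ θ := by
  rw [ae_iff]; simpa [Iio] using hν

lemma GoodB.integrable_fk {B : ℂ → ℂ} {ρ A : ℝ} (h : GoodB B ρ A) {ν : Measure ℝ} [IsFiniteMeasure ν]
    (hν : ν (Iio 0) = 0) {s : ℝ} (hs : 0 ≤ s) (hsρ : s < ρ) :
    Integrable (fun θ : ℝ => fk B θ s) ν := by
  apply Integrable.of_bound (continuous_fk_theta B s).aestronglyMeasurable (Real.exp (A ^ 2 * ρ))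
  filter_upwards [ae_nonneg_of hν] with θ hθ
  exact h.norm_fk_real_le hθ hs hsρ

section step
variable {B : ℂ → ℂ} {ρ A D : ℝ} {ν : Measure ℝ} [IsFiniteMeasure ν] {k : ℕ}

lemma GoodB.integrable_rem (h : GoodB B ρ A) (hν : ν (Iio 0) = 0)
    (hPint : ∀ j < k, Integrable (fun θ => iteratedDeriv j (fk B θ) 0 / j.factorial) ν)
    {s : ℝ} (hs : 0 ≤ s) (hsρ : s < ρ) : Integrable (fun θ => RemK B k θ s) ν := by
  unfold RemK
  apply (h.integrable_fk hν hs hsρ).sub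
  apply integrable_finsetSum
  intro j hj
  exact (hPint j (by simpa using hj)).mul_const _

lemma GoodB.integral_rem (h : GoodB B ρ A) (hν : ν (Iio 0) = 0) (hk : 1 ≤ k)
    (hPint : ∀ j < k, Integrable (fun θ => iteratedDeriv j (fk B θ) 0 / j.factorial) ν)
    (hP : ∀ j < k, ∫ θ, iteratedDeriv j (fk B θ) 0 / j.factorial ∂ν = if j = 0 then 1 else 0)
    {s : ℝ} (hs : 0 ≤ s) (hsρ : s < ρ) (hc : ∫ θ, fk B θ s ∂ν = 1) :
    ∫ θ, RemK B k θ s ∂ν = 0 := by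
  unfold RemK
  rw [integral_sub (h.integrable_fk hν hs hsρ)
    (integrable_finsetSum _ (fun j hj => (hPint j (by simpa using hj)).mul_const _)), hc,
    integral_finsetSum _ (fun j hj => (hPint j (by simpa using hj)).mul_const _)]
  have : ∀ j ∈ Finset.range k, ∫ θ, iteratedDeriv j (fk B θ) 0 / j.factorial * (s : ℂ) ^ j ∂ν =
      if j = 0 then 1 else 0 := by
    intro j hj
    rw [integral_mul_const, hP j (by simpa using hj)]
    split_ifs with h0
    · simp [h0]
    · simp
  rw [Finset.sum_congr rfl this, Finset.sum_ite_eq' ]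
  simp [show 0 < k by omega]

lemma GoodB.moment_pre (h : GoodB B ρ A) (hν : ν (Iio 0) = 0) 
    (hreal : ∀ t : ℝ, 0 ≤ t → t < ρ → (B t).im = 0) (hD : 2 + 4 * Real.exp A ≤ D)
    (hD' : 2 / ρ < D) (hk : 1 ≤ k)
    (hPint : ∀ j < k, Integrable (fun θ => iteratedDeriv j (fk B θ) 0 / j.factorial) ν)
    (hP : ∀ j < k, ∫ θ, iteratedDeriv j (fk B θ) 0 / j.factorial ∂ν = if j = 0 then 1 else 0)
    {s : ℝ} (hs : 0 < s) (hsρ : s < ρ / 2) (hc : ∫ θ, fk B θ s ∂ν = 1) :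
    ∫⁻ θ in Ici (D * k), ENNReal.ofReal ((θ ^ 2 / 2) ^ k / 2 * Real.exp (-(θ ^ 2 / 2 + θ * A) * s)
      / k.factorial) ∂ν ≤ ENNReal.ofReal (Real.exp (A ^ 2 * ρ) * Real.exp A *
        (Real.exp (D / 2) * (D * k)) ^ k * ν.real univ) := by
  have hA1 : 1 ≤ Real.exp A := Real.one_le_exp h.hA
  have hDpos : 6 ≤ D := by linarith
  have hρ := h.hρ
  have hIntg := h.integrable_rem hν hPint hs.le (by linarith : s < ρ)
  have hz := h.integral_rem hν hk hPint hP hs.le (by linarith : s < ρ) hc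
  set Bk := Real.exp (A ^ 2 * ρ) * Real.exp A * (Real.exp (D / 2) * (D * k)) ^ k with hBk
  have hBk0 : 0 ≤ Bk := by positivity
  have hint2 : Integrable (fun θ => ((-1) ^ k * RemK B k θ s).re) ν :=
    (hIntg.const_mul ((-1) ^ k)).re
  have hz2 : ∫ θ, ((-1) ^ k * RemK B k θ s).re ∂ν = 0 := by
    have := Complex.reCLM.integral_comp_comm (hIntg.const_mul ((-1) ^ k))
    simp only [Complex.reCLM_apply] at this
    rw [this, integral_const_mul, hz]; simp
  have hmS : MeasurableSet (Ici (D * k)) := measurableSet_Ici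
  rw [← integral_add_compl hmS hint2] at hz2
  have h1 : -∫ θ in (Ici (D * k))ᶜ, ((-1) ^ k * RemK B k θ s).re ∂ν ≤ Bk * s ^ k * ν.real univ := by
    rw [← integral_neg]
    have : ∫ θ in (Ici (D * k))ᶜ, Bk * s ^ k ∂ν ≤ Bk * s ^ k * ν.real univ := by
      rw [setIntegral_const, smul_eq_mul, mul_comm]
      gcongr
      · exact measure_ne_top _ _
      · exact subset_univ _
    refine le_trans ?_ this
    apply integral_mono_ae hint2.neg.integrableOn (integrable_const _)
    rw [EventuallyLE, ae_restrict_iff' hmS.compl]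
    filter_upwards [ae_nonneg_of hν] with θ hθ0 hθ
    have hθ' : θ ≤ D * k := by simpa using (le_of_lt (by simpa using hθ : θ < D * k))
    have h2 := h.rem_small hD hD' hk hθ0 hθ' hs.le hsρ
    have h3 := Complex.abs_re_le_norm ((-1) ^ k * RemK B k θ s)
    rw [norm_mul] at h3
    simp only [norm_pow, norm_neg, norm_one, one_pow, one_mul] at h3
    simp only [Pi.neg_apply]
    linarith [neg_abs_le ((-1) ^ k * RemK B k θ s).re]
  have h2 : ∫ θ in (Ici (D * k)), ((-1) ^ k * RemK B k θ s).re ∂ν ≤ Bk * s ^ k * ν.real univ := by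
    linarith
  have hlow : ∀ θ ∈ Ici (D * k), (θ ^ 2 / 2) ^ k / 2 * Real.exp (-(θ ^ 2 / 2 + θ * A) * s) / k.factorial
      ≤ ((-1) ^ k * RemK B k θ s).re / s ^ k := by
    intro θ hθ
    rw [le_div_iff₀ (by positivity)]
    refine le_trans (le_of_eq ?_) (h.rem_lower hreal hD hD' hk hθ hs.le hsρ)
    ring
  calc _ ≤ ∫⁻ θ in Ici (D * k), ENNReal.ofReal (((-1) ^ k * RemK B k θ s).re / s ^ k) ∂ν := by
        apply setLIntegral_mono_ae' hmS
        filter_upwards with θ hθ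
        exact ENNReal.ofReal_le_ofReal (hlow θ hθ)
    _ = ENNReal.ofReal (∫ θ in Ici (D * k), ((-1) ^ k * RemK B k θ s).re / s ^ k ∂ν) := by
        rw [ofReal_integral_eq_lintegral_ofReal]
        · exact (hint2.div_const _).integrableOn
        · rw [EventuallyLE, ae_restrict_iff' hmS]
          filter_upwards with θ hθ
          refine le_trans ?_ (hlow θ hθ)
          simp only [Pi.zero_apply]
          positivity
    _ ≤ _ := by
        apply ENNReal.ofReal_le_ofReal
        rw [integral_div, div_le_iff₀ (by positivity)]
        linarith

lemma GoodB.moment (h : GoodB B ρ A) (hν : ν (Iio 0) = 0) 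
    (hreal : ∀ t : ℝ, 0 ≤ t → t < ρ → (B t).im = 0) (hD : 2 + 4 * Real.exp A ≤ D)
    (hD' : 2 / ρ < D) (hk : 1 ≤ k)
    (hPint : ∀ j < k, Integrable (fun θ => iteratedDeriv j (fk B θ) 0 / j.factorial) ν)
    (hP : ∀ j < k, ∫ θ, iteratedDeriv j (fk B θ) 0 / j.factorial ∂ν = if j = 0 then 1 else 0)
    {u : ℕ → ℝ} (hu : Tendsto u atTop (𝓝 0)) (hu0 : ∀ n, 0 < u n) (huρ : ∀ n, u n < ρ / 2)
    (hc : ∀ n, ∫ θ, fk B θ (u n) ∂ν = 1) :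
    ∫⁻ θ in Ici (D * k), ENNReal.ofReal (θ ^ (2 * k)) ∂ν ≤ 
      ENNReal.ofReal ((2 * Real.exp (A ^ 2 * ρ) * Real.exp A * ν.real univ) *
        ((2 * D * Real.exp (D / 2)) * k ^ 2) ^ k) := by
  have hA1 : 1 ≤ Real.exp A := Real.one_le_exp h.hA
  have hDpos : 6 ≤ D := by linarith
  set X := Real.exp (A ^ 2 * ρ) * Real.exp A * (Real.exp (D / 2) * (D * k)) ^ k * ν.real univ with hX
  have hpre : ∀ n, _ := fun n => h.moment_pre hν hreal hD hD' hk hPint hP (hu0 n) (huρ n) (hc n)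
  have hfatou : ∫⁻ θ in Ici (D * k), ENNReal.ofReal ((θ ^ 2 / 2) ^ k / 2 / k.factorial) ∂ν
      ≤ ENNReal.ofReal X := by
    have h1 := lintegral_liminf_le (u := atTop) (μ := ν.restrict (Ici (D * k))) (f := fun n θ =>
      ENNReal.ofReal ((θ ^ 2 / 2) ^ k / 2 * Real.exp (-(θ ^ 2 / 2 + θ * A) * (u n)) / k.factorial))
      (fun n => by fun_prop)
    have h2 : liminf (fun n => ∫⁻ θ in Ici (D * k), ENNReal.ofReal ((θ ^ 2 / 2) ^ k / 2 * Real.exp (-(θ ^ 2 / 2 + θ * A) * (u n)) / k.factorial) ∂ν) atTop ≤ ENNReal.ofReal X := by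
      refine liminf_le_of_frequently_le' (Eventually.frequently (Eventually.of_forall hpre))
    refine le_trans (le_of_eq ?_) (h1.trans h2)
    congr 1
    funext θ
    symm
    apply Tendsto.liminf_eq
    apply ENNReal.tendsto_ofReal
    have h3 : Tendsto (fun n => Real.exp (-(θ ^ 2 / 2 + θ * A) * (u n))) atTop (𝓝 1) := by
      have := (hu.const_mul (-(θ ^ 2 / 2 + θ * A))).rexp
      simpa using this
    have := (h3.const_mul ((θ ^ 2 / 2) ^ k / 2)).div_const (k.factorial : ℝ)
    simpa using this
  have hkf : (k.factorial : ℝ) ≤ k ^ k := by exact_mod_cast Nat.factorial_le_pow k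
  have hkf0 : (0 : ℝ) < k.factorial := by positivity
  calc _ = ∫⁻ θ in Ici (D * k), ENNReal.ofReal (2 ^ (k + 1) * k.factorial) * ENNReal.ofReal ((θ ^ 2 / 2) ^ k / 2 / k.factorial) ∂ν := by
        congr 1; funext θ
        rw [← ENNReal.ofReal_mul (by positivity)]
        congr 1
        rw [div_pow, ← pow_mul, pow_succ]; field_simp
    _ = ENNReal.ofReal (2 ^ (k + 1) * k.factorial) * ∫⁻ θ in Ici (D * k), ENNReal.ofReal ((θ ^ 2 / 2) ^ k / 2 / k.factorial) ∂ν := by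
        rw [lintegral_const_mul]; fun_prop
    _ ≤ ENNReal.ofReal (2 ^ (k + 1) * k.factorial) * ENNReal.ofReal X := by gcongr
    _ ≤ _ := by
      rw [← ENNReal.ofReal_mul (by positivity)]
      apply ENNReal.ofReal_le_ofReal
      calc (2 ^ (k + 1) * k.factorial) * X ≤ (2 ^ (k + 1) * k ^ k) * X := by
            gcongr
        _ = _ := by
          rw [hX]
          simp only [mul_pow, pow_succ]
          ring

lemma GoodB.step (h : GoodB B ρ A) (hν : ν (Iio 0) = 0) 
    (hreal : ∀ t : ℝ, 0 ≤ t → t < ρ → (B t).im = 0) (hD : 2 + 4 * Real.exp A ≤ D)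
    (hD' : 2 / ρ < D) (hk : 1 ≤ k)
    (hPint : ∀ j < k, Integrable (fun θ => iteratedDeriv j (fk B θ) 0 / j.factorial) ν)
    (hP : ∀ j < k, ∫ θ, iteratedDeriv j (fk B θ) 0 / j.factorial ∂ν = if j = 0 then 1 else 0)
    {u : ℕ → ℝ} (hu : Tendsto u atTop (𝓝 0)) (hu0 : ∀ n, 0 < u n) (huρ : ∀ n, u n < ρ / 2)
    (hc : ∀ n, ∫ θ, fk B θ (u n) ∂ν = 1) :
    Integrable (fun θ => iteratedDeriv k (fk B θ) 0 / k.factorial) ν ∧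
      ∫ θ, iteratedDeriv k (fk B θ) 0 / k.factorial ∂ν = 0 := by
  have hρ := h.hρ
  have hA1 : 1 ≤ Real.exp A := Real.one_le_exp h.hA
  have hDpos : 6 ≤ D := by linarith
  have hm := h.moment hν hreal hD hD' hk hPint hP hu hu0 huρ hc
  have hmint : IntegrableOn (fun θ => θ ^ (2 * k)) (Ici (D * k)) ν := by
    refine ⟨(by fun_prop), ?_⟩
    rw [hasFiniteIntegral_iff_ofReal]
    · exact hm.trans_lt ENNReal.ofReal_lt_top
    · exact Eventually.of_forall (fun θ => by simp only [Pi.zero_apply]; rw [pow_mul]; positivity)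
  set Bk := Real.exp (A ^ 2 * ρ) * Real.exp A * (Real.exp (D / 2) * (D * k)) ^ k with hBk
  have hBk0 : 0 ≤ Bk := by positivity
  let bound : ℝ → ℝ := fun θ => Bk + Real.exp (A ^ 2 * ρ) * 2 * (Ici (D * k)).indicator (fun θ => θ ^ (2 * k)) θ
  have hbint : Integrable bound ν := by
    apply (integrable_const _).add
    apply Integrable.const_mul
    exact hmint.integrable_indicator measurableSet_Ici
  have hbd : ∀ n, ∀ᵐ θ ∂ν, ‖RemK B k θ (u n) / (u n : ℂ) ^ k‖ ≤ bound θ := by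
    intro n
    filter_upwards [ae_nonneg_of hν] with θ hθ
    rw [norm_div, norm_pow, Complex.norm_real, Real.norm_eq_abs, abs_of_pos (hu0 n),
      div_le_iff₀ (pow_pos (hu0 n) k)]
    have hp := (pow_pos (hu0 n) k).le
    simp only [bound]
    by_cases h1 : θ ∈ Ici (D * k)
    · rw [indicator_of_mem h1, add_mul]
      linarith [h.rem_large hD hD' hk h1 (hu0 n).le (huρ n), mul_nonneg hBk0 hp]
    · rw [indicator_of_notMem h1, mul_zero, add_zero]
      exact h.rem_small hD hD' hk hθ (by simpa using (le_of_lt (by simpa using h1 : θ < D * k))) (hu0 n).le (huρ n)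
  have hmeas : ∀ n, AEStronglyMeasurable (fun θ => RemK B k θ (u n) / (u n : ℂ) ^ k) ν := fun n =>
    ((h.integrable_rem hν hPint (hu0 n).le (by linarith [huρ n] : u n < ρ)).div_const _).aestronglyMeasurable
  have hlim : ∀ᵐ θ ∂ν, Tendsto (fun n => RemK B k θ (u n) / (u n : ℂ) ^ k) atTop
      (𝓝 (iteratedDeriv k (fk B θ) 0 / k.factorial)) := by
    filter_upwards [ae_nonneg_of hν] with θ hθ
    exact h.rem_tendsto k hθ hu hu0 huρ
  constructor
  · apply hbint.mono' (aestronglyMeasurable_of_tendsto_ae atTop hmeas hlim)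
    filter_upwards [hlim, ae_all_iff.2 hbd] with θ h1 h2
    exact le_of_tendsto h1.norm (Eventually.of_forall h2)
  · have h1 := tendsto_integral_of_dominated_convergence bound hmeas hbint hbd hlim
    have h2 : ∀ n, ∫ θ, RemK B k θ (u n) / (u n : ℂ) ^ k ∂ν = 0 := by
      intro n
      rw [integral_div, h.integral_rem hν hk hPint hP (hu0 n).le (by linarith [huρ n] : u n < ρ) (hc n), zero_div]
    simp only [h2] at h1
    exact tendsto_nhds_unique h1 tendsto_const_nhds

lemma GoodB.all_moments (h : GoodB B ρ A) (hν : ν (Iio 0) = 0) 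
    (hreal : ∀ t : ℝ, 0 ≤ t → t < ρ → (B t).im = 0) (hD : 2 + 4 * Real.exp A ≤ D)
    (hD' : 2 / ρ < D) 
    {u : ℕ → ℝ} (hu : Tendsto u atTop (𝓝 0)) (hu0 : ∀ n, 0 < u n) (huρ : ∀ n, u n < ρ / 2)
    (hc : ∀ n, ∫ θ, fk B θ (u n) ∂ν = 1) (k : ℕ) :
    Integrable (fun θ => iteratedDeriv k (fk B θ) 0 / k.factorial) ν ∧
      ∫ θ, iteratedDeriv k (fk B θ) 0 / k.factorial ∂ν = if k = 0 then 1 else 0 := by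
  have hρ := h.hρ
  induction k using Nat.strong_induction_on with
  | _ k ih =>
    rcases Nat.eq_zero_or_pos k with h0 | h0
    · subst h0
      have e : (fun θ : ℝ => iteratedDeriv 0 (fk B θ) 0 / (Nat.factorial 0 : ℂ)) = fun θ => 1 := by
        funext θ; simp [fk, h.zero]
      simp only [e, if_true]
      refine ⟨integrable_const _, ?_⟩
      have h1 := tendsto_integral_of_dominated_convergence (μ := ν) (fun _ => Real.exp (A ^ 2 * ρ))
        (F := fun n θ => fk B θ (u n)) (f := fun θ => 1)
        (fun n => (continuous_fk_theta B _).aestronglyMeasurable) (integrable_const _)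
        (fun n => by
          filter_upwards [ae_nonneg_of hν] with θ hθ
          exact h.norm_fk_real_le hθ (hu0 n).le (by linarith [huρ n]))
        (by
          filter_upwards [ae_nonneg_of hν] with θ hθ
          have := h.rem_tendsto 0 hθ hu hu0 huρ
          simpa [RemK, fk, h.zero] using this)
      simp only [hc] at h1
      exact tendsto_nhds_unique h1 tendsto_const_nhds
    · rw [if_neg (by omega)]
      exact h.step hν hreal hD hD' h0 (fun j hj => (ih j hj).1) (fun j hj => (ih j hj).2) hu hu0 huρ hc

end step

lemma exp_integrable_of_tail {ν : Measure ℝ} [IsFiniteMeasure ν] (hν : ν (Iio 0) = 0) {L C : ℝ}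
    (hL : 0 < L) (hC : 0 ≤ C) (ht : ∀ k : ℕ, 1 ≤ k → ν (Ici (L * k)) ≤ ENNReal.ofReal (C * Real.exp (-2) ^ k)) :
    Integrable (fun θ => Real.exp (θ / L)) ν := by
  refine ⟨by fun_prop, ?_⟩
  rw [hasFiniteIntegral_iff_ofReal (Eventually.of_forall fun θ => by simp only [Pi.zero_apply]; positivity)]
  set C' := C + ν.real univ with hC'
  have hC'0 : 0 ≤ C' := by positivity
  have ht' : ∀ k : ℕ, ν (Ici (L * k)) ≤ ENNReal.ofReal (C' * Real.exp (-2) ^ k) := by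
    intro k
    rcases Nat.eq_zero_or_pos k with h0 | h0
    · subst h0
      calc ν (Ici (L * (0 : ℕ))) ≤ ν univ := measure_mono (subset_univ _)
        _ = ENNReal.ofReal (ν.real univ) := by simp [Measure.real]
        _ ≤ _ := by
          apply ENNReal.ofReal_le_ofReal
          simp only [pow_zero, mul_one]; linarith
    · refine (ht k h0).trans (ENNReal.ofReal_le_ofReal ?_)
      gcongr
      simp [hC']
  calc ∫⁻ θ, ENNReal.ofReal (Real.exp (θ / L)) ∂ν
      ≤ ∫⁻ θ, ∑' k : ℕ, (Ici (L * k)).indicator (fun _ => ENNReal.ofReal (Real.exp (k + 1))) θ ∂ν := by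
        apply lintegral_mono_ae
        filter_upwards [ae_nonneg_of hν] with θ hθ
        have h1 : θ ∈ Ici (L * (⌊θ / L⌋₊ : ℕ)) := by
          have := Nat.floor_le (show 0 ≤ θ / L by positivity)
          rw [le_div_iff₀ hL] at this
          simp only [mem_Ici]; linarith
        refine le_trans ?_ (ENNReal.le_tsum ⌊θ / L⌋₊)
        rw [indicator_of_mem h1]
        apply ENNReal.ofReal_le_ofReal
        apply Real.exp_le_exp.2 (Nat.lt_floor_add_one _).le
    _ = ∑' k : ℕ, ∫⁻ θ, (Ici (L * k)).indicator (fun _ => ENNReal.ofReal (Real.exp (k + 1))) θ ∂ν := by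
        rw [lintegral_tsum]
        intro k
        exact (measurable_const.indicator measurableSet_Ici).aemeasurable
    _ ≤ ∑' k : ℕ, ENNReal.ofReal (Real.exp 1 * C' * Real.exp (-1) ^ k) := by
        apply ENNReal.tsum_le_tsum
        intro k
        rw [lintegral_indicator measurableSet_Ici, setLIntegral_const]
        refine (mul_le_mul_right (ht' k) _).trans ?_
        rw [← ENNReal.ofReal_mul (by positivity)]
        apply ENNReal.ofReal_le_ofReal
        apply le_of_eq
        rw [← Real.exp_nat_mul, ← Real.exp_nat_mul]
        have : Real.exp ((k : ℝ) + 1) * (C' * Real.exp (k * (-2))) = C' * (Real.exp (k + 1) * Real.exp (k * (-2))) := by ring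
        rw [this, mul_comm (Real.exp 1) C', mul_assoc, ← Real.exp_add, ← Real.exp_add]
        ring_nf
    _ < ∞ := by
        have hs : Summable (fun k : ℕ => Real.exp 1 * C' * Real.exp (-1) ^ k) := by
          apply Summable.mul_left
          apply summable_geometric_of_lt_one (Real.exp_pos _).le
          rw [Real.exp_lt_one_iff]; norm_num
        rw [← ENNReal.ofReal_tsum_of_nonneg (fun k => by positivity) hs]
        exact ENNReal.ofReal_lt_top

lemma GoodB.exp_moment {B : ℂ → ℂ} {ρ A : ℝ} {ν : Measure ℝ} [IsFiniteMeasure ν] (h : GoodB B ρ A) (hν : ν (Iio 0) = 0) 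
    (hreal : ∀ t : ℝ, 0 ≤ t → t < ρ → (B t).im = 0) 
    {u : ℕ → ℝ} (hu : Tendsto u atTop (𝓝 0)) (hu0 : ∀ n, 0 < u n) (huρ : ∀ n, u n < ρ / 2)
    (hc : ∀ n, ∫ θ, fk B θ (u n) ∂ν = 1) :
    (∃ y : ℝ, 0 < y ∧ Integrable (fun θ => Real.exp (y * θ)) ν) ∧ ∀ k : ℕ,
    Integrable (fun θ => iteratedDeriv k (fk B θ) 0 / k.factorial) ν ∧
      ∫ θ, iteratedDeriv k (fk B θ) 0 / k.factorial ∂ν = if k = 0 then 1 else 0 := by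
  have hρ := h.hρ
  have hA1 : 1 ≤ Real.exp A := Real.one_le_exp h.hA
  obtain ⟨D, hD, hD'⟩ : ∃ D, 2 + 4 * Real.exp A ≤ D ∧ 2 / ρ < D :=
    ⟨max (2 + 4 * Real.exp A) (2 / ρ + 1), le_max_left _ _, lt_of_lt_of_le (by linarith) (le_max_right _ _)⟩
  have hall := h.all_moments hν hreal hD hD' hu hu0 huρ hc
  refine ⟨?_, hall⟩
  have hD6 : 6 ≤ D := by linarith
  set E := 2 * D * Real.exp (D / 2) with hE
  have hE1 : 1 ≤ E := by
    have : 1 ≤ Real.exp (D / 2) := Real.one_le_exp (by linarith)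
    nlinarith
  set L := Real.exp 1 * (E + D) with hL
  have he1 : 1 ≤ Real.exp 1 := Real.one_le_exp (by norm_num)
  have hLD : D ≤ L := by nlinarith
  have hL0 : 0 < L := by linarith
  have hL2 : E / L ^ 2 ≤ Real.exp (-2) := by
    rw [div_le_iff₀ (by positivity), hL, mul_pow, ← Real.exp_nat_mul, ← mul_assoc, ← Real.exp_add]
    norm_num
    nlinarith
  set C := 2 * Real.exp (A ^ 2 * ρ) * Real.exp A * ν.real univ with hC
  have hC0 : 0 ≤ C := by positivity
  refine ⟨1 / L, by positivity, ?_⟩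
  have := exp_integrable_of_tail hν hL0 hC0 (by
    intro k hk
    have hk0 : (0 : ℝ) < k := by exact_mod_cast hk
    have hm := h.moment hν hreal hD hD' hk (fun j _ => (hall j).1) (fun j _ => (hall j).2) hu hu0 huρ hc
    rw [← hC, ← hE] at hm
    have h1 : ENNReal.ofReal ((L * k) ^ (2 * k)) * ν (Ici (L * k)) ≤ ENNReal.ofReal (C * (E * k ^ 2) ^ k) := by
      refine le_trans ?_ hm
      calc _ = ∫⁻ θ in Ici (L * k), ENNReal.ofReal ((L * k) ^ (2 * k)) ∂ν := by rw [setLIntegral_const]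
        _ ≤ ∫⁻ θ in Ici (L * k), ENNReal.ofReal (θ ^ (2 * k)) ∂ν := by
          apply setLIntegral_mono' measurableSet_Ici
          intro θ hθ
          apply ENNReal.ofReal_le_ofReal
          have : L * k ≤ θ := hθ
          gcongr
        _ ≤ _ := by
          apply lintegral_mono_set
          apply Ici_subset_Ici.2
          gcongr
    rw [mul_comm, ← ENNReal.le_div_iff_mul_le (Or.inl (by simp; positivity)) (Or.inl ENNReal.ofReal_ne_top),
      ← ENNReal.ofReal_div_of_pos (by positivity)] at h1
    refine h1.trans (ENNReal.ofReal_le_ofReal ?_)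
    have : C * (E * k ^ 2) ^ k / (L * k) ^ (2 * k) = C * (E / L ^ 2) ^ k := by
      rw [pow_mul, mul_pow L, mul_div_assoc, ← div_pow]
      congr 2
      field_simp
    rw [this]
    gcongr)
  refine this.congr (Eventually.of_forall fun θ => ?_)
  simp only
  congr 1; ring

/-- holomorphic parameter integrals -/
lemma differentiableOn_integral_param {μ : Measure ℝ} [IsFiniteMeasure μ] {U : Set ℂ} (hU : IsOpen U)
    {K : ℂ → ℝ → ℂ} {C : ℝ} (hm : ∀ z ∈ U, AEStronglyMeasurable (K z) μ)
    (hd : ∀ᵐ x ∂μ, DifferentiableOn ℂ (fun z => K z x) U)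
    (hb : ∀ᵐ x ∂μ, ∀ z ∈ U, ‖K z x‖ ≤ C) :
    DifferentiableOn ℂ (fun z => ∫ x, K z x ∂μ) U := by
  intro z0 hz0
  obtain ⟨r, hr, hrU⟩ := Metric.isOpen_iff.1 hU z0 hz0
  apply DifferentiableAt.differentiableWithinAt
  have hsub : ∀ z ∈ Metric.ball z0 (r / 2), Metric.closedBall z (r / 4) ⊆ U := by
    intro z hz w hw
    apply hrU
    rw [Metric.mem_ball] at *
    rw [Metric.mem_closedBall] at hw
    linarith [dist_triangle w z z0]
  have hF' : AEStronglyMeasurable (fun x => deriv (fun z => K z x) z0) μ := by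
    have hseq : ∀ n : ℕ, z0 + ((r / 2 / (n + 1) : ℝ) : ℂ) ∈ U := by
      intro n
      apply hrU
      rw [Metric.mem_ball, dist_eq_norm, add_sub_cancel_left, Complex.norm_real, Real.norm_eq_abs,
        abs_of_pos (by positivity)]
      have : r / 2 / (n + 1) ≤ r / 2 := div_le_self (by positivity) (by linarith [Nat.cast_nonneg (α := ℝ) n])
      linarith
    apply aestronglyMeasurable_of_tendsto_ae atTop (f := fun (n : ℕ) x =>
      (((r / 2 / (n + 1) : ℝ) : ℂ))⁻¹ • (K (z0 + ((r / 2 / (n + 1) : ℝ) : ℂ)) x - K z0 x))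
    · intro n
      exact AEStronglyMeasurable.const_smul ((hm _ (hseq n)).sub (hm _ hz0)) (((r / 2 / (n + 1) : ℝ) : ℂ))⁻¹
    · filter_upwards [hd] with x hx
      have h1 := (hx.differentiableAt (hU.mem_nhds hz0)).hasDerivAt
      rw [hasDerivAt_iff_tendsto_slope_zero] at h1
      have h2 : Tendsto (fun n : ℕ => ((r / 2 / (n + 1) : ℝ) : ℂ)) atTop (𝓝[≠] 0) := by
        rw [tendsto_nhdsWithin_iff]
        constructor
        · have h3 : Tendsto (fun n : ℕ => (r / 2 / (n + 1) : ℝ)) atTop (𝓝 0) := by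
            have := tendsto_one_div_add_atTop_nhds_zero_nat (𝕜 := ℝ)
            have := this.const_mul (r / 2)
            simpa [div_eq_mul_inv] using this
          have := (Complex.continuous_ofReal.tendsto 0).comp h3
          simpa [Function.comp_def] using this
        · filter_upwards with n
          have : (r / 2 / (n + 1) : ℝ) ≠ 0 := by positivity
          exact Complex.ofReal_ne_zero.2 this
      exact h1.comp h2
  have := hasDerivAt_integral_of_dominated_loc_of_deriv_le (μ := μ) (x₀ := z0)
    (s := Metric.ball z0 (r / 2)) (F := K) (F' := fun z x => deriv (fun z => K z x) z)
    (bound := fun _ => C / (r / 4)) (Metric.ball_mem_nhds _ (by positivity))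
    (by filter_upwards [hU.mem_nhds hz0] with z hz using hm z hz)
    (Integrable.of_bound (hm z0 hz0) C (by filter_upwards [hb] with x hx using hx z0 hz0))
    hF'
    (by
      filter_upwards [hb, hd] with x hx hdx z hz
      apply Complex.norm_deriv_le_of_forall_mem_sphere_norm_le (by positivity)
      · apply DifferentiableOn.diffContOnCl
        rw [closure_ball _ (by positivity)]
        exact hdx.mono (hsub z hz)
      · intro w hw
        exact hx w (hsub z hz (Metric.sphere_subset_closedBall hw)))
    (integrable_const _)
    (by
      filter_upwards [hd] with x hdx z hz
      have hzU : z ∈ U := hsub z hz (Metric.mem_closedBall_self (by positivity))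
      exact (hdx.differentiableAt (hU.mem_nhds hzU)).hasDerivAt)
  exact this.2.differentiableAt

lemma pl_unique {H : ℂ → ℂ} {R C κ : ℝ} (hR : 0 ≤ R) (hκ : 0 < κ)
    (hd : DifferentiableOn ℂ H {v | R < v.re}) (hb : ∀ v : ℂ, R < v.re → ‖H v‖ ≤ C * Real.exp (-κ * ‖v‖)) :
    ∀ v : ℂ, R + 1 ≤ v.re → H v = 0 := by
  set m := 2 * κ / Real.pi with hm
  have hm0 : 0 < m := by have := Real.pi_pos; positivity
  set G : ℂ → ℂ := fun z => H (z + (R + 1 : ℝ)) * Complex.exp (-(m : ℂ) * ((z + (R + 1 : ℝ)) * Complex.log (z + (R + 1 : ℝ)))) with hG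
  have hC : 0 ≤ C := by
    have := (norm_nonneg _).trans (hb (R + 1 : ℝ) (by simp))
    exact nonneg_of_mul_nonneg_left this (Real.exp_pos _)
  have hGb0 : ∀ z : ℂ, 0 ≤ z.re → ‖G z‖ ≤ C * Real.exp (-(m * ((z.re + (R + 1)) * Real.log ‖z + (R + 1 : ℝ)‖))) := by
    intro z hz
    set v := z + (R + 1 : ℝ) with hv
    have hvre : v.re = z.re + (R + 1) := by simp [hv]
    have h1 := hb v (by rw [hvre]; linarith)
    simp only [hG, ← hv]
    rw [norm_mul, Complex.norm_exp]
    have h2 : (-(m : ℂ) * (v * Complex.log v)).re = -(m * (v.re * Real.log ‖v‖)) + m * (v.im * v.arg) := by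
      have : -(m : ℂ) * (v * Complex.log v) = ((-m : ℝ) : ℂ) * (v * Complex.log v) := by push_cast; ring
      rw [this, Complex.re_ofReal_mul, Complex.mul_re, Complex.log_re, Complex.log_im]; ring
    have h3 : m * (v.im * v.arg) ≤ κ * ‖v‖ := by
      have h4 : |v.arg| ≤ Real.pi / 2 := Complex.abs_arg_le_pi_div_two_iff.2 (by rw [hvre]; linarith)
      have h5 := Complex.abs_im_le_norm v
      have h6 : v.im * v.arg ≤ ‖v‖ * (Real.pi / 2) := by
        calc v.im * v.arg ≤ |v.im * v.arg| := le_abs_self _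
          _ = |v.im| * |v.arg| := abs_mul _ _
          _ ≤ _ := by gcongr
      have h7 : m * (‖v‖ * (Real.pi / 2)) = κ * ‖v‖ := by
        have := Real.pi_pos
        rw [hm]; field_simp
      rw [← h7]
      gcongr
    rw [h2, Real.exp_add, ← hvre]
    calc ‖H v‖ * (Real.exp (-(m * (v.re * Real.log ‖v‖))) * Real.exp (m * (v.im * v.arg)))
        ≤ (C * Real.exp (-κ * ‖v‖)) * (Real.exp (-(m * (v.re * Real.log ‖v‖))) * Real.exp (κ * ‖v‖)) := by
          gcongr
      _ = C * Real.exp (-(m * (v.re * Real.log ‖v‖))) * (Real.exp (-κ * ‖v‖) * Real.exp (κ * ‖v‖)) := by ring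
      _ = _ := by rw [← Real.exp_add]; simp
  have hnorm : ∀ z : ℂ, 0 ≤ z.re → 1 ≤ ‖z + (R + 1 : ℝ)‖ := by
    intro z hz
    refine le_trans ?_ ((le_abs_self _).trans (Complex.abs_re_le_norm _))
    simp; linarith
  have hGb : ∀ z : ℂ, 0 ≤ z.re → ‖G z‖ ≤ C := by
    intro z hz
    refine (hGb0 z hz).trans ?_
    have : Real.exp (-(m * ((z.re + (R + 1)) * Real.log ‖z + (R + 1 : ℝ)‖))) ≤ 1 := by
      rw [Real.exp_le_one_iff]
      have := Real.log_nonneg (hnorm z hz)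
      have : 0 ≤ m * ((z.re + (R + 1)) * Real.log ‖z + (R + 1 : ℝ)‖) := by positivity
      linarith
    nlinarith
  have hz := PhragmenLindelof.eq_zero_on_right_half_plane_of_superexponential_decay (f := G) ?_ ?_ ?_ ?_
  · intro v hv
    have h1 := hz (x := v - (R + 1 : ℝ)) (by simp; linarith)
    simp only [hG, sub_add_cancel, Pi.zero_apply, mul_eq_zero, Complex.exp_ne_zero, or_false] at h1
    exact h1
  · apply DifferentiableOn.diffContOnCl
    have hcl : closure {z : ℂ | 0 < z.re} = {z : ℂ | 0 ≤ z.re} := by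
      exact Complex.closure_setOfPred_lt_re 0
    rw [hcl]
    apply DifferentiableOn.mul
    · apply hd.comp (by fun_prop)
      intro z hz
      have : 0 ≤ z.re := hz
      simp; linarith
    · apply DifferentiableOn.cexp
      apply DifferentiableOn.const_mul
      apply DifferentiableOn.mul (by fun_prop)
      apply DifferentiableOn.clog (by fun_prop)
      intro z hz
      have : 0 ≤ z.re := hz
      left; simp; linarith
  · refine ⟨1, by norm_num, 0, ?_⟩
    apply Asymptotics.IsBigO.of_bound C
    rw [eventually_inf_principal]
    filter_upwards with z hz
    simpa using hGb z (le_of_lt hz)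
  · intro n
    have hlim : Tendsto (fun x : ℝ => C * Real.exp ((n : ℝ) * x - m * (x * Real.log x))) atTop (𝓝 0) := by
      rw [← mul_zero C]
      apply Tendsto.const_mul
      apply Real.tendsto_exp_atBot.comp
      have e : (fun x : ℝ => (n : ℝ) * x - m * (x * Real.log x)) = fun x => x * (n - m * Real.log x) := by
        funext x; ring
      rw [e]
      apply Tendsto.atTop_mul_atBot₀ tendsto_id
      have := (Real.tendsto_log_atTop.const_mul_atTop hm0)
      exact tendsto_atBot_add_const_left _ _ (tendsto_neg_atTop_atBot.comp this)
    refine squeeze_zero' (Eventually.of_forall fun x => by positivity) ?_ hlim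
    filter_upwards [eventually_ge_atTop 1] with x hx
    have h1 := hGb0 x (by simp; linarith)
    have h2 : x * Real.log x ≤ ((x : ℂ).re + (R + 1)) * Real.log ‖(x : ℂ) + (R + 1 : ℝ)‖ := by
      have h3 : x ≤ ‖(x : ℂ) + (R + 1 : ℝ)‖ := by
        refine le_trans ?_ ((le_abs_self _).trans (Complex.abs_re_le_norm _))
        simp; linarith
      have h4 := Real.log_le_log (by linarith) h3
      have h5 := Real.log_nonneg hx
      simp only [Complex.ofReal_re]
      gcongr
      linarith
    calc Real.exp x ^ n * ‖G x‖ ≤ Real.exp x ^ n * (C * Real.exp (-(m * (x * Real.log x)))) := by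
          gcongr
          refine h1.trans ?_
          gcongr
      _ = _ := by
        rw [← Real.exp_nat_mul, sub_eq_add_neg, Real.exp_add]; ring
  · exact ⟨C, fun x => hGb _ (by simp)⟩

noncomputable def RemC (B : ℂ → ℂ) (k : ℕ) (θ : ℝ) (s : ℂ) : ℂ :=
  fk B θ s - ∑ j ∈ Finset.range k, iteratedDeriv j (fk B θ) 0 / j.factorial * s ^ j

section flat
variable {B : ℂ → ℂ} {ρ A : ℝ}

lemma GoodB.rem_inner (h : GoodB B ρ A) {θ : ℝ} (hθ : 0 ≤ θ) {s : ℂ} (hs0 : 0 < ‖s‖)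
    (hsρ : 2 * ‖s‖ < ρ) (K : ℕ) :
    ‖RemC B K θ s‖ ≤ 2 * (1 / 2) ^ K * Real.exp (θ ^ 2 * ‖s‖ + 2 * A * (θ * ‖s‖)) := by
  set M := Real.exp (θ ^ 2 * ‖s‖ + 2 * A * (θ * ‖s‖)) with hM
  have hs := Complex.hasSum_taylorSeries_on_ball (h.diff_fk θ) (z := s) (by simp; linarith)
  have hs' := (hasSum_nat_add_iff' K).2 hs
  have hterm : ∀ n : ℕ, ‖((n.factorial : ℂ))⁻¹ • (s - 0) ^ n • iteratedDeriv n (fk B θ) 0‖ ≤ M * (1 / 2) ^ n := by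
    intro n
    have h1 := h.cauchy hθ (r := 2 * ‖s‖) (by positivity) hsρ n
    have e : θ ^ 2 / 2 * (2 * ‖s‖) + θ * (A * (2 * ‖s‖)) = θ ^ 2 * ‖s‖ + 2 * A * (θ * ‖s‖) := by ring
    rw [e, ← hM] at h1
    rw [norm_smul, norm_smul, sub_zero, norm_inv, norm_pow, Complex.norm_natCast]
    have hn : (0 : ℝ) < n.factorial := by positivity
    calc (n.factorial : ℝ)⁻¹ * (‖s‖ ^ n * ‖iteratedDeriv n (fk B θ) 0‖) ≤
        (n.factorial : ℝ)⁻¹ * (‖s‖ ^ n * (n.factorial * M / (2 * ‖s‖) ^ n)) := by gcongr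
      _ = _ := by
        rw [mul_pow, one_div, inv_pow]; field_simp
  have hg : HasSum (fun n : ℕ => M * (1 / 2) ^ K * (1 / 2 : ℝ) ^ n) (M * (1 / 2) ^ K * 2) :=
    hasSum_geometric_two.mul_left _
  have h2 := hs'.norm_le_of_bounded hg (fun n => by
    refine (hterm (n + K)).trans (le_of_eq ?_)
    rw [pow_add]; ring)
  have e : RemC B K θ s = fk B θ s - ∑ i ∈ Finset.range K, ((i.factorial : ℂ))⁻¹ • (s - 0) ^ i • iteratedDeriv i (fk B θ) 0 := by
    unfold RemC
    congr 1
    apply Finset.sum_congr rfl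
    intro j _
    simp only [smul_eq_mul, sub_zero]
    rw [div_eq_mul_inv]; ring
  rw [e]
  refine h2.trans (le_of_eq (by ring))

lemma GoodB.norm_fk_horo (h : GoodB B ρ A) {θ : ℝ} (hθ : 0 ≤ θ) {s : ℂ} 
    (hsρ : ‖s‖ < ρ) (hre : ‖s‖ ^ 2 ≤ s.re) : ‖fk B θ s‖ ≤ Real.exp (A ^ 2 / 2) := by
  refine (h.norm_fk_le hθ (by simpa using hsρ)).trans (Real.exp_le_exp.2 ?_)
  nlinarith [sq_nonneg (θ * ‖s‖ - A), mul_le_mul_of_nonneg_left hre (by positivity : 0 ≤ θ ^ 2 / 2)]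

lemma GoodB.rem_outer (h : GoodB B ρ A) {y : ℝ} (hy : 0 < y) {θ : ℝ} {s : ℂ} (hs0 : 0 < ‖s‖)
    (hsρ : 2 * ‖s‖ < ρ) (hθ : y ≤ θ * ‖s‖) (hre : ‖s‖ ^ 2 ≤ s.re) {K : ℕ} (hK : K * ‖s‖ ≤ y ^ 2 / 32) :
    ‖RemC B K θ s‖ ≤ (Real.exp (y * A / 4) + Real.exp (A ^ 2 / 2)) * Real.exp (-(y ^ 2 / 64) / ‖s‖) * Real.exp (y * θ) := by
  have hθ0 : 0 < θ := pos_of_mul_pos_left (lt_of_lt_of_le hy hθ) hs0.le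
  have hterm : ∀ j ∈ Finset.range K, ‖iteratedDeriv j (fk B θ) 0 / j.factorial * s ^ j‖ ≤
      Real.exp (y * A / 4) * Real.exp (y * θ / 4) := by
    intro j hj
    have hj : j < K := by simpa using hj
    have hj' : (j : ℝ) ≤ K := by exact_mod_cast hj.le
    have hr : y / 4 / θ < ρ := by
      rw [div_lt_iff₀ hθ0]; nlinarith
    have h1 := h.cauchy hθ0.le (r := y / 4 / θ) (by positivity) hr j
    have e : θ ^ 2 / 2 * (y / 4 / θ) + θ * (A * (y / 4 / θ)) = y * A / 4 + y * θ / 8 := by field_simp; ring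
    rw [e] at h1
    rw [norm_mul, norm_div, norm_pow, Complex.norm_natCast]
    have hn : (0 : ℝ) < j.factorial := by positivity
    have h2 : (‖s‖ * θ / (y / 4)) ^ j ≤ Real.exp (y * θ / 8) := by
      have h3 : ‖s‖ * θ / (y / 4) ≤ Real.exp (‖s‖ * θ / (y / 4)) := by
        linarith [Real.add_one_le_exp (‖s‖ * θ / (y / 4))]
      calc _ ≤ (Real.exp (‖s‖ * θ / (y / 4))) ^ j := by gcongr
        _ = Real.exp (j * (‖s‖ * θ / (y / 4))) := by rw [Real.exp_nat_mul]
        _ ≤ _ := by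
          apply Real.exp_le_exp.2
          have h5 : (j : ℝ) * ‖s‖ ≤ y ^ 2 / 32 := le_trans (by gcongr) hK
          have : (j : ℝ) * (‖s‖ * θ / (y / 4)) = (j * ‖s‖) * (θ / (y / 4)) := by ring
          rw [this]
          calc _ ≤ y ^ 2 / 32 * (θ / (y / 4)) := by gcongr
            _ = _ := by field_simp; ring
    calc ‖iteratedDeriv j (fk B θ) 0‖ / j.factorial * ‖s‖ ^ j ≤
        (j.factorial * Real.exp (y * A / 4 + y * θ / 8) / (y / 4 / θ) ^ j) / j.factorial * ‖s‖ ^ j := by gcongr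
      _ = Real.exp (y * A / 4 + y * θ / 8) * (‖s‖ * θ / (y / 4)) ^ j := by
        simp only [div_pow, mul_pow]; field_simp
      _ ≤ Real.exp (y * A / 4 + y * θ / 8) * Real.exp (y * θ / 8) := by gcongr
      _ = _ := by rw [← Real.exp_add, ← Real.exp_add]; ring_nf
  have hsum : ‖∑ j ∈ Finset.range K, iteratedDeriv j (fk B θ) 0 / j.factorial * s ^ j‖ ≤
      Real.exp (y * A / 4) * Real.exp (y * θ / 2) := by
    refine (norm_sum_le _ _).trans ((Finset.sum_le_sum hterm).trans ?_)
    rw [Finset.sum_const, Finset.card_range, nsmul_eq_mul]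
    have h1 : (K : ℝ) ≤ Real.exp (y * θ / 4) := by
      have h2 : (K : ℝ) ≤ y * θ / 32 := by
        have : (K : ℝ) * ‖s‖ ≤ y * θ / 32 * ‖s‖ := by nlinarith
        exact le_of_mul_le_mul_right this hs0
      have := Real.add_one_le_exp (y * θ / 4)
      nlinarith [mul_pos hy hθ0]
    calc (K : ℝ) * (Real.exp (y * A / 4) * Real.exp (y * θ / 4)) ≤
        Real.exp (y * θ / 4) * (Real.exp (y * A / 4) * Real.exp (y * θ / 4)) := by gcongr
      _ = Real.exp (y * A / 4) * (Real.exp (y * θ / 4) * Real.exp (y * θ / 4)) := by ring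
      _ = _ := by rw [← Real.exp_add (y * θ / 4)]; ring_nf
  have hkey : Real.exp (y * θ / 2) ≤ Real.exp (-(y ^ 2 / 64) / ‖s‖) * Real.exp (y * θ) := by
    rw [← Real.exp_add]
    apply Real.exp_le_exp.2
    have : y ^ 2 / 64 / ‖s‖ ≤ y * θ / 2 := by
      rw [div_le_iff₀ hs0]
      nlinarith
    rw [neg_div]; linarith
  have hone : 1 ≤ Real.exp (y * θ / 2) := Real.one_le_exp (by positivity)
  have hfk := h.norm_fk_horo hθ0.le (by linarith : ‖s‖ < ρ) hre
  have htri := norm_sub_le (fk B θ s) (∑ j ∈ Finset.range K, iteratedDeriv j (fk B θ) 0 / j.factorial * s ^ j)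
  unfold RemC
  have hp1 := Real.exp_pos (y * A / 4)
  have hp2 := Real.exp_pos (A ^ 2 / 2)
  calc _ ≤ Real.exp (A ^ 2 / 2) * Real.exp (y * θ / 2) + Real.exp (y * A / 4) * Real.exp (y * θ / 2) := by
        nlinarith
    _ = (Real.exp (y * A / 4) + Real.exp (A ^ 2 / 2)) * Real.exp (y * θ / 2) := by ring
    _ ≤ (Real.exp (y * A / 4) + Real.exp (A ^ 2 / 2)) * (Real.exp (-(y ^ 2 / 64) / ‖s‖) * Real.exp (y * θ)) := by gcongr
    _ = _ := by ring

lemma GoodB.rem_flat (h : GoodB B ρ A) {y : ℝ} (hy : 0 < y) {θ : ℝ} (hθ : 0 ≤ θ) {s : ℂ} (hs0 : 0 < ‖s‖)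
    (hsρ : 2 * ‖s‖ < ρ) (hre : ‖s‖ ^ 2 ≤ s.re) {K : ℕ} (hK : K * ‖s‖ ≤ y ^ 2 / 32)
    (hK' : y ^ 2 / 32 ≤ (K + 1) * ‖s‖) :
    ‖RemC B K θ s‖ ≤ (Real.exp (y * A / 4) + Real.exp (A ^ 2 / 2) + 2 * Real.exp 1 * Real.exp (2 * A * y))
      * Real.exp (-(y ^ 2 / 64) / ‖s‖) * Real.exp (y * θ) := by
  have hp1 := Real.exp_pos (y * A / 4)
  have hp2 := Real.exp_pos (A ^ 2 / 2)
  rcases le_total y (θ * ‖s‖) with h1 | h1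
  · refine (h.rem_outer hy hs0 hsρ h1 hre hK).trans ?_
    have : 0 ≤ 2 * Real.exp 1 * Real.exp (2 * A * y) := by positivity
    apply mul_le_mul_of_nonneg_right _ (Real.exp_pos _).le
    apply mul_le_mul_of_nonneg_right _ (Real.exp_pos _).le
    linarith
  · have h2 := h.rem_inner hθ hs0 hsρ K
    have h3 : Real.exp (θ ^ 2 * ‖s‖ + 2 * A * (θ * ‖s‖)) ≤ Real.exp (2 * A * y) * Real.exp (y * θ) := by
      rw [← Real.exp_add]
      apply Real.exp_le_exp.2
      have hA := h.hA
      have h4 : 2 * A * (θ * ‖s‖) ≤ 2 * A * y := by gcongr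
      nlinarith
    have h5 : ((1 / 2 : ℝ)) ^ K ≤ Real.exp 1 * Real.exp (-(y ^ 2 / 64) / ‖s‖) := by
      have h6 : (1 / 2 : ℝ) ≤ Real.exp (-(1 / 2)) := by
        linarith [Real.add_one_le_exp (-(1 / 2) : ℝ)]
      calc ((1 / 2 : ℝ)) ^ K ≤ Real.exp (-(1 / 2)) ^ K := by gcongr
        _ = Real.exp (K * (-(1 / 2))) := by rw [Real.exp_nat_mul]
        _ ≤ _ := by
          rw [← Real.exp_add]
          apply Real.exp_le_exp.2
          have : y ^ 2 / 64 / ‖s‖ = y ^ 2 / 32 / ‖s‖ / 2 := by ring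
          rw [neg_div, this]
          have h7 : y ^ 2 / 32 / ‖s‖ ≥ K := by
            rw [ge_iff_le, le_div_iff₀ hs0]; exact hK
          have h8 : y ^ 2 / 32 / ‖s‖ ≤ K + 1 := by
            rw [div_le_iff₀ hs0]; exact hK'
          linarith
    calc _ ≤ 2 * (1 / 2) ^ K * Real.exp (θ ^ 2 * ‖s‖ + 2 * A * (θ * ‖s‖)) := h2
      _ ≤ 2 * (Real.exp 1 * Real.exp (-(y ^ 2 / 64) / ‖s‖)) * (Real.exp (2 * A * y) * Real.exp (y * θ)) := by gcongr
      _ = (2 * Real.exp 1 * Real.exp (2 * A * y)) * Real.exp (-(y ^ 2 / 64) / ‖s‖) * Real.exp (y * θ) := by ring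
      _ ≤ _ := by
        gcongr
        linarith

theorem GoodB.core {ν : Measure ℝ} [IsFiniteMeasure ν] (h : GoodB B ρ A) (hν : ν (Iio 0) = 0) 
    (hreal : ∀ t : ℝ, 0 ≤ t → t < ρ → (B t).im = 0) 
    (hfreq : ∃ᶠ s : ℝ in 𝓝[>] 0, ∫ θ, fk B θ s ∂ν = 1) :
    ∃ δ > 0, ∀ s : ℝ, 0 < s → s < δ → ∫ θ, fk B θ s ∂ν = 1 := by
  have hρ := h.hρ
  have hev : ∀ᶠ s : ℝ in 𝓝[>] 0, 0 < s ∧ s < ρ / 2 := 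
    Ioo_mem_nhdsGT (by linarith : (0 : ℝ) < ρ / 2)
  obtain ⟨u, hu, huc⟩ := exists_seq_forall_of_frequently (hfreq.and_eventually hev)
  obtain ⟨⟨y, hy, hyint⟩, hall⟩ := h.exp_moment hν hreal (tendsto_nhds_of_tendsto_nhdsWithin hu)
    (fun n => (huc n).2.1) (fun n => (huc n).2.2) (fun n => (huc n).1)
  set C := (Real.exp (y * A / 4) + Real.exp (A ^ 2 / 2) + 2 * Real.exp 1 * Real.exp (2 * A * y)) with hC
  have hflat : ∀ s : ℂ, 0 < ‖s‖ → 2 * ‖s‖ < ρ → ‖s‖ ^ 2 ≤ s.re → ‖s‖ ≤ y ^ 2 / 32 →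
      ‖∫ θ, fk B θ s ∂ν - 1‖ ≤ (C * ∫ θ, Real.exp (y * θ) ∂ν) * Real.exp (-(y ^ 2 / 64) / ‖s‖) := by
    intro s hs0 hsρ hre hsy
    set K := ⌊y ^ 2 / 32 / ‖s‖⌋₊ with hK
    have hK1 : 1 ≤ K := by
      rw [hK, Nat.one_le_floor_iff, le_div_iff₀ hs0]; linarith
    have hKle : K * ‖s‖ ≤ y ^ 2 / 32 := by
      rw [← le_div_iff₀ hs0]; exact Nat.floor_le (by positivity)
    have hKge : y ^ 2 / 32 ≤ (K + 1) * ‖s‖ := by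
      rw [← div_le_iff₀ hs0]; exact (Nat.lt_floor_add_one _).le
    have hfi : Integrable (fun θ : ℝ => fk B θ s) ν := by
      apply Integrable.of_bound (continuous_fk_theta B s).aestronglyMeasurable (Real.exp (A ^ 2 / 2))
      filter_upwards [ae_nonneg_of hν] with θ hθ
      exact h.norm_fk_horo hθ (by linarith) hre
    have hz : ∫ θ, RemC B K θ s ∂ν = ∫ θ, fk B θ s ∂ν - 1 := by
      unfold RemC
      rw [integral_sub hfi (integrable_finsetSum _ (fun j _ => (hall j).1.mul_const _)), 
        integral_finsetSum _ (fun j _ => (hall j).1.mul_const _)]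
      have : ∀ j ∈ Finset.range K, ∫ θ, iteratedDeriv j (fk B θ) 0 / j.factorial * s ^ j ∂ν =
          if j = 0 then 1 else 0 := by
        intro j hj
        rw [integral_mul_const, (hall j).2]
        split_ifs with h0
        · simp [h0]
        · simp
      rw [Finset.sum_congr rfl this, Finset.sum_ite_eq' ]
      simp [show 0 < K by omega]
    rw [← hz]
    have := norm_integral_le_of_norm_le (μ := ν) (f := fun θ => RemC B K θ s)
      (g := fun θ => C * Real.exp (-(y ^ 2 / 64) / ‖s‖) * Real.exp (y * θ)) (hyint.const_mul _) (by
        filter_upwards [ae_nonneg_of hν] with θ hθ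
        exact h.rem_flat hy hθ hs0 hsρ hre hKle hKge)
    refine this.trans (le_of_eq ?_)
    rw [integral_const_mul]; ring
  set R := 2 / ρ + 32 / y ^ 2 + 1 with hR
  have hR0 : 0 < R := by positivity
  have hR1 : 2 / ρ < R := by rw [hR]; linarith [show 0 < 32 / y ^ 2 by positivity]
  have hR2 : 32 / y ^ 2 < R := by rw [hR]; linarith [show 0 < 2 / ρ by positivity]
  have hinv : ∀ v : ℂ, R < v.re → 0 < ‖v⁻¹‖ ∧ 2 * ‖v⁻¹‖ < ρ ∧ ‖v⁻¹‖ ^ 2 ≤ v⁻¹.re ∧ ‖v⁻¹‖ ≤ y ^ 2 / 32 := by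
    intro v hv
    have hvn : R < ‖v‖ := hv.trans_le ((le_abs_self _).trans (Complex.abs_re_le_norm v))
    have hv0 : 0 < ‖v‖ := hR0.trans hvn
    rw [norm_inv]
    refine ⟨by positivity, ?_, ?_, ?_⟩
    · have h1 := hR1.trans hvn
      rw [div_lt_iff₀ hρ] at h1
      rw [← div_eq_mul_inv, div_lt_iff₀ hv0]; linarith
    · rw [Complex.inv_re, Complex.normSq_eq_norm_sq, inv_pow, ← one_div]
      gcongr
      have : 1 ≤ R := by rw [hR]; linarith [show 0 < 2 / ρ by positivity, show 0 < 32 / y ^ 2 by positivity]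
      linarith
    · have h1 := hR2.trans hvn
      rw [div_lt_iff₀ (by positivity)] at h1
      rw [inv_le_iff_one_le_mul₀ hv0]; linarith
  have hzero := pl_unique (H := fun v => ∫ θ, fk B θ v⁻¹ ∂ν - 1) (R := R)
    (C := (C * ∫ θ, Real.exp (y * θ) ∂ν)) (κ := y ^ 2 / 64) hR0.le (by positivity) (by
      apply DifferentiableOn.sub_const
      refine differentiableOn_integral_param (K := fun v θ => fk B θ v⁻¹) (μ := ν) (U := {v : ℂ | R < v.re}) (C := Real.exp (A ^ 2 / 2))
        (isOpen_lt continuous_const Complex.continuous_re) ?_ ?_ ?_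
      · intro z _
        exact (continuous_fk_theta B _).aestronglyMeasurable
      · filter_upwards with θ
        apply (h.diff_fk θ).comp
        · intro v hv
          have : v ≠ 0 := by
            rintro rfl
            have h1 : R < (0 : ℂ).re := hv
            simp at h1; linarith
          exact (differentiableAt_inv this).differentiableWithinAt
        · intro v hv
          have := (hinv v hv).2.1
          have h3 := (hinv v hv).1
          simp only [Metric.mem_ball, dist_zero_right]; linarith
      · filter_upwards [ae_nonneg_of hν] with θ hθ v hv
        obtain ⟨h1, h2, h3, h4⟩ := hinv v hv
        exact h.norm_fk_horo hθ (by linarith) h3) (by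
      intro v hv
      obtain ⟨h1, h2, h3, h4⟩ := hinv v hv
      have h5 := hflat v⁻¹ h1 h2 h3 h4
      refine h5.trans (le_of_eq ?_)
      rw [norm_inv, div_inv_eq_mul])
  refine ⟨1 / (R + 1), by positivity, fun s hs0 hs => ?_⟩
  have h1 := hzero ((s⁻¹ : ℝ) : ℂ) (by
    rw [Complex.ofReal_re]
    rw [lt_div_iff₀ (by positivity)] at hs
    rw [le_inv_comm₀ (by positivity) hs0, ← one_div, le_div_iff₀ (by positivity)]
    exact hs.le)
  simp only [Complex.ofReal_inv, inv_inv] at h1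
  exact sub_eq_zero.1 h1

end flat

lemma complexify {α : ℝ → ℝ} {x : ℝ} (h : AnalyticAt ℝ α x) :
    ∃ r > 0, ∃ f : ℂ → ℂ, DifferentiableOn ℂ f (Metric.ball (x:ℂ) r) ∧
      ∀ t : ℝ, |t - x| < r → f t = α t := by
  obtain ⟨p, hp⟩ := h
  have hrad : 0 < p.radius := hp.radius_pos
  have hs := hasFPowerSeriesAt_iff.1 hp
  obtain ⟨r1, hr1, h1⟩ := Metric.eventually_nhds_iff.1 hs
  obtain ⟨r2, hr2, h2⟩ := ENNReal.lt_iff_exists_nnreal_btwn.1 hrad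
  have hr2' : 0 < r2 := by exact_mod_cast hr2
  have hsum := p.summable_norm_mul_pow h2
  refine ⟨min r1 r2, lt_min hr1 (by exact_mod_cast hr2'), fun z => ∑' n, (p.coeff n : ℂ) * (z - x) ^ n, ?_, ?_⟩
  · refine Complex.differentiableOn_tsum_of_summable_norm hsum (fun n => by fun_prop) Metric.isOpen_ball ?_
    intro n z hz
    have hz' : ‖z - x‖ ≤ r2 := by
      have := (mem_ball_iff_norm.1 hz).le
      exact this.trans (min_le_right _ _)
    rw [norm_mul, norm_pow, Complex.norm_real, FormalMultilinearSeries.norm_apply_eq_norm_coef]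
    gcongr
  · intro t ht
    have := h1 (y := t - x) (by simpa [Real.dist_eq] using lt_of_lt_of_le ht (min_le_left _ _))
    have h3 := Complex.hasSum_ofReal.2 this
    simp only [add_sub_cancel] at h3
    rw [← h3.tsum_eq]
    refine tsum_congr fun n => ?_
    simp [mul_comm]

lemma goodB_of_analytic {α : ℝ → ℝ} (h : AnalyticAt ℝ α 0) (h0 : α 0 = 0) :
    ∃ (B : ℂ → ℂ) (ρ A : ℝ), GoodB B ρ A ∧ ∀ t : ℝ, |t| < ρ → B t = α t := by
  obtain ⟨r, hr, f, hf, hfe⟩ := complexify h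
  simp only [sub_zero, Complex.ofReal_zero] at hf hfe
  have hsub : Metric.closedBall (0:ℂ) (r/2) ⊆ Metric.ball 0 r :=
    Metric.closedBall_subset_ball (by linarith)
  have hdc : ContinuousOn (deriv f) (Metric.closedBall (0:ℂ) (r/2)) :=
    ((hf.deriv Metric.isOpen_ball).continuousOn).mono hsub
  obtain ⟨C, hC⟩ := (isCompact_closedBall (0:ℂ) (r/2)).exists_bound_of_continuousOn hdc
  have hC0 : 0 ≤ C := (norm_nonneg _).trans (hC 0 (by simp; linarith))
  refine ⟨f, r/2, C, ⟨by linarith, hC0, hf.mono (Metric.ball_subset_closedBall.trans hsub), ?_, ?_⟩, ?_⟩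
  · have := hfe 0 (by simpa using hr)
    simpa [h0] using this
  · intro w hw w' hw'
    refine Convex.norm_image_sub_le_of_norm_deriv_le (s := Metric.ball (0:ℂ) (r/2)) ?_ ?_ (convex_ball _ _) hw' hw
    · intro z hz
      exact hf.differentiableAt (Metric.isOpen_ball.mem_nhds (hsub (Metric.ball_subset_closedBall hz)))
    · intro z hz
      exact hC z (Metric.ball_subset_closedBall hz)
  · intro t ht
    exact hfe t (by linarith)

/-- F analytic at positive points -/
lemma F_analytic {ν : Measure ℝ} [IsFiniteMeasure ν] {α : ℝ → ℝ} {s1 : ℝ} (hs1 : 0 < s1)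
    (h : AnalyticAt ℝ α s1) :
    AnalyticAt ℝ (fun s : ℝ => ∫ θ, Real.exp (-(θ^2/2)*s + θ * α s) ∂ν) s1 := by
  obtain ⟨r, hr, f, hf, hfe⟩ := complexify h
  set r' := min (r/2) (s1/2) with hr'
  have hr'0 : 0 < r' := lt_min (by linarith) (by linarith)
  have hsub : Metric.closedBall (s1:ℂ) r' ⊆ Metric.ball (s1:ℂ) r :=
    Metric.closedBall_subset_ball (lt_of_le_of_lt (min_le_left _ _) (by linarith))
  obtain ⟨M, hM⟩ := (isCompact_closedBall (s1:ℂ) r').exists_bound_of_continuousOn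
    (hf.continuousOn.mono hsub)
  have hd : DifferentiableOn ℂ (fun z => ∫ θ, (fun z (θ:ℝ) => fk f θ z) z θ ∂ν) (Metric.ball (s1:ℂ) r') := by
    refine differentiableOn_integral_param (C := Real.exp (M^2/s1)) Metric.isOpen_ball ?_ ?_ ?_
    · intro z _
      have : Continuous (fun θ : ℝ => fk f θ z) := by unfold fk; fun_prop
      exact this.aestronglyMeasurable
    · refine Filter.Eventually.of_forall fun θ => ?_
      have := hf.mono (Metric.ball_subset_closedBall.trans hsub)
      unfold fk
      fun_prop
    · refine Filter.Eventually.of_forall fun θ z hz => ?_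
      unfold fk
      rw [Complex.norm_exp]
      apply Real.exp_le_exp.2
      have hz1 := hM z (Metric.ball_subset_closedBall hz)
      have hz2 : s1/2 ≤ z.re := by
        have := (Complex.abs_re_le_norm (z - s1)).trans (mem_ball_iff_norm.1 hz).le
        have h3 := this.trans (min_le_right _ _)
        simp at h3
        linarith [(abs_le.1 h3).1]
      have e1 : (-((θ:ℂ)^2/2)*z + θ * f z).re = -(θ^2/2) * z.re + θ * (f z).re := by
        have : (-((θ:ℂ)^2/2)*z + θ * f z) = ((-(θ^2/2):ℝ):ℂ)*z + ((θ:ℝ):ℂ) * f z := by push_cast; ring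
        rw [this, Complex.add_re, Complex.re_ofReal_mul, Complex.re_ofReal_mul]
      rw [e1]
      have h4 : θ * (f z).re ≤ |θ| * M := by
        calc _ ≤ |θ * (f z).re| := le_abs_self _
          _ = |θ| * |(f z).re| := abs_mul _ _
          _ ≤ _ := by
            gcongr
            exact (Complex.abs_re_le_norm _).trans hz1
      have h5 : (θ^2/2) * (s1/2) ≤ (θ^2/2) * z.re := by gcongr
      have h6 : |θ| * M ≤ θ^2 * s1/4 + M^2/s1 := by
        rw [← sq_abs θ, ← sub_nonneg]
        have : |θ|^2 * s1/4 + M^2/s1 - |θ| * M = (|θ| * s1/2 - M)^2/s1 := by field_simp; ring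
        rw [this]; positivity
      linarith
  have ha : AnalyticAt ℂ (fun z => ∫ θ, fk f θ z ∂ν) (s1:ℂ) :=
    hd.analyticAt (Metric.ball_mem_nhds _ hr'0)
  refine ha.re_ofReal.congr ?_
  filter_upwards [Metric.ball_mem_nhds s1 hr] with s hs
  have e := hfe s (by simpa [Real.dist_eq] using hs)
  have : ∀ θ : ℝ, fk f θ s = ((Real.exp (-(θ^2/2)*s + θ * α s) : ℝ) : ℂ) := by
    intro θ
    rw [fk_real (by rw [e]; simp), e]; simp
  simp only [this]
  rw [integral_complex_ofReal, Complex.ofReal_re]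

/-- frequent equality near zero propagates -/
lemma F_eq_one {ν : Measure ℝ} [IsFiniteMeasure ν] (hν : ν (Iio 0) = 0) {α : ℝ → ℝ}
    (h : AnalyticOnNhd ℝ α (Ici 0)) (h0 : α 0 = 0)
    (hfreq : ∃ᶠ s : ℝ in 𝓝[>] 0, ∫ θ, Real.exp (-(θ^2/2)*s + θ * α s) ∂ν = 1) :
    ∀ s > 0, ∫ θ, Real.exp (-(θ^2/2)*s + θ * α s) ∂ν = 1 := by
  obtain ⟨B, ρ, A, hB, hBe⟩ := goodB_of_analytic (h 0 (by simp)) h0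
  have hfk : ∀ s : ℝ, |s| < ρ → ∫ θ, fk B θ s ∂ν =
      ((∫ θ, Real.exp (-(θ^2/2)*s + θ * α s) ∂ν : ℝ) : ℂ) := by
    intro s hs
    rw [← integral_complex_ofReal]
    congr 1
    ext θ
    rw [fk_real (by rw [hBe s hs]; simp), hBe s hs]; simp
  have hnear : ∀ᶠ s : ℝ in 𝓝[>] 0, |s| < ρ := by
    filter_upwards [mem_nhdsWithin_of_mem_nhds (Metric.ball_mem_nhds (0:ℝ) hB.hρ)] with s hs
    simpa using hs
  obtain ⟨δ, hδ, hc⟩ := hB.core hν (fun t h0 h1 => by rw [hBe t (by rwa [abs_of_nonneg h0])]; simp)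
    ((hfreq.and_eventually hnear).mono fun s hs => by rw [hfk s hs.2, hs.1]; simp)
  have han : AnalyticOnNhd ℝ (fun s : ℝ => ∫ θ, Real.exp (-(θ^2/2)*s + θ * α s) ∂ν) (Ioi 0) :=
    fun s hs => F_analytic hs (h s (mem_Ici.2 (mem_Ioi.1 hs).le))
  set q := min δ ρ / 2 with hq
  have hq0 : 0 < q := half_pos (lt_min hδ hB.hρ)
  have hq1 : q < min δ ρ := half_lt_self (lt_min hδ hB.hρ)
  have := han.eqOn_of_preconnected_of_eventuallyEq (g := fun _ => (1:ℝ)) (fun s _ => analyticAt_const)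
    isPreconnected_Ioi (z₀ := q) hq0 ?_
  · intro s hs; exact this hs
  · filter_upwards [Ioo_mem_nhds hq0 hq1] with s hs
    have h1 := hc s hs.1 (hs.2.trans_le (min_le_left _ _))
    rw [hfk s (by rw [abs_of_pos hs.1]; exact hs.2.trans_le (min_le_right _ _))] at h1
    exact_mod_cast h1

noncomputable def kt (b : ℝ → ℝ) (t0 θ t : ℝ) : ℝ :=
  Real.exp (-(θ^2/2)*(1/t-1/t0) + θ*(b t/t - b t0/t0))

lemma lam_discrete {lam : Measure ℝ} [IsFiniteMeasure lam] {σ β : ℝ → ℝ} {S A c : ℝ}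
    (hA : 0 ≤ A) (hc : 0 < c)
    (hσm : AEMeasurable σ lam) (hβm : AEMeasurable β lam)
    (hσ : ∀ᵐ t ∂lam, 0 ≤ σ t ∧ σ t ≤ S) (hβ : ∀ᵐ t ∂lam, |β t| ≤ A * σ t) (θ0 : ℝ) :
    ∃ δ > 0, ∀ θ, θ0 < θ → θ < θ0 + δ →
      ∫ t, Real.exp (-(θ^2/2)*σ t + θ * β t) ∂lam ≠ Real.exp (-c*θ) := by
  set G : ℂ → ℂ := fun z => (∫ t, (fun (z : ℂ) (t : ℝ) => Complex.exp (-(z^2/2)*σ t + z * β t)) z t ∂lam)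
    - Complex.exp (-c*z) with hG
  have hGreal : ∀ θ : ℝ, G θ = ((∫ t, Real.exp (-(θ^2/2)*σ t + θ * β t) ∂lam - Real.exp (-c*θ) : ℝ) : ℂ) := by
    intro θ
    rw [hG, Complex.ofReal_sub, ← integral_complex_ofReal]
    push_cast
    rfl
  have hGd : ∀ R : ℝ, DifferentiableOn ℂ G (Metric.ball 0 R) := by
    intro R
    refine DifferentiableOn.sub ?_ (by fun_prop)
    refine differentiableOn_integral_param (C := Real.exp (R^2*S/2 + R*(A*S))) Metric.isOpen_ball ?_ ?_ ?_
    · intro z _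
      have : AEMeasurable (fun t => Complex.exp (-(z^2/2)*σ t + z * β t)) lam := by
        fun_prop
      exact this.aestronglyMeasurable
    · refine Filter.Eventually.of_forall fun θ => ?_
      fun_prop
    · filter_upwards [hσ, hβ] with t h1 h2 z hz
      have hz' : ‖z‖ ≤ R := by simpa using (mem_ball_zero_iff.1 hz).le
      rw [Complex.norm_exp]
      apply Real.exp_le_exp.2
      refine (Complex.re_le_norm _).trans ((norm_add_le _ _).trans ?_)
      have e1 : ‖-(z^2/2)*(σ t : ℂ)‖ = ‖z‖^2/2 * σ t := by
        rw [norm_mul, norm_neg, norm_div, norm_pow, Complex.norm_real, Real.norm_of_nonneg h1.1]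
        simp
      have e2 : ‖z * (β t : ℂ)‖ = ‖z‖ * |β t| := by
        rw [norm_mul, Complex.norm_real, Real.norm_eq_abs]
      rw [e1, e2]
      have h3 : |β t| ≤ A * S := h2.trans (by gcongr; exact h1.2)
      have hR : 0 ≤ R := (norm_nonneg z).trans hz'
      have : ‖z‖^2/2 * σ t ≤ R^2/2 * S := by gcongr; exact h1.1; exact h1.2
      have : ‖z‖ * |β t| ≤ R * (A*S) := by gcongr
      linarith
  have hGa : AnalyticOnNhd ℂ G univ := by
    intro z _
    exact (hGd (‖z‖+1)).analyticAt (Metric.isOpen_ball.mem_nhds (by simp))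
  have hne : ¬ ∀ᶠ z in 𝓝 (θ0:ℂ), G z = 0 := by
    intro h
    have hz := hGa.eq_of_eventuallyEq (g := fun _ => 0) (fun z _ => analyticAt_const) h
    have hbd : ∀ θ : ℝ, ∫ t, Real.exp (-(θ^2/2)*σ t + θ * β t) ∂lam ≤ lam.real univ * Real.exp (A^2*S/2) := by
      intro θ
      have : ∫ t, Real.exp (-(θ^2/2)*σ t + θ * β t) ∂lam ≤ ∫ t, Real.exp (A^2*S/2) ∂lam := by
        refine integral_mono_of_nonneg (Filter.Eventually.of_forall fun t => (Real.exp_pos _).le) (integrable_const _) ?_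
        filter_upwards [hσ, hβ] with t h1 h2
        apply Real.exp_le_exp.2
        have h3 : θ * β t ≤ |θ| * (A * σ t) := by
          calc _ ≤ |θ * β t| := le_abs_self _
            _ = |θ| * |β t| := abs_mul _ _
            _ ≤ _ := by gcongr
        have h4 : A^2 * σ t ≤ A^2 * S := by gcongr; exact h1.2
        have h5 : 0 ≤ (|θ| - A)^2 * σ t := mul_nonneg (sq_nonneg _) h1.1
        have h6 := sq_abs θ
        nlinarith
      simpa using this
    have hle : ∀ θ : ℝ, Real.exp (-c*θ) ≤ lam.real univ * Real.exp (A^2*S/2) := by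
      intro θ
      have h1 := congrFun hz θ
      rw [hGreal] at h1
      have h2 : ∫ t, Real.exp (-(θ^2/2)*σ t + θ * β t) ∂lam - Real.exp (-c*θ) = 0 := by exact_mod_cast h1
      linarith [hbd θ]
    set M := lam.real univ * Real.exp (A^2*S/2)
    have h1 := hle (-(M/c))
    have h2 : -c * -(M/c) = M := by field_simp
    rw [h2] at h1
    linarith [Real.add_one_le_exp M]
  have hev := ((hGa θ0 (mem_univ _)).eventually_eq_zero_or_eventually_ne_zero).resolve_left hne
  have hev2 := (Metric.mem_nhdsWithin_iff.1 hev)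
  obtain ⟨δ, hδ, h⟩ := hev2
  refine ⟨δ, hδ, fun θ h1 h2 heq => ?_⟩
  have : G θ ≠ 0 := by
    refine h ⟨?_, ?_⟩
    · rw [mem_ball_iff_norm, ← Complex.ofReal_sub, Complex.norm_real, Real.norm_of_nonneg (by linarith)]
      linarith
    · simp; exact_mod_cast h1.ne'
  apply this
  rw [hGreal, heq]; simp

lemma flat_zero {R : ℝ → ℝ} (hR : AnalyticAt ℝ R 0) {C κ η : ℝ} (hκ : 0 < κ) (hη : 0 < η)
    (hb : ∀ t, 0 < t → t < η → |R t| ≤ C * Real.exp (-(κ/t))) : ∀ᶠ t in 𝓝 0, R t = 0 := by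
  by_contra hne
  obtain ⟨n, g, hg, hg0, hgR⟩ := hR.exists_eventuallyEq_pow_smul_nonzero_iff.2 hne
  have h1 : Tendsto g (𝓝[>] 0) (𝓝 (g 0)) := hg.continuousAt.tendsto.mono_left nhdsWithin_le_nhds
  have hinv : Tendsto (fun t : ℝ => κ / t) (𝓝[>] 0) atTop := by
    simp only [div_eq_mul_inv]
    exact tendsto_inv_nhdsGT_zero.const_mul_atTop hκ
  have h2 := ((Real.tendsto_pow_mul_exp_neg_atTop_nhds_zero n).comp hinv).const_mul (C/κ^n)
  rw [mul_zero] at h2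
  have h3 : Tendsto g (𝓝[>] 0) (𝓝 0) := by
    refine squeeze_zero_norm' ?_ h2
    filter_upwards [mem_nhdsWithin_of_mem_nhds hgR, Ioo_mem_nhdsGT hη] with t ht1 ht2
    have ht := hb t ht2.1 ht2.2
    rw [ht1] at ht
    simp only [sub_zero, smul_eq_mul, abs_mul, abs_pow, abs_of_pos ht2.1] at ht
    have hp : 0 < t^n := pow_pos ht2.1 n
    simp only [Function.comp, Real.norm_eq_abs]
    rw [← mul_le_mul_iff_right₀ hp]
    refine ht.trans (le_of_eq ?_)
    rw [div_pow]; field_simp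
  exact hg0 (tendsto_nhds_unique h1 h3)

lemma tail_zero {b : ℝ → ℝ} {t0 δ : ℝ} (hb : AnalyticAt ℝ b 0) (hb0 : 0 < b 0) (ht0 : 0 < t0)
    (hδ : 0 < δ) {ν : Measure ℝ} [IsFiniteMeasure ν] (hν : ν (Ici (2 * b 0))ᶜ = 0)
    (hgap : ν (Ioo (2 * b 0) (2 * b 0 + δ)) = 0)
    (h1 : ∀ t, 0 < t → t < t0 → ∫ θ, kt b t0 θ t ∂ν = 1) : ν (Ici (2 * b 0 + δ)) = 0 := by
  set θ0 := 2 * b 0 with hθ0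
  have hθ0p : 0 < θ0 := by positivity
  set T := Ici (θ0 + δ) with hT
  have hTm : MeasurableSet T := measurableSet_Ici
  set c0 := θ0^2/(2*t0) - θ0 * b t0/t0 with hc0
  set R : ℝ → ℝ := fun t => 1 - ν.real {θ0} * Real.exp c0 * Real.exp (θ0 * dslope b 0 t) with hR
  have hda : AnalyticAt ℝ (dslope b 0) 0 := by
    obtain ⟨p, hp⟩ := hb
    exact hp.has_fpower_series_dslope_fslope.analyticAt
  have hRa : AnalyticAt ℝ R 0 := by
    refine analyticAt_const.sub (analyticAt_const.mul ?_)
    exact (analyticAt_const.mul hda).rexp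
  have hsplit : ∀ t, 0 < t → t < t0 → IntegrableOn (fun θ => kt b t0 θ t) T ν ∧
      ∫ θ in T, kt b t0 θ t ∂ν = R t := by
    intro t ht htt
    have hIntg : Integrable (fun θ => kt b t0 θ t) ν := by
      by_contra hni
      have := h1 t ht htt
      rw [integral_undef hni] at this
      norm_num at this
    refine ⟨hIntg.integrableOn, ?_⟩
    have hae : ∀ᵐ θ ∂ν, θ ∈ T ∪ {θ0} := by
      have e1 : ν ((T ∪ {θ0})ᶜ) = 0 := by
        refine measure_mono_null ?_ (measure_union_null hν hgap)
        intro x hx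
        simp only [hT, mem_compl_iff, mem_union, mem_Ici, mem_singleton_iff, mem_Ioo, not_or, not_le] at hx ⊢
        rcases lt_or_ge x θ0 with h | h
        · exact Or.inl h
        · exact Or.inr ⟨lt_of_le_of_ne h (Ne.symm hx.2), hx.1⟩
      exact e1
    have hres : ν.restrict (T ∪ {θ0}) = ν := Measure.restrict_eq_self_of_ae_mem hae
    have hdisj : Disjoint T {θ0} := by
      rw [disjoint_singleton_right]; simp [hT, hδ]
    have := h1 t ht htt
    rw [← hres, setIntegral_union hdisj (measurableSet_singleton _) hIntg.integrableOn hIntg.integrableOn,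
      integral_singleton] at this
    have hk : kt b t0 θ0 t = Real.exp c0 * Real.exp (θ0 * dslope b 0 t) := by
      rw [kt, ← Real.exp_add, dslope_of_ne _ ht.ne', slope_def_field, hc0, sub_zero]
      congr 1
      have : b 0 = θ0/2 := by rw [hθ0]; ring
      rw [this]
      field_simp
      ring
    rw [hk, smul_eq_mul] at this
    rw [hR]; simp only; linarith
  obtain ⟨L, hL0, hL⟩ : ∃ L : ℝ, 0 ≤ L ∧ ∀ᶠ t in 𝓝[>] 0, b t ≤ b 0 + L * t := by
    refine ⟨|dslope b 0 0| + 1, by positivity, ?_⟩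
    have : ∀ᶠ t in 𝓝 0, dslope b 0 t < |dslope b 0 0| + 1 :=
      hda.continuousAt.tendsto.eventually_lt_const (lt_of_le_of_lt (le_abs_self _) (lt_add_one _))
    filter_upwards [mem_nhdsWithin_of_mem_nhds this, self_mem_nhdsWithin] with t h2 h3
    have h3' : 0 < t := h3
    rw [dslope_of_ne _ h3'.ne', slope_def_field, sub_zero, div_lt_iff₀ h3'] at h2
    linarith
  obtain ⟨η, hη, hLη⟩ := (mem_nhdsGT_iff_exists_Ioo_subset).1 hL
  have hη : 0 < η := hη
  set q := δ/(θ0+δ)/2 with hq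
  have hq0 : 0 < q := by positivity
  set L' := L + |b t0/t0| with hL'
  have hflat := flat_zero hRa (C := Real.exp (L'^2*t0/q) * ν.real T) (κ := q*θ0^2/4) (η := min (min η (q*t0)) t0)
    (by positivity) (by positivity) ?_
  · have hflat2 : ∀ᶠ t in 𝓝[>] (0:ℝ), R t = 0 := mem_nhdsWithin_of_mem_nhds hflat
    have hio : ∀ᶠ t in 𝓝[>] (0:ℝ), t ∈ Ioo 0 t0 := Ioo_mem_nhdsGT ht0
    obtain ⟨t, hR0, ht⟩ := (hflat2.and hio).exists
    obtain ⟨hi, he⟩ := hsplit t ht.1 ht.2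
    rw [hR0] at he
    have := (setIntegral_eq_zero_iff_of_nonneg_ae (Filter.Eventually.of_forall fun θ => (Real.exp_pos _).le) hi).1 he
    by_contra hne
    have hbot : (ae (ν.restrict T)).NeBot := ae_neBot.2 (by rwa [Ne, Measure.restrict_eq_zero])
    obtain ⟨θ, hθ⟩ := this.exists
    exact (Real.exp_pos _).ne' hθ
  · intro t ht htm
    have ht1 : t < η := htm.trans_le ((min_le_left _ _).trans (min_le_left _ _))
    have ht2 : t < q*t0 := htm.trans_le ((min_le_left _ _).trans (min_le_right _ _))
    have ht3 : t < t0 := htm.trans_le (min_le_right _ _)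
    obtain ⟨hi, he⟩ := hsplit t ht ht3
    rw [← he, abs_of_nonneg (integral_nonneg fun θ => (Real.exp_pos _).le)]
    have hbt : b t ≤ b 0 + L * t := hLη ⟨ht, ht1⟩
    have hle : ∀ θ ∈ T, kt b t0 θ t ≤ Real.exp (L'^2*t0/q) * Real.exp (-(q*θ0^2/4/t)) := by
      intro θ hθ
      have hθ : θ0 + δ ≤ θ := hθ
      have hθp : 0 < θ := by linarith
      rw [kt, ← Real.exp_add]
      apply Real.exp_le_exp.2
      have a1 : 2*q*θ ≤ θ - θ0 := by
        have : 2 * q = δ/(θ0+δ) := by rw [hq]; ring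
        rw [this, div_mul_eq_mul_div, div_le_iff₀ (by positivity)]
        nlinarith
      have a2 : θ * (b t/t) ≤ θ * (θ0/(2*t) + L) := by
        refine mul_le_mul_of_nonneg_left ?_ hθp.le
        rw [div_le_iff₀ ht]
        have : (θ0/(2*t) + L) * t = θ0/2 + L * t := by field_simp
        rw [this, hθ0]; linarith
      have a3 : -(θ * (b t0/t0)) ≤ θ * |b t0/t0| := by
        rw [← mul_neg]; exact mul_le_mul_of_nonneg_left (neg_le_abs _) hθp.le
      have a4 : θ^2/2*(1/t0) ≤ θ^2/2*(q/t) := by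
        refine mul_le_mul_of_nonneg_left ?_ (by positivity)
        rw [div_le_div_iff₀ ht0 ht]; linarith
      have a5 : q * θ^2/t ≤ θ * (θ - θ0)/(2*t) := by
        have : q * θ^2/t = θ * (2*q*θ)/(2*t) := by field_simp
        rw [this]; gcongr
      have a6 : θ * L' ≤ q*θ^2/(4*t) + L'^2*t/q := by
        rw [← sub_nonneg]
        have : q*θ^2/(4*t) + L'^2*t/q - θ * L' = (q*θ - 2*t*L')^2/(4*t*q) := by field_simp; ring
        rw [this]; positivity
      have a7 : L'^2*t/q ≤ L'^2*t0/q := by gcongr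
      have a8 : q*θ0^2/4/t ≤ q*θ^2/(4*t) := by
        rw [div_div]; gcongr; linarith
      have a9 : -(θ^2/2)*(1/t-1/t0) + θ*(b t/t - b t0/t0) = -(θ^2/2*(1/t)) + θ^2/2*(1/t0) + θ * (b t/t) + -(θ * (b t0/t0)) := by ring
      have a10 : -(θ^2/2*(1/t)) + θ * (θ0/(2*t) + L) = -(θ * (θ - θ0)/(2*t)) + θ * L := by field_simp; ring
      have a11 : θ^2/2*(q/t) = 2 * (q*θ^2/(4*t)) := by field_simp; ring
      have a12 : q * θ^2/t = 4 * (q*θ^2/(4*t)) := by field_simp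
      have a13 : θ * L' = θ * L + θ * |b t0/t0| := by rw [hL']; ring
      linarith
    calc ∫ θ in T, kt b t0 θ t ∂ν ≤ ∫ θ in T, Real.exp (L'^2*t0/q) * Real.exp (-(q*θ0^2/4/t)) ∂ν :=
          setIntegral_mono_on hi (integrable_const _) hTm hle
      _ = _ := by
          rw [setIntegral_const, smul_eq_mul]; ring

lemma ville {X : Type*} [TopologicalSpace X] [CompactSpace X] [T2Space X] [MeasurableSpace X]
    [BorelSpace X] (T : Set C(X, ℝ)) (hT : Convex ℝ T) (hTne : T.Nonempty) :
    (∃ f ∈ T, ∀ x, f x < 0) ∨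
      ∃ m : Measure X, IsFiniteMeasure m ∧ m ≠ 0 ∧ ∀ f ∈ T, 0 ≤ ∫ x, f x ∂m := by
  by_cases hcase : ∃ f ∈ T, ∀ x, f x < 0
  · exact Or.inl hcase
  right
  set s : Set C(X, ℝ) := {f | ∀ x, f x < 0} with hs
  have hso : IsOpen s := by
    have := ContinuousMap.isOpen_setOfPred_mapsTo (X := X) (Y := ℝ) isCompact_univ (isOpen_Iio (a := (0:ℝ)))
    convert this using 1
    ext f; simp [hs, MapsTo]
  have hsc : Convex ℝ s := by
    intro f hf g hg a b ha hb hab x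
    simp only [ContinuousMap.add_apply, ContinuousMap.smul_apply, smul_eq_mul]
    have h1 := hf x
    have h2 := hg x
    rcases ha.eq_or_lt with h | h
    · subst h; have : b = 1 := by linarith
      subst this; simpa using h2
    · nlinarith [mul_neg_of_pos_of_neg h h1, mul_nonpos_of_nonneg_of_nonpos hb h2.le]
  have hdis : Disjoint s T := by
    rw [Set.disjoint_left]; intro f hf hfT; exact hcase ⟨f, hfT, hf⟩
  obtain ⟨φ, u, h1, h2⟩ := geometric_hahn_banach_open hsc hso hT hdis
  -- φ nonpositive on s
  have hcone : ∀ f ∈ s, ∀ r : ℝ, 0 < r → r • f ∈ s := by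
    intro f hf r hr x
    simp only [ContinuousMap.smul_apply, smul_eq_mul]
    exact mul_neg_of_pos_of_neg hr (hf x)
  have hneg1 : (ContinuousMap.const X (-1:ℝ)) ∈ s := fun x => by simp
  have hu : 0 ≤ u := by
    by_contra hu
    push Not at hu
    set a := φ (ContinuousMap.const X (-1:ℝ)) with ha
    have key : ∀ r : ℝ, 0 < r → r * a < u := by
      intro r hr
      have := h1 _ (hcone _ hneg1 r hr)
      simpa using this
    have h3 := key 1 one_pos
    have ha0 : a < 0 := by linarith
    have := key (u / (2*a)) (div_pos_of_neg_of_neg hu (by linarith))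
    have hane : a ≠ 0 := ha0.ne
    have e : u/(2*a)*a = u/2 := by field_simp
    rw [e] at this; linarith
  have hle : ∀ f ∈ s, φ f ≤ 0 := by
    intro f hf
    by_contra hpos
    push Not at hpos
    have := h1 _ (hcone f hf ((u+1)/φ f) (by positivity))
    rw [map_smul, smul_eq_mul, div_mul_cancel₀ _ hpos.ne'] at this
    linarith
  have hpos : ∀ f : C(X, ℝ), (∀ x, 0 ≤ f x) → 0 ≤ φ f := by
    intro f hf
    by_contra hn
    push Not at hn
    set a := φ (ContinuousMap.const X (-1:ℝ)) with ha
    have key : ∀ r : ℝ, 0 < r → -φ f + r * a ≤ 0 := by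
      intro r hr
      have := hle (-f + r • (ContinuousMap.const X (-1:ℝ))) (fun x => by
        simp; linarith [hf x])
      simpa using this
    have ha0 : a ≤ 0 := hle _ hneg1
    have hd : 0 < 1 - a := by linarith
    have := key (-φ f/(2*(1-a))) (div_pos (by linarith) (by linarith))
    have e : -φ f + -φ f/(2*(1-a)) * a = -φ f * ((2-a)/(2*(1-a))) := by field_simp; ring
    rw [e] at this
    have : 0 < -φ f * ((2-a)/(2*(1-a))) := mul_pos (by linarith) (div_pos (by linarith) (by linarith))
    linarith
  let Λl : CompactlySupportedContinuousMap X ℝ →ₗ[ℝ] ℝ :=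
    { toFun := fun f => φ f.toContinuousMap
      map_add' := fun f g => by
        rw [← map_add]; rfl
      map_smul' := fun r f => by
        simp only [RingHom.id_apply]
        rw [← map_smul]; rfl }
  let Λ : CompactlySupportedContinuousMap X ℝ →ₚ[ℝ] ℝ := PositiveLinearMap.mk₀ Λl (fun f hf => hpos _ (fun x => hf x))
  have hIntg : ∀ f : C(X, ℝ), ∫ x, f x ∂(RealRMK.rieszMeasure Λ) = φ f := by
    intro f
    have := RealRMK.integral_rieszMeasure Λ (CompactlySupportedContinuousMap.continuousMapEquiv f)
    exact this
  have hfin : IsFiniteMeasure (RealRMK.rieszMeasure Λ) := by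
    constructor
    exact isCompact_univ.measure_lt_top
  refine ⟨RealRMK.rieszMeasure Λ, hfin, ?_, ?_⟩
  · intro h0
    have hall : ∀ f : C(X, ℝ), φ f = 0 := by
      intro f; rw [← hIntg, h0]; simp
    have h3 := h1 _ hneg1
    obtain ⟨f, hf⟩ := hTne
    have h4 := h2 f hf
    rw [hall] at h3 h4
    linarith
  · intro f hf
    rw [hIntg]; exact hu.trans (h2 f hf)

lemma contExt {F : ℝ → ℝ} {L : ℝ} (hF : Continuous F) (hL : Tendsto F atTop (𝓝 L)) :
    ContinuousOn (fun τ : ℝ => if τ = 0 then L else F (1/τ)) (Ici 0) := by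
  intro τ hτ
  have hτ : 0 ≤ τ := hτ
  rcases hτ.eq_or_lt with h | h
  · subst h
    have hI : Ici (0:ℝ) = insert 0 (Ioi 0) := by simp
    rw [hI, continuousWithinAt_insert_self]
    unfold ContinuousWithinAt
    simp only [if_true]
    have h1 : Tendsto (fun τ : ℝ => F (1/τ)) (𝓝[>] 0) (𝓝 L) := by
      simp only [one_div]
      exact hL.comp tendsto_inv_nhdsGT_zero
    refine h1.congr' ?_
    filter_upwards [self_mem_nhdsWithin] with x hx
    rw [if_neg (ne_of_gt hx)]
  · apply ContinuousAt.continuousWithinAt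
    have h1 : ContinuousAt (fun τ : ℝ => F (1/τ)) τ := by
      refine hF.continuousAt.comp ?_
      exact continuousAt_const.div continuousAt_id h.ne'
    refine h1.congr ?_
    filter_upwards [Ioi_mem_nhds h] with x hx
    rw [if_neg (ne_of_gt hx)]

/-- transfer of a measure on the compactification -/
lemma transfer {θ0 : ℝ} (hθ0 : 0 < θ0) (m : Measure (Icc (0:ℝ) (1/θ0))) [IsFiniteMeasure m] (hm : m ≠ 0) :
    ∃ (ν : Measure ℝ) (q : ℝ), IsFiniteMeasure ν ∧ ν (Ici θ0)ᶜ = 0 ∧ 0 ≤ q ∧ (ν = 0 → q ≠ 0) ∧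
      ∀ (F : ℝ → ℝ) (L C : ℝ), Continuous F → (∀ θ, θ0 ≤ θ → |F θ| ≤ C) →
        ∫ x : Icc (0:ℝ) (1/θ0), (if (x:ℝ) = 0 then L else F (1/x)) ∂m = q * L + ∫ θ, F θ ∂ν := by
  set Z : Set (Icc (0:ℝ) (1/θ0)) := {x | (x:ℝ) = 0} with hZ
  have hZm : MeasurableSet Z := (measurableSet_singleton (0:ℝ)).preimage measurable_subtype_coe
  have hmeas : Measurable (fun x : Icc (0:ℝ) (1/θ0) => 1/(x:ℝ)) := by fun_prop
  refine ⟨(m.restrict Zᶜ).map (fun x : Icc (0:ℝ) (1/θ0) => 1/(x:ℝ)), m.real Z, inferInstance, ?_, measureReal_nonneg, ?_, ?_⟩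
  · rw [Measure.map_apply hmeas measurableSet_Ici.compl, Measure.restrict_apply (hmeas measurableSet_Ici.compl)]
    convert measure_empty (μ := m)
    ext x
    simp only [mem_inter_iff, mem_preimage, mem_compl_iff, mem_Ici, hZ, mem_ofPred_eq, mem_empty_iff_false, iff_false, not_and, not_not]
    intro h
    by_contra hx
    apply h
    have hx0 : 0 < (x:ℝ) := lt_of_le_of_ne x.2.1 (Ne.symm hx)
    have := x.2.2
    rw [le_div_iff₀ hx0]
    rw [le_div_iff₀ hθ0] at this
    linarith
  · intro h0 hq
    have e1 : m Zᶜ = 0 := by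
      have : (m.restrict Zᶜ).map (fun x : Icc (0:ℝ) (1/θ0) => 1/(x:ℝ)) univ = 0 := by rw [h0]; simp
      rwa [Measure.map_apply hmeas MeasurableSet.univ, preimage_univ, Measure.restrict_apply MeasurableSet.univ, univ_inter] at this
    have e2 : m Z = 0 := by
      rwa [measureReal_eq_zero_iff] at hq
    apply hm
    rw [← Measure.measure_univ_eq_zero, ← union_compl_self Z]
    exact measure_union_null e2 e1
  · intro F L C hF hb
    rw [integral_map hmeas.aemeasurable hF.aestronglyMeasurable]
    have hmf : Measurable (fun x : Icc (0:ℝ) (1/θ0) => (if (x:ℝ) = 0 then L else F (1/x))) := by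
      refine Measurable.ite hZm measurable_const (hF.measurable.comp hmeas)
    have hIntg : Integrable (fun x : Icc (0:ℝ) (1/θ0) => (if (x:ℝ) = 0 then L else F (1/x))) m := by
      refine Integrable.of_bound hmf.aestronglyMeasurable (max |L| C) (Filter.Eventually.of_forall fun x => ?_)
      split_ifs with h
      · exact le_max_left _ _
      · refine (hb _ ?_).trans (le_max_right _ _)
        have hx0 : 0 < (x:ℝ) := lt_of_le_of_ne x.2.1 (Ne.symm h)
        have := x.2.2
        rw [le_div_iff₀ hx0]
        rw [le_div_iff₀ hθ0] at this
        linarith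
    rw [← integral_add_compl hZm hIntg]
    congr 1
    · rw [setIntegral_congr_fun hZm (g := fun _ => L), setIntegral_const, smul_eq_mul]
      intro x hx
      have : (x:ℝ) = 0 := hx
      simp [this]
    · refine setIntegral_congr_fun hZm.compl ?_
      intro x hx
      have : ¬ (x:ℝ) = 0 := hx
      simp only [this, if_false]

section dual
set_option linter.unusedSectionVars false
set_option linter.style.haveILetI false
variable {X : Type*} [TopologicalSpace X] [CompactSpace X] [T2Space X] [SecondCountableTopology X]
  [MeasurableSpace X] [BorelSpace X] {k : ℝ → X → ℝ} {K : ℝ}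

lemma k_cont_left (hk : Continuous (Function.uncurry k)) (x : X) : Continuous (fun θ => k θ x) :=
  hk.comp (by fun_prop : Continuous fun θ : ℝ => (θ, x))

lemma k_cont_right (hk : Continuous (Function.uncurry k)) (θ : ℝ) : Continuous (fun x => k θ x) :=
  hk.comp (by fun_prop : Continuous fun x : X => (θ, x))

lemma k_int_left (hk : Continuous (Function.uncurry k)) (hpos : ∀ θ x, 0 < k θ x)
    (hle : ∀ θ x, k θ x ≤ K) (ν : Measure ℝ) [IsFiniteMeasure ν] (x : X) :
    Integrable (fun θ => k θ x) ν :=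
  Integrable.of_bound (k_cont_left hk x).aestronglyMeasurable K (Filter.Eventually.of_forall fun θ => by
    rw [Real.norm_of_nonneg (hpos θ x).le]; exact hle θ x)

lemma k_int_right (hk : Continuous (Function.uncurry k)) (hpos : ∀ θ x, 0 < k θ x)
    (hle : ∀ θ x, k θ x ≤ K) (lam : Measure X) [IsFiniteMeasure lam] (θ : ℝ) :
    Integrable (fun x => k θ x) lam :=
  Integrable.of_bound (k_cont_right hk θ).aestronglyMeasurable K (Filter.Eventually.of_forall fun x => by
    rw [Real.norm_of_nonneg (hpos θ x).le]; exact hle θ x)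

lemma k_cont_F (hk : Continuous (Function.uncurry k)) (hpos : ∀ θ x, 0 < k θ x)
    (hle : ∀ θ x, k θ x ≤ K) (ν : Measure ℝ) [IsFiniteMeasure ν] :
    Continuous (fun x => ∫ θ, k θ x ∂ν) := by
  refine continuous_of_dominated (bound := fun _ => K) (fun x => (k_cont_left hk x).aestronglyMeasurable) ?_
    (integrable_const _) (Filter.Eventually.of_forall fun θ => k_cont_right hk θ)
  exact fun x => Filter.Eventually.of_forall fun θ => by
    rw [Real.norm_of_nonneg (hpos θ x).le]; exact hle θ x

lemma k_cont_L (hk : Continuous (Function.uncurry k)) (hpos : ∀ θ x, 0 < k θ x)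
    (hle : ∀ θ x, k θ x ≤ K) (lam : Measure X) [IsFiniteMeasure lam] :
    Continuous (fun θ => ∫ x, k θ x ∂lam) := by
  refine continuous_of_dominated (bound := fun _ => K) (fun θ => (k_cont_right hk θ).aestronglyMeasurable) ?_
    (integrable_const _) (Filter.Eventually.of_forall fun x => k_cont_left hk x)
  exact fun θ => Filter.Eventually.of_forall fun x => by
    rw [Real.norm_of_nonneg (hpos θ x).le]; exact hle θ x

lemma k_int_L (hk : Continuous (Function.uncurry k)) (hpos : ∀ θ x, 0 < k θ x)
    (hle : ∀ θ x, k θ x ≤ K) (lam : Measure X) [IsFiniteMeasure lam] (ν : Measure ℝ) [IsFiniteMeasure ν] :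
    Integrable (fun θ => ∫ x, k θ x ∂lam) ν := by
  refine Integrable.of_bound (k_cont_L hk hpos hle lam).aestronglyMeasurable (K * lam.real univ) (Filter.Eventually.of_forall fun θ => ?_)
  refine norm_integral_le_of_norm_le_const (Filter.Eventually.of_forall fun x => ?_)
  rw [Real.norm_of_nonneg (hpos θ x).le]; exact hle θ x

lemma k_int_F (hk : Continuous (Function.uncurry k)) (hpos : ∀ θ x, 0 < k θ x)
    (hle : ∀ θ x, k θ x ≤ K) (lam : Measure X) [IsFiniteMeasure lam] (ν : Measure ℝ) [IsFiniteMeasure ν] :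
    Integrable (fun x => ∫ θ, k θ x ∂ν) lam := by
  refine Integrable.of_bound (k_cont_F hk hpos hle ν).aestronglyMeasurable (K * ν.real univ) (Filter.Eventually.of_forall fun x => ?_)
  refine norm_integral_le_of_norm_le_const (Filter.Eventually.of_forall fun θ => ?_)
  rw [Real.norm_of_nonneg (hpos θ x).le]; exact hle θ x

lemma k_swap (hk : Continuous (Function.uncurry k)) (hpos : ∀ θ x, 0 < k θ x)
    (hle : ∀ θ x, k θ x ≤ K) (lam : Measure X) [IsFiniteMeasure lam] (ν : Measure ℝ) [IsFiniteMeasure ν] :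
    ∫ θ, ∫ x, k θ x ∂lam ∂ν = ∫ x, ∫ θ, k θ x ∂ν ∂lam := by
  refine integral_integral_swap ?_
  refine Integrable.of_bound hk.aestronglyMeasurable K (Filter.Eventually.of_forall fun p => ?_)
  simp only [Function.uncurry]
  rw [Real.norm_of_nonneg (hpos _ _).le]; exact hle _ _

lemma g_int {c θ0 : ℝ} (hc : 0 < c) (hθ0 : 0 < θ0) (ν : Measure ℝ) [IsFiniteMeasure ν]
    (hν : ν (Ici θ0)ᶜ = 0) : Integrable (fun θ => Real.exp (-c*θ)) ν := by
  refine Integrable.of_bound (by fun_prop) 1 ?_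
  have : ∀ᵐ θ ∂ν, θ ∈ Ici θ0 := hν
  filter_upwards [this] with θ hθ
  have hθ : θ0 ≤ θ := hθ
  rw [Real.norm_of_nonneg (Real.exp_pos _).le, Real.exp_le_one_iff]
  nlinarith

lemma pos_int_pos {α : Type*} [MeasurableSpace α] {ν : Measure α} {f : α → ℝ} (hf : ∀ θ, 0 < f θ)
    (hi : Integrable f ν) (hν : ν ≠ 0) : 0 < ∫ θ, f θ ∂ν := by
  rw [integral_pos_iff_support_of_nonneg (fun θ => (hf θ).le) hi]
  have : Function.support f = univ := by ext x; simp [(hf x).ne']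
  rw [this]
  exact pos_iff_ne_zero.2 (by rwa [Ne, Measure.measure_univ_eq_zero])

/-- relaxed admissibility -/
def RAdm (k : ℝ → X → ℝ) (θ0 : ℝ) (ν : Measure ℝ) : Prop :=
  IsFiniteMeasure ν ∧ ν (Ici θ0)ᶜ = 0 ∧ ∀ x, ∫ θ, k θ x ∂ν ≤ 1

lemma weak_dual (hk : Continuous (Function.uncurry k)) (hpos : ∀ θ x, 0 < k θ x)
    (hle : ∀ θ x, k θ x ≤ K) {c θ0 : ℝ} (hc : 0 < c) (hθ0 : 0 < θ0)
    (lam : Measure X) [IsFiniteMeasure lam] (hl : ∀ θ, θ0 ≤ θ → Real.exp (-c*θ) ≤ ∫ x, k θ x ∂lam)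
    {ν : Measure ℝ} (hν : RAdm k θ0 ν) : ∫ θ, Real.exp (-c*θ) ∂ν ≤ lam.real univ := by
  obtain ⟨h1, h2, h3⟩ := hν
  have hae : ∀ᵐ θ ∂ν, θ ∈ Ici θ0 := h2
  calc ∫ θ, Real.exp (-c*θ) ∂ν ≤ ∫ θ, ∫ x, k θ x ∂lam ∂ν :=
        integral_mono_ae (g_int hc hθ0 ν h2) (k_int_L hk hpos hle lam ν) (by
          filter_upwards [hae] with θ hθ using hl θ hθ)
    _ = ∫ x, ∫ θ, k θ x ∂ν ∂lam := k_swap hk hpos hle lam ν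
    _ ≤ ∫ x, (1:ℝ) ∂lam := integral_mono (k_int_F hk hpos hle lam ν) (integrable_const _) h3
    _ = lam.real univ := by simp

lemma int_nnsmul {α : Type*} [MeasurableSpace α] (μ : Measure α) (f : α → ℝ) (r : ℝ) (hr : 0 ≤ r) :
    ∫ x, f x ∂(ENNReal.ofReal r • μ) = r * ∫ x, f x ∂μ := by
  rw [integral_smul_measure, ENNReal.toReal_ofReal hr, smul_eq_mul]

lemma smul_fin {α : Type*} [MeasurableSpace α] (μ : Measure α) [IsFiniteMeasure μ] (r : ℝ) :
    IsFiniteMeasure (ENNReal.ofReal r • μ) := by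
  exact μ.smul_finite ENNReal.ofReal_ne_top

lemma smul_null {α : Type*} [MeasurableSpace α] {μ : Measure α} {S : Set α} (h : μ S = 0) (r : ℝ) :
    (ENNReal.ofReal r • μ) S = 0 := by
  rw [Measure.smul_apply, h, smul_zero]

theorem duality [Nonempty X] (xs : X) (hk : Continuous (Function.uncurry k)) (hpos : ∀ θ x, 0 < k θ x)
    (hle : ∀ θ x, k θ x ≤ K) (hk1 : ∀ θ, k θ xs = 1)
    (hlim : ∀ x, x ≠ xs → Tendsto (fun θ => k θ x) atTop (𝓝 0))
    {c θ0 : ℝ} (hc : 0 < c) (hθ0 : 0 < θ0) :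
    ∃ (d : ℝ) (lam : Measure X) (ν : Measure ℝ), 0 < d ∧ IsFiniteMeasure lam ∧ lam.real univ = d ∧
      (∀ θ, θ0 ≤ θ → Real.exp (-c*θ) ≤ ∫ x, k θ x ∂lam) ∧ RAdm k θ0 ν ∧
      ∫ θ, Real.exp (-c*θ) ∂ν = d ∧
      (∀ᵐ θ ∂ν, ∫ x, k θ x ∂lam = Real.exp (-c*θ)) ∧ (∀ᵐ x ∂lam, ∫ θ, k θ x ∂ν = 1) := by
  set V : Set ℝ := {G | ∃ ν, RAdm k θ0 ν ∧ G = ∫ θ, Real.exp (-c*θ) ∂ν} with hV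
  have hK1 : 1 ≤ K := by rw [← hk1 0]; exact hle 0 xs
  have hVb : BddAbove V := by
    refine ⟨1, ?_⟩
    rintro G ⟨ν, hν, rfl⟩
    have := weak_dual hk hpos hle hc hθ0 (Measure.dirac xs) (fun θ hθ => by
      rw [integral_dirac, hk1, Real.exp_le_one_iff]; nlinarith) hν
    simpa using this
  have hV0 : ∃ G ∈ V, 0 < G := by
    haveI := smul_fin (Measure.dirac θ0) (1/K)
    refine ⟨_, ⟨ENNReal.ofReal (1/K) • Measure.dirac θ0, ⟨this, ?_, ?_⟩, rfl⟩, ?_⟩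
    · simp
    · intro x
      rw [int_nnsmul _ _ _ (by positivity), integral_dirac, div_mul_eq_mul_div, one_mul, div_le_one (by linarith)]
      exact hle _ _
    · rw [int_nnsmul _ _ _ (by positivity), integral_dirac]
      positivity
  obtain ⟨G0, hG0, hG0p⟩ := hV0
  set d := sSup V with hd
  have hdV : ∀ ν, RAdm k θ0 ν → ∫ θ, Real.exp (-c*θ) ∂ν ≤ d := fun ν hν => le_csSup hVb ⟨ν, hν, rfl⟩
  have hd0 : 0 < d := lt_of_lt_of_le hG0p (le_csSup hVb hG0)
  -- primal
  obtain ⟨lam, hlf, hlm, hlfe⟩ : ∃ lam : Measure X, IsFiniteMeasure lam ∧ lam.real univ = d ∧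
      (∀ θ, θ0 ≤ θ → Real.exp (-c*θ) ≤ ∫ x, k θ x ∂lam) := by
    set T : Set C(X, ℝ) := {f | ∃ ν : Measure ℝ, IsFiniteMeasure ν ∧ ν (Ici θ0)ᶜ = 0 ∧
      ∀ x, f x = ∫ θ, k θ x ∂ν - (1/d) * ∫ θ, Real.exp (-c*θ) ∂ν} with hT
    have hTd : ∀ θ, θ0 ≤ θ → (⟨fun x => k θ x - (1/d) * Real.exp (-c*θ),
        (k_cont_right hk θ).sub continuous_const⟩ : C(X, ℝ)) ∈ T := by
      intro θ hθ
      refine ⟨Measure.dirac θ, inferInstance, ?_, ?_⟩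
      · simp [hθ]
      · intro x; simp
    have hTc : Convex ℝ T := by
      rintro f ⟨ν1, a1, a2, a3⟩ g ⟨ν2, b1, b2, b3⟩ a b ha hb -
      haveI := smul_fin ν1 a
      haveI := smul_fin ν2 b
      refine ⟨ENNReal.ofReal a • ν1 + ENNReal.ofReal b • ν2, inferInstance, by rw [Measure.add_apply, smul_null a2, smul_null b2, add_zero], fun x => ?_⟩
      rw [integral_add_measure (k_int_left hk hpos hle _ x) (k_int_left hk hpos hle _ x),
        integral_add_measure (g_int hc hθ0 _ (smul_null a2 _)) (g_int hc hθ0 _ (smul_null b2 _)),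
        int_nnsmul _ _ _ ha, int_nnsmul _ _ _ hb, int_nnsmul _ _ _ ha, int_nnsmul _ _ _ hb]
      simp only [ContinuousMap.add_apply, ContinuousMap.smul_apply, smul_eq_mul, a3, b3]
      ring
    rcases ville T hTc ⟨_, hTd θ0 le_rfl⟩ with ⟨f, ⟨ν, h1, h2, h3⟩, hf⟩ | ⟨m, hm1, hm2, hm3⟩
    · exfalso
      obtain ⟨xm, -, hxm⟩ := isCompact_univ.exists_isMaxOn (univ_nonempty (α := X)) f.continuous.continuousOn
      have hxm : ∀ x, f x ≤ f xm := fun x => hxm (mem_univ x)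
      by_cases hν : ν = 0
      · subst hν
        have := hf xm
        rw [h3] at this; simp at this
      · set P := ∫ θ, k θ xm ∂ν with hP
        have hP0 : 0 < P := pos_int_pos (fun θ => hpos θ xm) (k_int_left hk hpos hle ν xm) hν
        have hf1 := hf xm
        rw [h3] at hf1
        haveI := smul_fin ν (1/P)
        have := hdV (ENNReal.ofReal (1/P) • ν) ⟨this, smul_null h2 _, fun x => by
          rw [int_nnsmul _ _ _ (by positivity), div_mul_eq_mul_div, one_mul, div_le_one hP0]
          have := hxm x
          rw [h3, h3] at this; linarith⟩
        rw [int_nnsmul _ _ _ (by positivity), div_mul_eq_mul_div, one_mul, div_le_iff₀ hP0] at this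
        have h5 : P < (1/d) * ∫ θ, Real.exp (-c*θ) ∂ν := by linarith
        rw [div_mul_eq_mul_div, one_mul, lt_div_iff₀ hd0] at h5
        linarith
    · have hmp : 0 < m.real univ := by
        rw [measureReal_def, ENNReal.toReal_pos_iff]
        exact ⟨pos_iff_ne_zero.2 (by rwa [Ne, Measure.measure_univ_eq_zero]), measure_lt_top _ _⟩
      refine ⟨ENNReal.ofReal (d/m.real univ) • m, smul_fin _ _, ?_, ?_⟩
      · rw [measureReal_ennreal_smul_apply, ENNReal.toReal_ofReal (by positivity)]
        field_simp
      · intro θ hθ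
        have := hm3 _ (hTd θ hθ)
        simp only [ContinuousMap.coe_mk] at this
        rw [integral_sub (k_int_right hk hpos hle m θ) (integrable_const _), integral_const, smul_eq_mul] at this
        rw [int_nnsmul _ _ _ (by positivity), div_mul_eq_mul_div, le_div_iff₀ hmp]
        have h6 : d * (m.real univ * (1/d * Real.exp (-c*θ))) = Real.exp (-c*θ) * m.real univ := by field_simp
        nlinarith
  -- dual
  obtain ⟨ν, hν, hνd⟩ : ∃ ν, RAdm k θ0 ν ∧ ∫ θ, Real.exp (-c*θ) ∂ν = d := by
    classical
    let Lx : X → ℝ := fun x => if x = xs then 1 else 0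
    have hlimx : ∀ x, Tendsto (fun θ => k θ x) atTop (𝓝 (Lx x)) := by
      intro x
      by_cases hx : x = xs
      · simp only [Lx, hx, if_true, hk1]; exact tendsto_const_nhds
      · simp only [Lx, hx, if_false]; exact hlim x hx
    have hglim : Tendsto (fun θ => Real.exp (-c*θ)) atTop (𝓝 0) := by
      refine Real.tendsto_exp_atBot.comp ?_
      exact tendsto_id.const_mul_atTop_of_neg (by linarith)
    let Y := Icc (0:ℝ) (1/θ0)
    have hy : ∀ y : Y, (y:ℝ) ≠ 0 → θ0 ≤ 1/(y:ℝ) := by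
      intro x h
      have hx0 : 0 < (x:ℝ) := lt_of_le_of_ne x.2.1 (Ne.symm h)
      have := x.2.2
      rw [le_div_iff₀ hx0]
      rw [le_div_iff₀ hθ0] at this
      linarith
    let hfun : X → Y → ℝ := fun x y => if (y:ℝ) = 0 then (0 - d * Lx x) else
      (fun θ => Real.exp (-c*θ) - d * k θ x) (1/(y:ℝ))
    have hFc : ∀ x, Continuous (fun θ => Real.exp (-c*θ) - d * k θ x) := fun x =>
      (by fun_prop : Continuous fun θ => Real.exp (-c*θ)).sub ((k_cont_left hk x).const_mul d)
    have hcont : ∀ x, Continuous (hfun x) := by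
      intro x
      have := contExt (hFc x) (hglim.sub ((hlimx x).const_mul d))
      exact (this.mono (fun y hy => hy.1 : Icc 0 (1/θ0) ⊆ Ici 0)).domRestrict
    set T : Set C(Y, ℝ) := {f | ∃ lam : Measure X, IsFiniteMeasure lam ∧
      ∀ y : Y, (y:ℝ) ≠ 0 → f y = lam.real univ * Real.exp (-c*(1/(y:ℝ))) - d * ∫ x, k (1/(y:ℝ)) x ∂lam} with hT
    have hTd : ∀ x, (⟨hfun x, hcont x⟩ : C(Y, ℝ)) ∈ T := by
      intro x
      refine ⟨Measure.dirac x, inferInstance, fun y hy => ?_⟩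
      simp [hfun, hy]
    haveI : Nonempty Y := ⟨⟨1/θ0, ⟨by positivity, le_rfl⟩⟩⟩
    have hTc : Convex ℝ T := by
      rintro f ⟨ν1, a1, a3⟩ g ⟨ν2, b1, b3⟩ a b ha hb -
      haveI := smul_fin ν1 a
      haveI := smul_fin ν2 b
      refine ⟨ENNReal.ofReal a • ν1 + ENNReal.ofReal b • ν2, inferInstance, fun y hy => ?_⟩
      rw [integral_add_measure (k_int_right hk hpos hle _ _) (k_int_right hk hpos hle _ _),
        measureReal_add_apply, measureReal_ennreal_smul_apply, measureReal_ennreal_smul_apply,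
        ENNReal.toReal_ofReal ha, ENNReal.toReal_ofReal hb, int_nnsmul _ _ _ ha, int_nnsmul _ _ _ hb]
      simp only [ContinuousMap.add_apply, ContinuousMap.smul_apply, smul_eq_mul, a3 y hy, b3 y hy]
      ring
    rcases ville T hTc ⟨_, hTd xs⟩ with ⟨f, ⟨l2, h1, h2⟩, hf⟩ | ⟨m, hm1, hm2, hm3⟩
    · exfalso
      obtain ⟨ym, -, hym⟩ := isCompact_univ.exists_isMaxOn (univ_nonempty (α := Y)) f.continuous.continuousOn
      have hym : ∀ x, f x ≤ f ym := fun x => hym (mem_univ x)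
      set M := -f ym with hM
      have hM0 : 0 < M := by have := hf ym; linarith
      set p := l2.real univ with hp
      have hp0 : 0 ≤ p := measureReal_nonneg
      haveI := smul_fin l2 (d/(p+M))
      have hfe : ∀ θ, θ0 ≤ θ → Real.exp (-c*θ) ≤ ∫ x, k θ x ∂(ENNReal.ofReal (d/(p+M)) • l2) := by
        intro θ hθ
        have hθp : 0 < θ := by linarith
        rw [int_nnsmul _ _ _ (by positivity), div_mul_eq_mul_div, le_div_iff₀ (by positivity)]
        let y : Y := ⟨1/θ, ⟨by positivity, one_div_le_one_div_of_le hθ0 hθ⟩⟩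
        have h3 := h2 y (by simp only [y]; positivity)
        have h4 := hym y
        have e : 1/(y:ℝ) = θ := by simp [y]
        rw [e] at h3
        have h5 : Real.exp (-c*θ) ≤ 1 := by rw [Real.exp_le_one_iff]; nlinarith
        nlinarith
      have hw : d ≤ (ENNReal.ofReal (d/(p+M)) • l2).real univ := by
        refine csSup_le ⟨G0, hG0⟩ ?_
        rintro G ⟨ν, hν, rfl⟩
        exact weak_dual hk hpos hle hc hθ0 _ hfe hν
      rw [measureReal_ennreal_smul_apply, ENNReal.toReal_ofReal (by positivity), div_mul_eq_mul_div,
        le_div_iff₀ (by positivity)] at hw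
      nlinarith
    · obtain ⟨ν, q, hν1, hν2, hq, hνq, hνi⟩ := transfer hθ0 m hm2
      have key : ∀ x, d * ∫ θ, k θ x ∂ν + d * (q * Lx x) ≤ ∫ θ, Real.exp (-c*θ) ∂ν := by
        intro x
        have h1 := hm3 _ (hTd x)
        simp only [ContinuousMap.coe_mk] at h1
        have h2 := hνi (fun θ => Real.exp (-c*θ) - d * k θ x) (0 - d * Lx x) (1 + d * K) (hFc x) (by
          intro θ hθ
          have h5 : Real.exp (-c*θ) ≤ 1 := by rw [Real.exp_le_one_iff]; nlinarith
          have h6 := Real.exp_pos (-c*θ)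
          have h7 : d * k θ x ≤ d * K := by gcongr; exact hle θ x
          have h8 : 0 < d * k θ x := mul_pos hd0 (hpos θ x)
          rw [abs_le]; constructor <;> linarith)
        rw [integral_sub (g_int hc hθ0 ν hν2) ((k_int_left hk hpos hle ν x).const_mul d), integral_const_mul] at h2
        have h3 : (0:ℝ) ≤ q * (0 - d * Lx x) + (∫ θ, Real.exp (-c*θ) ∂ν - d * ∫ θ, k θ x ∂ν) := by
          rw [← h2]; exact h1
        linarith
      have hν0 : ν ≠ 0 := by
        intro h0
        have := key xs
        have hLxs : Lx xs = 1 := by simp [Lx]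
        rw [h0, hLxs] at this
        simp at this
        have hqp : 0 < q := lt_of_le_of_ne hq (Ne.symm (hνq h0))
        nlinarith [mul_pos hd0 hqp]
      set G := ∫ θ, Real.exp (-c*θ) ∂ν with hG
      have hGp : 0 < G := pos_int_pos (fun θ => Real.exp_pos _) (g_int hc hθ0 ν hν2) hν0
      refine ⟨ENNReal.ofReal (d/G) • ν, ⟨smul_fin _ _, smul_null hν2 _, fun x => ?_⟩, ?_⟩
      · rw [int_nnsmul _ _ _ (by positivity), div_mul_eq_mul_div, div_le_one hGp]
        have h1 := key x
        have h2 : 0 ≤ Lx x := by simp only [Lx]; split_ifs <;> norm_num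
        have : 0 ≤ d * (q * Lx x) := by positivity
        linarith
      · rw [int_nnsmul _ _ _ (by positivity), ← hG]; exact div_mul_cancel₀ _ hGp.ne'
  haveI := hν.1
  have hae : ∀ᵐ θ ∂ν, θ ∈ Ici θ0 := hν.2.1
  have i1 := g_int hc hθ0 ν hν.2.1
  have i2 := k_int_L hk hpos hle lam ν
  have i3 := k_int_F hk hpos hle lam ν
  have s1 : ∫ θ, Real.exp (-c*θ) ∂ν ≤ ∫ θ, ∫ x, k θ x ∂lam ∂ν :=
    integral_mono_ae i1 i2 (by filter_upwards [hae] with θ hθ using hlfe θ hθ)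
  have s2 := k_swap hk hpos hle lam ν
  have s3 : ∫ x, ∫ θ, k θ x ∂ν ∂lam ≤ ∫ x, (1:ℝ) ∂lam := integral_mono i3 (integrable_const _) hν.2.2
  have s4 : ∫ x, (1:ℝ) ∂lam = d := by simp [hlm]
  refine ⟨d, lam, ν, hd0, hlf, hlm, hlfe, hν, hνd, ?_, ?_⟩
  · have := (integral_eq_iff_of_ae_le i1 i2 (by filter_upwards [hae] with θ hθ using hlfe θ hθ)).1 (by linarith)
    filter_upwards [this] with θ hθ using hθ.symm
  · exact (integral_eq_iff_of_ae_le i3 (integrable_const _) (Filter.Eventually.of_forall hν.2.2)).1 (by linarith)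

end dual

lemma weak_dual_enn {b : ℝ → ℝ} {t0 x0 ε : ℝ} (hε : ε ≤ t0) (hbc : ContinuousOn b (Icc ε t0))
    {μ lam : Measure ℝ} (hμ : D1epsAdm b t0 ε μ) (hl : P1epsAdm b t0 x0 ε lam) :
    ∫⁻ θ, ENNReal.ofReal (rTheta θ t0 x0) ∂μ ≤ lam (Icc ε t0) := by
  obtain ⟨hμ1, hμ2, hμ3⟩ := hμ
  obtain ⟨hl1, hl2, hl3⟩ := hl
  set bt : ℝ → ℝ := fun t => b (max ε (min t t0)) with hbt
  have hbtc : Continuous bt := hbc.comp_continuous (by fun_prop) (fun t =>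
    ⟨le_max_left _ _, max_le hε (min_le_right _ _)⟩)
  have hbte : ∀ t ∈ Icc ε t0, bt t = b t := by
    intro t ht
    simp [hbt, min_eq_left ht.2, max_eq_right ht.1]
  have haeμ : ∀ᵐ θ ∂μ, θ ∈ Ici (2 * b 0) := hμ2
  have hael : ∀ᵐ t ∂lam, t ∈ Icc ε t0 := hl2
  have hm : Measurable (Function.uncurry fun θ t : ℝ => ENNReal.ofReal (rTheta θ t (bt t))) := by
    have := hbtc.measurable
    unfold rTheta Function.uncurry
    fun_prop
  calc ∫⁻ θ, ENNReal.ofReal (rTheta θ t0 x0) ∂μ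
      ≤ ∫⁻ θ, ∫⁻ t, ENNReal.ofReal (rTheta θ t (bt t)) ∂lam ∂μ := by
        refine lintegral_mono_ae ?_
        filter_upwards [haeμ] with θ hθ
        refine (hl3 θ hθ).trans (le_of_eq (lintegral_congr_ae ?_))
        filter_upwards [hael] with t ht
        rw [hbte t ht]
    _ = ∫⁻ t, ∫⁻ θ, ENNReal.ofReal (rTheta θ t (bt t)) ∂μ ∂lam :=
        lintegral_lintegral_swap hm.aemeasurable
    _ ≤ ∫⁻ t, 1 ∂lam := by
        refine lintegral_mono_ae ?_
        filter_upwards [hael] with t ht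
        rw [hbte t ht]
        exact hμ3 t ht
    _ = lam univ := by simp
    _ = lam (Icc ε t0) := by
        refine (measure_eq_measure_of_null_sdiff (subset_univ _) ?_).symm
        rwa [← compl_eq_univ_sdiff]

lemma alpha_facts {b : ℝ → ℝ} (hba : AnalyticOnNhd ℝ b (Ici 0)) {t0 : ℝ} (ht0 : 0 < t0) :
    ∃ α : ℝ → ℝ, AnalyticOnNhd ℝ α (Ici 0) ∧ α 0 = 0 ∧
      ∀ t, 0 < t → α (1/t - 1/t0) = b t/t - b t0/t0 := by
  refine ⟨fun s => b (1/t0 + s)⁻¹ * (1/t0 + s) - b t0/t0, ?_, ?_, ?_⟩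
  · intro s hs
    have hs : 0 ≤ s := hs
    have hp : 0 < 1/t0 + s := by positivity
    have h1 : AnalyticAt ℝ (fun s : ℝ => 1/t0 + s) s := by fun_prop
    have h2 := h1.inv hp.ne'
    have h3 : AnalyticAt ℝ b ((fun s : ℝ => 1/t0 + s)⁻¹ s) := hba _ (mem_Ici.2 (by simp only [Pi.inv_apply]; positivity))
    have h4 := h3.comp h2
    exact (h4.mul h1).sub analyticAt_const
  · simp; field_simp; simp
  · intro t ht
    have : 1/t0 + (1/t - 1/t0) = 1/t := by ring
    have e : (1/t0 + (1/t - 1/t0))⁻¹ = t := by rw [this, one_div, inv_inv]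
    simp only [e]
    rw [this]; ring

lemma alpha_lip {α : ℝ → ℝ} (h : AnalyticOnNhd ℝ α (Ici 0)) (h0 : α 0 = 0) (S : ℝ) :
    ∃ A, 0 ≤ A ∧ ∀ s, 0 ≤ s → s ≤ S → |α s| ≤ A * s := by
  have hsub : Icc 0 S ⊆ Ici (0:ℝ) := fun s hs => hs.1
  have hdc : ContinuousOn (deriv α) (Icc 0 S) := (h.deriv.continuousOn).mono hsub
  obtain ⟨C, hC⟩ := isCompact_Icc.exists_bound_of_continuousOn hdc
  refine ⟨max C 0, le_max_right _ _, fun s h1 h2 => ?_⟩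
  have := Convex.norm_image_sub_le_of_norm_deriv_le (f := α) (s := Icc 0 S) (C := C)
    (fun x hx => (h x (hsub hx)).differentiableAt) hC (convex_Icc 0 S) (x := 0) (y := s)
    ⟨le_rfl, h1.trans h2⟩ ⟨h1, h2⟩
  rw [h0, sub_zero, sub_zero, Real.norm_eq_abs, Real.norm_of_nonneg h1] at this
  exact this.trans (by gcongr; exact le_max_left _ _)

lemma quad_tendsto {σ β : ℝ} (hσ : 0 < σ) : Tendsto (fun θ : ℝ => Real.exp (-(θ^2/2)*σ + θ*β)) atTop (𝓝 0) := by
  refine Real.tendsto_exp_atBot.comp ?_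
  have : (fun θ : ℝ => -(θ^2/2)*σ + θ*β) = fun θ => θ * (-(σ/2) * θ + β) := by ext θ; ring
  rw [this]
  refine tendsto_id.atTop_mul_atBot₀ ?_
  exact tendsto_atBot_add_const_right _ _ (tendsto_id.const_mul_atTop_of_neg (by linarith))

theorem main_aux (b : ℝ → ℝ)
    (hba : AnalyticOnNhd ℝ b (Set.Ici 0)) (hb0 : 0 < b 0)
    (t0 x0 : ℝ) (ht0 : 0 < t0) (hx0 : x0 < b t0) (ε : ℝ) (hε0 : 0 < ε) (hεt : ε < t0) :
    ∃ (d : ℝ) (lam : Measure (Icc ε t0)) (ν : Measure ℝ), 0 < d ∧ IsFiniteMeasure lam ∧ lam.real univ = d ∧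
      (∀ θ, 2 * b 0 ≤ θ → Real.exp (-((b t0 - x0)/t0)*θ) ≤ ∫ x, kt b t0 θ x ∂lam) ∧
      RAdm (fun θ (x : Icc ε t0) => kt b t0 θ x) (2 * b 0) ν ∧
      ∫ θ, Real.exp (-((b t0 - x0)/t0)*θ) ∂ν = d ∧
      (∃ T, ν (Ioi T) = 0) ∧ (∀ (lam : Measure (Icc ε t0)) (_ : IsFiniteMeasure lam) (θ : ℝ), Integrable (fun x : Icc ε t0 => kt b t0 θ x) lam) ∧
      (∀ (ν : Measure ℝ) (_ : IsFiniteMeasure ν) (x : Icc ε t0), Integrable (fun θ => kt b t0 θ x) ν) := by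
  obtain ⟨α, hα, hα0, hαt⟩ := alpha_facts hba ht0
  set c := (b t0 - x0)/t0 with hc
  have hcp : 0 < c := div_pos (by linarith) ht0
  set θ0 := 2 * b 0 with hθ0
  have hθ0p : 0 < θ0 := by positivity
  set S := 1/ε - 1/t0 with hS
  obtain ⟨A, hA, hAl⟩ := alpha_lip hα hα0 S
  have hpt : ∀ t ∈ Icc ε t0, 0 < t := fun t ht => hε0.trans_le ht.1
  have hσ : ∀ t ∈ Icc ε t0, 0 ≤ 1/t - 1/t0 ∧ 1/t - 1/t0 ≤ S := by
    intro t ht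
    have h1 : 1/t0 ≤ 1/t := one_div_le_one_div_of_le (hpt t ht) ht.2
    have h2 : 1/t ≤ 1/ε := one_div_le_one_div_of_le hε0 ht.1
    constructor <;> linarith
  have hβ : ∀ t ∈ Icc ε t0, |b t/t - b t0/t0| ≤ A * (1/t - 1/t0) := by
    intro t ht
    rw [← hαt t (hpt t ht)]
    exact hAl _ (hσ t ht).1 (hσ t ht).2
  have hbc : ContinuousOn b (Icc ε t0) := hba.continuousOn.mono (fun t ht => (hpt t ht).le)
  have hβc : ContinuousOn (fun t => b t/t - b t0/t0) (Icc ε t0) :=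
    (hbc.div continuousOn_id (fun t ht => (hpt t ht).ne')).sub continuousOn_const
  have hσc : ContinuousOn (fun t : ℝ => 1/t - 1/t0) (Icc ε t0) :=
    (continuousOn_const.div continuousOn_id (fun t ht => (hpt t ht).ne')).sub continuousOn_const
  have hkc : Continuous (Function.uncurry fun θ (x : Icc ε t0) => kt b t0 θ x) := by
    have h1 : Continuous (fun x : Icc ε t0 => b x/x - b t0/t0) := hβc.domRestrict
    have h2 : Continuous (fun x : Icc ε t0 => 1/(x:ℝ) - 1/t0) := hσc.domRestrict
    unfold kt Function.uncurry
    refine Real.continuous_exp.comp ?_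
    exact ((by fun_prop : Continuous fun p : ℝ × Icc ε t0 => -(p.1^2/2)).mul (h2.comp continuous_snd)).add
      (continuous_fst.mul (h1.comp continuous_snd))
  have hkpos : ∀ θ (x : Icc ε t0), 0 < kt b t0 θ x := fun θ x => Real.exp_pos _
  have hkle : ∀ θ (x : Icc ε t0), kt b t0 θ x ≤ Real.exp (A^2*S/2) := by
    intro θ x
    apply Real.exp_le_exp.2
    have h1 := hσ x x.2
    have h2 := hβ x x.2
    set s := 1/(x:ℝ) - 1/t0
    set β := b x/x - b t0/t0
    have h3 : θ * β ≤ |θ| * (A * s) := by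
      calc _ ≤ |θ * β| := le_abs_self _
        _ = |θ| * |β| := abs_mul _ _
        _ ≤ _ := by gcongr
    have h4 : A^2 * s ≤ A^2 * S := by gcongr; exact h1.2
    have h5 : 0 ≤ (|θ| - A)^2 * s := mul_nonneg (sq_nonneg _) h1.1
    have h6 := sq_abs θ
    nlinarith
  have ht0I : t0 ∈ Icc ε t0 := ⟨hεt.le, le_rfl⟩
  obtain ⟨xs, hxs⟩ : ∃ xs : Icc ε t0, (xs:ℝ) = t0 := ⟨⟨t0, ht0I⟩, rfl⟩
  have : Nonempty (Icc ε t0) := ⟨xs⟩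
  have hlt : ∀ x : Icc ε t0, x ≠ xs → 0 < 1/(x:ℝ) - 1/t0 := by
    intro x hx
    have h1 : (x:ℝ) < t0 := lt_of_le_of_ne x.2.2 (fun h => hx (Subtype.ext (h.trans hxs.symm)))
    have := one_div_lt_one_div_of_lt (hpt x x.2) h1
    linarith
  obtain ⟨d, lam, ν, hd, hlf, hlm, hlfe, hν, hνd, hs1, hs2⟩ := duality (k := fun θ (x : Icc ε t0) => kt b t0 θ x)
    xs hkc hkpos hkle (by intro θ; simp [kt, hxs])
    (fun x hx => quad_tendsto (hlt x hx)) hcp hθ0p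
  refine ⟨d, lam, ν, hd, hlf, hlm, hlfe, hν, hνd, ?_, fun lam _ θ => k_int_right hkc hkpos hkle lam θ,
    fun ν _ x => k_int_left hkc hkpos hkle ν x⟩
  have := hν.1
  have hν2 := hν.2.1
  have hkα : ∀ t, 0 < t → ∀ θ, kt b t0 θ t = Real.exp (-(θ^2/2)*(1/t-1/t0) + θ * α (1/t-1/t0)) := by
    intro t ht θ
    rw [hαt t ht]; rfl
  by_cases hfreq : ∃ᶠ s : ℝ in 𝓝[>] 0, ∫ θ, Real.exp (-(θ^2/2)*s + θ * α s) ∂ν = 1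
  · -- case B
    have hF := F_eq_one (ν := ν) (measure_mono_null (fun x hx => by
      simp only [mem_compl_iff, mem_Ici, not_le]; exact lt_trans hx hθ0p) hν2) hα hα0 hfreq
    have h1 : ∀ t, 0 < t → t < t0 → ∫ θ, kt b t0 θ t ∂ν = 1 := by
      intro t ht htt
      have := hF (1/t - 1/t0) (by have := one_div_lt_one_div_of_lt ht htt; linarith)
      simp only [hkα t ht]
      exact this
    have haeR : ∀ᵐ t ∂(lam.map Subtype.val), t ∈ Icc ε t0 := by
      have hms : MeasurableSet {t : ℝ | t ∈ Icc ε t0} := measurableSet_Icc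
      rw [ae_map_iff measurable_subtype_coe.aemeasurable hms]
      exact Filter.Eventually.of_forall fun x => x.2
    have hres : (lam.map Subtype.val).restrict (Icc ε t0) = lam.map Subtype.val :=
      Measure.restrict_eq_self_of_ae_mem haeR
    have hm1 : AEMeasurable (fun t : ℝ => 1/t - 1/t0) (lam.map Subtype.val) := by fun_prop
    have hm2 : AEMeasurable (fun t => b t/t - b t0/t0) (lam.map Subtype.val) := by
      rw [← hres]; exact hβc.aemeasurable measurableSet_Icc
    obtain ⟨δ, hδ, hdisc⟩ := lam_discrete (lam := lam.map Subtype.val) hA hcp hm1 hm2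
      (by filter_upwards [haeR] with t ht using hσ t ht) (by filter_upwards [haeR] with t ht using hβ t ht) θ0
    have hgap : ν (Ioo θ0 (θ0 + δ)) = 0 := by
      refine measure_mono_null ?_ hs1
      intro θ hθ heq
      refine hdisc θ hθ.1 hθ.2 ?_
      rw [(MeasurableEmbedding.subtype_coe measurableSet_Icc).integral_map]
      exact heq
    have := tail_zero (hba 0 (by simp)) hb0 ht0 hδ hν2 hgap h1
    exact ⟨θ0 + δ, measure_mono_null Ioi_subset_Ici_self this⟩
  · -- case A
    rw [not_frequently] at hfreq
    obtain ⟨η, hη, hηs⟩ := (mem_nhdsGT_iff_exists_Ioo_subset).1 hfreq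
    have hη : 0 < η := hη
    have hae : ∀ᵐ x ∂lam, x = xs ∨ η ≤ 1/(x:ℝ) - 1/t0 := by
      filter_upwards [hs2] with x hx
      by_contra hcon
      push Not at hcon
      apply hηs ⟨hlt x hcon.1, hcon.2⟩
      simp only [hkα x (hpt x x.2)] at hx
      exact hx
    have hg0 : Tendsto (fun θ : ℝ => Real.exp (-c*θ)) atTop (𝓝 0) :=
      Real.tendsto_exp_atBot.comp (tendsto_id.const_mul_atTop_of_neg (by linarith))
    have hn0 : lam.real {xs} ≠ 0 := by
      intro h0
      have hz : lam {xs} = 0 := by rwa [measureReal_eq_zero_iff] at h0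
      have hae2 : ∀ᵐ x : Icc ε t0 ∂lam, η ≤ 1/(x:ℝ) - 1/t0 := by
        have : ∀ᵐ x ∂lam, x ≠ xs := by
          rw [ae_iff]; simpa using hz
        filter_upwards [hae, this] with x h1 h2 using h1.resolve_left h2
      have hub : ∀ θ, 0 ≤ θ → ∫ x, kt b t0 θ x ∂lam ≤ d * Real.exp (-(θ^2/2)*η + θ*(A*S)) := by
        intro θ hθ
        have : ∫ x, kt b t0 θ x ∂lam ≤ ∫ x, Real.exp (-(θ^2/2)*η + θ*(A*S)) ∂lam := by
          refine integral_mono_ae (k_int_right hkc hkpos hkle lam θ) (integrable_const _) ?_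
          filter_upwards [hae2] with x hx
          apply Real.exp_le_exp.2
          have h1 : b x/x - b t0/t0 ≤ A * S := (le_abs_self _).trans ((hβ x x.2).trans (by
            gcongr; exact (hσ x x.2).2))
          have h2 : θ * (b x/x - b t0/t0) ≤ θ * (A * S) := by gcongr
          have h3 : θ^2/2 * η ≤ θ^2/2*(1/(x:ℝ) - 1/t0) := by gcongr
          linarith
        rw [integral_const, hlm, smul_eq_mul] at this
        exact this
      have ht := (quad_tendsto (β := A*S + c) hη).const_mul d
      rw [mul_zero] at ht
      obtain ⟨θ, h1, h2⟩ := ((ht.eventually_lt_const one_pos).and (eventually_ge_atTop θ0)).exists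
      have h3 := (hlfe θ h2).trans (hub θ (by linarith))
      have e : Real.exp (-(θ^2/2)*η + θ*(A*S + c)) = Real.exp (-(θ^2/2)*η + θ*(A*S)) * Real.exp (c*θ) := by
        rw [← Real.exp_add]; congr 1; ring
      have e2 : Real.exp (-c*θ) * Real.exp (c*θ) = 1 := by rw [← Real.exp_add]; simp
      rw [e] at h1
      have := mul_le_mul_of_nonneg_right h3 (Real.exp_pos (c*θ)).le
      rw [e2] at this
      linarith
    have hnp : 0 < lam.real {xs} := lt_of_le_of_ne measureReal_nonneg (Ne.symm hn0)
    obtain ⟨T, hT⟩ := eventually_atTop.1 (hg0.eventually_lt_const hnp)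
    refine ⟨T, measure_mono_null ?_ hs1⟩
    intro θ hθ heq
    have h1 := hT θ (le_of_lt hθ)
    have h2 : ∫ x in {xs}, kt b t0 θ x ∂lam ≤ ∫ x, kt b t0 θ x ∂lam :=
      setIntegral_le_integral (k_int_right hkc hkpos hkle lam θ) (Filter.Eventually.of_forall fun x => (hkpos θ x).le)
    rw [integral_singleton] at h2
    have h3 : kt b t0 θ xs = 1 := by simp [kt, hxs]
    simp only [h3, smul_eq_mul, mul_one] at h2
    have heq2 : ∫ x : Icc ε t0, kt b t0 θ x ∂lam = Real.exp (-c*θ) := heq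
    linarith

lemma rTheta_kt {b : ℝ → ℝ} {t0 θ t : ℝ} (ht0 : 0 < t0) (ht : 0 < t) :
    rTheta θ t (b t) = rTheta θ t0 (b t0) * kt b t0 θ t := by
  unfold rTheta kt
  rw [← Real.exp_add]; congr 1; field_simp; ring

lemma rTheta_g {b : ℝ → ℝ} {t0 x0 θ : ℝ} (ht0 : 0 < t0) :
    rTheta θ t0 x0 = rTheta θ t0 (b t0) * Real.exp (-((b t0 - x0)/t0)*θ) := by
  unfold rTheta
  rw [← Real.exp_add]; congr 1; field_simp; ring

lemma rTheta_pos (θ t x : ℝ) : 0 < rTheta θ t x := Real.exp_pos _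

theorem stmt_6 (b : ℝ → ℝ)
    (hba : AnalyticOnNhd ℝ b (Set.Ici 0)) (hbconc : ConcaveOn ℝ (Set.Ici 0) b)
    (hb0 : 0 < b 0) (hbderiv : ∃ d : ℝ, HasDerivWithinAt b d (Set.Ici 0) 0)
    (t0 x0 : ℝ) (ht0 : 0 < t0) (hx0 : x0 < b t0) :
    ∀ ε ∈ Set.Ioo 0 t0,
      (∃ μopt : Measure ℝ, D1epsAdm b t0 ε μopt ∧
        ∀ μ : Measure ℝ, D1epsAdm b t0 ε μ →
          (∫⁻ θ, ENNReal.ofReal (rTheta θ t0 x0) ∂μ)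
            ≤ ∫⁻ θ, ENNReal.ofReal (rTheta θ t0 x0) ∂μopt) ∧
      (∃ lamopt : Measure ℝ, P1epsAdm b t0 x0 ε lamopt ∧
        ∀ lam : Measure ℝ, P1epsAdm b t0 x0 ε lam →
          lamopt (Set.Icc ε t0) ≤ lam (Set.Icc ε t0)) := by
  intro ε hε
  have hεt : ε < t0 := hε.2
  have hε0 : 0 < ε := hε.1
  obtain ⟨d, lam, ν, hd, hlf, hlm, hlfe, hν, hνd, ⟨T, hT⟩, hkr, hkl⟩ :=
    main_aux b hba hb0 t0 x0 ht0 hx0 ε hε0 hεt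
  have hpt : ∀ t ∈ Icc ε t0, 0 < t := fun t ht => hε0.trans_le ht.1
  have hbc : ContinuousOn b (Icc ε t0) := fun t ht =>
    (hba t (hpt t ht).le).continuousAt.continuousWithinAt
  have hcp : 0 < (b t0 - x0)/t0 := div_pos (by linarith) ht0
  obtain ⟨hνf, hν0, hν1⟩ := id hν
  have hgi : Integrable (fun θ => Real.exp (-((b t0 - x0)/t0)*θ)) ν :=
    g_int (θ0 := 2 * b 0) hcp (by linarith) ν hν0
  set w : ℝ → ℝ := fun θ => rTheta θ t0 (b t0) with hw
  have hwp : ∀ θ, 0 < w θ := fun θ => rTheta_pos _ _ _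
  have hwc : Continuous w := by
    simp only [hw, rTheta]; fun_prop
  have hwic : Continuous (fun θ => (w θ)⁻¹) := hwc.inv₀ (fun θ => (hwp θ).ne')
  have hwm : Measurable (fun θ => ENNReal.ofReal ((w θ)⁻¹)) := hwic.measurable.ennreal_ofReal
  set μo : Measure ℝ := ν.withDensity (fun θ => ENNReal.ofReal ((w θ)⁻¹)) with hμo
  set lo : Measure ℝ := lam.map Subtype.val with hlo
  have hme := MeasurableEmbedding.subtype_coe (measurableSet_Icc : MeasurableSet (Icc ε t0))
  have hcalc : ∀ f h : ℝ → ℝ, Measurable f → (∀ θ, f θ = w θ * h θ) →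
      ∫⁻ θ, ENNReal.ofReal (f θ) ∂μo = ∫⁻ θ, ENNReal.ofReal (h θ) ∂ν := by
    intro f h hf hfh
    rw [hμo, lintegral_withDensity_eq_lintegral_mul _ hwm hf.ennreal_ofReal]
    refine lintegral_congr fun θ => ?_
    simp only [Pi.mul_apply]
    rw [← ENNReal.ofReal_mul (inv_nonneg.2 (hwp θ).le), hfh, inv_mul_cancel_left₀ (hwp θ).ne']
  have hval : ∫⁻ θ, ENNReal.ofReal (rTheta θ t0 x0) ∂μo = ENNReal.ofReal d := by
    rw [hcalc _ (fun θ => Real.exp (-((b t0 - x0)/t0)*θ)) (by unfold rTheta; fun_prop)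
      (fun θ => rTheta_g ht0), ← ofReal_integral_eq_lintegral_ofReal hgi
      (Eventually.of_forall fun θ => (Real.exp_pos _).le), hνd]
  have hD : D1epsAdm b t0 ε μo := by
    refine ⟨?_, ?_, ?_⟩
    · obtain ⟨C, hC⟩ := (isCompact_Icc (a := 2 * b 0) (b := T)).bddAbove_image
        hwic.continuousOn
      refine isFiniteMeasure_withDensity (ne_of_lt ?_)
      have hae : ∀ᵐ θ ∂ν, ENNReal.ofReal ((w θ)⁻¹) ≤ ENNReal.ofReal C := by
        have h1 : ∀ᵐ θ ∂ν, θ ∈ Ici (2 * b 0) := hν0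
        have h2 : ∀ᵐ θ ∂ν, θ ∉ Ioi T := measure_eq_zero_iff_ae_notMem.1 hT
        filter_upwards [h1, h2] with θ a1 a2
        exact ENNReal.ofReal_le_ofReal (hC ⟨θ, ⟨a1, not_lt.1 a2⟩, rfl⟩)
      refine (lintegral_mono_ae hae).trans_lt ?_
      rw [lintegral_const]
      exact ENNReal.mul_lt_top ENNReal.ofReal_lt_top (measure_lt_top _ _)
    · exact withDensity_absolutelyContinuous _ _ hν0
    · intro t ht
      unfold rMu
      rw [hcalc _ (fun θ => kt b t0 θ t) (by unfold rTheta; fun_prop)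
        (fun θ => rTheta_kt ht0 (hpt t ht)), ← ofReal_integral_eq_lintegral_ofReal
        (hkl ν hνf ⟨t, ht⟩) (Eventually.of_forall fun θ => (Real.exp_pos _).le)]
      exact ENNReal.ofReal_le_one.2 (hν1 ⟨t, ht⟩)
  have hlval : lo (Icc ε t0) = ENNReal.ofReal d := by
    rw [hlo, hme.map_apply, ← hlm]
    simp
  have hP : P1epsAdm b t0 x0 ε lo := by
    refine ⟨?_, ?_, ?_⟩
    · exact Measure.isFiniteMeasure_map _ _
    · rw [hlo, hme.map_apply]; simp
    · intro θ hθ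
      rw [hlo, hme.lintegral_map]
      have e : ∀ x : Icc ε t0, ENNReal.ofReal (rTheta θ x (b x))
          = ENNReal.ofReal (w θ) * ENNReal.ofReal (kt b t0 θ x) := fun x => by
        rw [rTheta_kt ht0 (hpt x x.2), ENNReal.ofReal_mul (hwp θ).le]
      simp only [e]
      rw [lintegral_const_mul' _ _ ENNReal.ofReal_ne_top, ← ofReal_integral_eq_lintegral_ofReal
        (hkr lam hlf θ) (Eventually.of_forall fun θ => (Real.exp_pos _).le),
        rTheta_g (b := b) ht0, ENNReal.ofReal_mul (hwp θ).le]
      gcongr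
      exact hlfe θ hθ
  refine ⟨⟨μo, hD, fun μ hμ => ?_⟩, ⟨lo, hP, fun l hl => ?_⟩⟩
  · rw [hval, ← hlval]; exact weak_dual_enn hεt.le hbc hμ hP
  · rw [hlval, ← hval]; exact weak_dual_enn hεt.le hbc hD hl
end

section
/- Under Assumption (A), fix ε ∈ (0,t0) and define the dual value function v1 : C(Ω_ε) → (−∞,∞] (extended-real valued) by v1(f) := inf over finite nonnegative Borel measures μ on [2b(0),∞) of sup over finite nonnegative Borel measures λ on Ω_ε of ( ∫ f dλ − λ(Ω_ε) − ∫ g dμ + ∫∫ r_θ(t,b(t)) λ(dt) μ(dθ) ). Let d_{1,ε} := sup{∫ g dμ : μ (D_{1,ε})-admissible} and p_{1,ε} := inf{λ(Ω_ε) : λ (P_{1,ε})-admissible}. Then: (i) v1(0) = −d_{1,ε}; (ii) v1 is convex, i.e. for all f1, f2 ∈ C(Ω_ε) and α ∈ (0,1), v1(α f1 + (1−α) f2) ≤ α·v1(f1) + (1−α)·v1(f2) in the extended reals; (iii) defining, for a finite signed Borel measure λ on Ω_ε, v1*(λ) := sup_{f ∈ C(Ω_ε)} ( ∫ f dλ −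 v1(f) ) and v1**(0) := sup over finite signed Borel measures λ on Ω_ε of ( −v1*(λ) ), one has v1**(0) = −p_{1,ε}. In particular d_{1,ε} ≥ p_{1,ε} fails in at most one direction: −d_{1,ε} ≥ −p_{1,ε}, i.e. d_{1,ε} ≤ p_{1,ε}. -/
open MeasureTheory Set Filter
open scoped ENNReal NNReal Topology

/-- Finite nonnegative Borel measures on `[2b(0), ∞)`. -/
def MuSet (b : ℝ → ℝ) : Set (Measure ℝ) :=
  {μ | IsFiniteMeasure μ ∧ μ (Set.Ici (2 * b 0))ᶜ = 0}

/-- Finite nonnegative Borel measures on `Ω_ε = [ε, t0]`. -/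
def LamSet (ε t0 : ℝ) : Set (Measure ℝ) :=
  {lam | IsFiniteMeasure lam ∧ lam (Set.Icc ε t0)ᶜ = 0}

/-- The inner expression
`∫ f dλ − λ(Ω_ε) − ∫ g dμ + ∫∫ r_θ(t,b(t)) λ(dt) μ(dθ)` as an extended real. -/
noncomputable def L1inner (b : ℝ → ℝ) (t0 x0 ε : ℝ) (f : ℝ → ℝ)
    (lam μ : Measure ℝ) : EReal :=
  ((∫ t, f t ∂lam : ℝ) : EReal)
    - ((lam (Set.Icc ε t0) : ℝ≥0∞) : EReal)
    - (((∫⁻ θ, ENNReal.ofReal (rTheta θ t0 x0) ∂μ) : ℝ≥0∞) : EReal)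
    + (((∫⁻ θ, (∫⁻ t, ENNReal.ofReal (rTheta θ t (b t)) ∂lam) ∂μ) : ℝ≥0∞) : EReal)

/-- The dual value function `v1`. -/
noncomputable def v1 (b : ℝ → ℝ) (t0 x0 ε : ℝ) (f : ℝ → ℝ) : EReal :=
  ⨅ μ ∈ MuSet b, ⨆ lam ∈ LamSet ε t0, L1inner b t0 x0 ε f lam μ

/-- Optimal value `d_{1,ε}` of the restricted program `(D_{1,ε})`, as an extended real. -/
noncomputable def d1eps (b : ℝ → ℝ) (t0 x0 ε : ℝ) : EReal :=
  ⨆ μ ∈ {μ ∈ MuSet b | ∀ t ∈ Set.Icc ε t0, rMu μ t (b t) ≤ 1},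
    (((∫⁻ θ, ENNReal.ofReal (rTheta θ t0 x0) ∂μ) : ℝ≥0∞) : EReal)

/-- Optimal value `p_{1,ε}` of the restricted program `(P_{1,ε})`, as an extended real. -/
noncomputable def p1eps (b : ℝ → ℝ) (t0 x0 ε : ℝ) : EReal :=
  ⨅ lam ∈ {lam ∈ LamSet ε t0 | ∀ θ ∈ Set.Ici (2 * b 0),
      ENNReal.ofReal (rTheta θ t0 x0) ≤ ∫⁻ t, ENNReal.ofReal (rTheta θ t (b t)) ∂lam},
    ((lam (Set.Icc ε t0) : ℝ≥0∞) : EReal)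

/-- Integral of `f` against a finite signed measure, via its Jordan decomposition. -/
noncomputable def intSigned (f : ℝ → ℝ) (s : SignedMeasure ℝ) : ℝ :=
  (∫ t, f t ∂s.toJordanDecomposition.posPart)
    - ∫ t, f t ∂s.toJordanDecomposition.negPart

/-- The convex conjugate `v1*` evaluated at a finite signed measure. -/
noncomputable def v1Star (b : ℝ → ℝ) (t0 x0 ε : ℝ) (s : SignedMeasure ℝ) : EReal :=
  ⨆ f ∈ {f : ℝ → ℝ | ContinuousOn f (Set.Icc ε t0)},
    ((intSigned f s : ℝ) : EReal) - v1 b t0 x0 ε f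

/-- The biconjugate `v1**` evaluated at `0`: the supremum of `−v1*(λ)` over all
finite signed Borel measures `λ` on `Ω_ε`. -/
noncomputable def v1StarStarZero (b : ℝ → ℝ) (t0 x0 ε : ℝ) : EReal :=
  ⨆ s ∈ {s : SignedMeasure ℝ |
      s.toJordanDecomposition.posPart (Set.Icc ε t0)ᶜ = 0 ∧
      s.toJordanDecomposition.negPart (Set.Icc ε t0)ᶜ = 0},
    -(v1Star b t0 x0 ε s)


noncomputable def kk (b : ℝ → ℝ) (t0 ε : ℝ) (θ t : ℝ) : ℝ :=
  rTheta θ (max ε (min t t0)) (b (max ε (min t t0)))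

lemma rTheta_le (θ t x : ℝ) (ht : 0 < t) : rTheta θ t x ≤ Real.exp (x ^ 2 / (2 * t)) := by
  unfold rTheta
  apply Real.exp_le_exp.2
  have : x ^ 2 / (2 * t) - (-θ ^ 2 / (2 * t) + θ * x / t) = (x - θ) ^ 2 / (2 * t) := by
    field_simp
    ring
  have h2 : 0 ≤ (x - θ) ^ 2 / (2 * t) := by positivity
  linarith

lemma kk_pos (b : ℝ → ℝ) (t0 ε θ t : ℝ) : 0 < kk b t0 ε θ t := Real.exp_pos _

lemma kk_eq {b : ℝ → ℝ} {t0 ε t : ℝ} (θ : ℝ) (ht : t ∈ Set.Icc ε t0) :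
    kk b t0 ε θ t = rTheta θ t (b t) := by
  unfold kk
  rw [min_eq_left ht.2, max_eq_right ht.1]

lemma clamp_mem {t0 ε : ℝ} (hε : ε ∈ Set.Ioo 0 t0) (t : ℝ) :
    max ε (min t t0) ∈ Set.Icc ε t0 :=
  ⟨le_max_left _ _, max_le hε.2.le (min_le_right _ _)⟩

lemma kk_cont {b : ℝ → ℝ} {t0 ε : ℝ} (hε : ε ∈ Set.Ioo 0 t0)
    (hb : ContinuousOn b (Set.Icc ε t0)) :
    Continuous (fun p : ℝ × ℝ => kk b t0 ε p.1 p.2) := by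
  have h1 : Continuous (fun t : ℝ => b (max ε (min t t0))) :=
    hb.comp_continuous (by fun_prop) (clamp_mem hε)
  have h2 : ∀ p : ℝ × ℝ, max ε (min p.2 t0) ≠ 0 := fun p =>
    (lt_of_lt_of_le hε.1 (le_max_left _ _)).ne'
  have h3 : Continuous (fun p : ℝ × ℝ => b (max ε (min p.2 t0))) := h1.comp continuous_snd
  unfold kk rTheta
  apply Real.continuous_exp.comp
  apply Continuous.add
  · apply Continuous.div (by fun_prop) (by fun_prop)
    intro p
    exact mul_ne_zero two_ne_zero (h2 p)
  · exact Continuous.div (continuous_fst.mul h3) (by fun_prop) h2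

lemma kk_bdd {b : ℝ → ℝ} {t0 ε : ℝ} (hε : ε ∈ Set.Ioo 0 t0)
    (hb : ContinuousOn b (Set.Icc ε t0)) :
    ∃ C, ∀ θ t, ‖kk b t0 ε θ t‖ ≤ C := by
  have h : ContinuousOn (fun t => Real.exp (b t ^ 2 / (2 * t))) (Set.Icc ε t0) := by
    apply Real.continuous_exp.comp_continuousOn
    apply ContinuousOn.div (hb.pow 2) (by fun_prop)
    intro t ht
    have := lt_of_lt_of_le hε.1 ht.1
    positivity
  obtain ⟨C, hC⟩ := isCompact_Icc.exists_bound_of_continuousOn h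
  refine ⟨C, fun θ t => ?_⟩
  have hm := clamp_mem hε t
  refine le_trans ?_ (hC _ hm)
  rw [Real.norm_of_nonneg (kk_pos ..).le, Real.norm_of_nonneg (Real.exp_pos _).le]
  exact rTheta_le _ _ _ (lt_of_lt_of_le hε.1 hm.1)

lemma kk_int_prod {b : ℝ → ℝ} {t0 ε : ℝ} (hε : ε ∈ Set.Ioo 0 t0)
    (hb : ContinuousOn b (Set.Icc ε t0)) (μ lam : Measure ℝ) [IsFiniteMeasure μ]
    [IsFiniteMeasure lam] :
    Integrable (Function.uncurry fun θ t => kk b t0 ε θ t) (μ.prod lam) := by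
  obtain ⟨C, hC⟩ := kk_bdd hε hb
  exact Integrable.of_bound (kk_cont hε hb).aestronglyMeasurable C
    (Eventually.of_forall fun p => hC p.1 p.2)

lemma kk_int_theta {b : ℝ → ℝ} {t0 ε : ℝ} (hε : ε ∈ Set.Ioo 0 t0)
    (hb : ContinuousOn b (Set.Icc ε t0)) (μ : Measure ℝ) [IsFiniteMeasure μ] (t : ℝ) :
    Integrable (fun θ => kk b t0 ε θ t) μ := by
  obtain ⟨C, hC⟩ := kk_bdd hε hb
  exact Integrable.of_bound ((kk_cont hε hb).comp
    (Continuous.prodMk continuous_id continuous_const)).aestronglyMeasurable C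
    (Eventually.of_forall fun p => hC p t)

lemma kk_cont_t {b : ℝ → ℝ} {t0 ε : ℝ} (hε : ε ∈ Set.Ioo 0 t0)
    (hb : ContinuousOn b (Set.Icc ε t0)) (θ : ℝ) :
    Continuous (fun t => kk b t0 ε θ t) := (kk_cont hε hb).comp
    (Continuous.prodMk continuous_const continuous_id)

lemma kk_int_t {b : ℝ → ℝ} {t0 ε : ℝ} (hε : ε ∈ Set.Ioo 0 t0)
    (hb : ContinuousOn b (Set.Icc ε t0)) (lam : Measure ℝ) [IsFiniteMeasure lam] (θ : ℝ) :
    Integrable (fun t => kk b t0 ε θ t) lam := by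
  obtain ⟨C, hC⟩ := kk_bdd hε hb
  exact Integrable.of_bound (kk_cont_t hε hb θ).aestronglyMeasurable C
    (Eventually.of_forall fun p => hC θ p)

noncomputable def RR (b : ℝ → ℝ) (t0 ε : ℝ) (μ : Measure ℝ) (t : ℝ) : ℝ :=
  ∫ θ, kk b t0 ε θ t ∂μ

noncomputable def GG (t0 x0 : ℝ) (μ : Measure ℝ) : ℝ := ∫ θ, rTheta θ t0 x0 ∂μ

lemma g_int_s7 {t0 : ℝ} (x0 : ℝ) (ht0 : 0 < t0) (μ : Measure ℝ) [IsFiniteMeasure μ] :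
    Integrable (fun θ => rTheta θ t0 x0) μ := by
  refine Integrable.of_bound (C := Real.exp (x0 ^ 2 / (2 * t0)))
    (Continuous.aestronglyMeasurable ?_) (Eventually.of_forall fun θ => ?_)
  · unfold rTheta; fun_prop
  · have h : 0 < rTheta θ t0 x0 := Real.exp_pos _
    rw [Real.norm_of_nonneg h.le]
    exact rTheta_le _ _ _ ht0

lemma g_lint {t0 : ℝ} (x0 : ℝ) (ht0 : 0 < t0) (μ : Measure ℝ) [IsFiniteMeasure μ] :
    (((∫⁻ θ, ENNReal.ofReal (rTheta θ t0 x0) ∂μ) : ℝ≥0∞) : EReal) = (GG t0 x0 μ : EReal) := by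
  have h0 : 0 ≤ GG t0 x0 μ := integral_nonneg fun _ => (Real.exp_pos _).le
  rw [← ofReal_integral_eq_lintegral_ofReal (g_int_s7 x0 ht0 μ)
    (Eventually.of_forall fun _ => (Real.exp_pos _).le)]
  change ((ENNReal.ofReal (GG t0 x0 μ) : ℝ≥0∞) : EReal) = _
  rw [EReal.coe_ennreal_ofReal, max_eq_left h0]

lemma RR_nonneg (b : ℝ → ℝ) (t0 ε : ℝ) (μ : Measure ℝ) (t : ℝ) : 0 ≤ RR b t0 ε μ t :=
  integral_nonneg fun _ => (kk_pos ..).le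

lemma rMu_eq {b : ℝ → ℝ} {t0 ε : ℝ} (hε : ε ∈ Set.Ioo 0 t0)
    (hb : ContinuousOn b (Set.Icc ε t0)) (μ : Measure ℝ) [IsFiniteMeasure μ] {t : ℝ}
    (ht : t ∈ Set.Icc ε t0) : rMu μ t (b t) = ENNReal.ofReal (RR b t0 ε μ t) := by
  unfold rMu RR
  rw [ofReal_integral_eq_lintegral_ofReal (kk_int_theta hε hb μ t)
    (Eventually.of_forall fun _ => (kk_pos ..).le)]
  simp_rw [kk_eq _ ht]

lemma lam_ae {ε t0 : ℝ} {lam : Measure ℝ} (h : lam (Set.Icc ε t0)ᶜ = 0) :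
    ∀ᵐ t ∂lam, t ∈ Set.Icc ε t0 := by
  rw [ae_iff]; exact h

lemma lam_lint {b : ℝ → ℝ} {t0 ε : ℝ} (hε : ε ∈ Set.Ioo 0 t0)
    (hb : ContinuousOn b (Set.Icc ε t0)) (lam : Measure ℝ) [IsFiniteMeasure lam]
    (h : lam (Set.Icc ε t0)ᶜ = 0) (θ : ℝ) :
    ∫⁻ t, ENNReal.ofReal (rTheta θ t (b t)) ∂lam
      = ENNReal.ofReal (∫ t, kk b t0 ε θ t ∂lam) := by
  rw [ofReal_integral_eq_lintegral_ofReal (kk_int_t hε hb lam θ)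
    (Eventually.of_forall fun _ => (kk_pos ..).le)]
  apply lintegral_congr_ae
  filter_upwards [lam_ae h] with t ht
  rw [kk_eq _ ht]

lemma RR_int {b : ℝ → ℝ} {t0 ε : ℝ} (hε : ε ∈ Set.Ioo 0 t0)
    (hb : ContinuousOn b (Set.Icc ε t0)) (μ lam : Measure ℝ) [IsFiniteMeasure μ]
    [IsFiniteMeasure lam] : Integrable (RR b t0 ε μ) lam :=
  (kk_int_prod hε hb μ lam).integral_prod_right

lemma swap_eq {b : ℝ → ℝ} {t0 ε : ℝ} (hε : ε ∈ Set.Ioo 0 t0)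
    (hb : ContinuousOn b (Set.Icc ε t0)) (μ lam : Measure ℝ) [IsFiniteMeasure μ]
    [IsFiniteMeasure lam] : ∫ θ, (∫ t, kk b t0 ε θ t ∂lam) ∂μ = ∫ t, RR b t0 ε μ t ∂lam :=
  integral_integral_swap (kk_int_prod hε hb μ lam)

lemma in_int {b : ℝ → ℝ} {t0 ε : ℝ} (hε : ε ∈ Set.Ioo 0 t0)
    (hb : ContinuousOn b (Set.Icc ε t0)) (μ lam : Measure ℝ) [IsFiniteMeasure μ]
    [IsFiniteMeasure lam] : Integrable (fun θ => ∫ t, kk b t0 ε θ t ∂lam) μ :=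
  (kk_int_prod hε hb μ lam).integral_prod_left

lemma lam_real {ε t0 : ℝ} (lam : Measure ℝ) [IsFiniteMeasure lam]
    (h : lam (Set.Icc ε t0)ᶜ = 0) :
    ((lam (Set.Icc ε t0) : ℝ≥0∞) : EReal) = ((lam.real Set.univ : ℝ) : EReal) := by
  have h2 : lam (Set.Icc ε t0) = lam Set.univ := by
    rw [← measure_add_measure_compl (measurableSet_Icc (a := ε) (b := t0)), h, add_zero]
  rw [h2, ← ofReal_measureReal (μ := lam), EReal.coe_ennreal_ofReal,
    max_eq_left measureReal_nonneg]

lemma L1_eq {b : ℝ → ℝ} {t0 ε : ℝ} (x0 : ℝ) (hε : ε ∈ Set.Ioo 0 t0)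
    (hb : ContinuousOn b (Set.Icc ε t0)) (μ lam : Measure ℝ) [IsFiniteMeasure μ]
    [IsFiniteMeasure lam] (h : lam (Set.Icc ε t0)ᶜ = 0) (f : ℝ → ℝ) :
    L1inner b t0 x0 ε f lam μ = ((∫ t, f t ∂lam - lam.real Set.univ - GG t0 x0 μ
      + ∫ t, RR b t0 ε μ t ∂lam : ℝ) : EReal) := by
  unfold L1inner
  rw [lam_real lam h, g_lint x0 (hε.1.trans hε.2) μ]
  simp_rw [lam_lint hε hb lam h]
  rw [← ofReal_integral_eq_lintegral_ofReal (in_int hε hb μ lam)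
    (Eventually.of_forall fun _ => integral_nonneg fun _ => (kk_pos ..).le),
    swap_eq hε hb, EReal.coe_ennreal_ofReal,
    max_eq_left (integral_nonneg fun _ => RR_nonneg ..)]
  push_cast
  rfl

def Feas (b : ℝ → ℝ) (t0 ε : ℝ) (f : ℝ → ℝ) (μ : Measure ℝ) : Prop :=
  μ ∈ MuSet b ∧ ∀ t ∈ Set.Icc ε t0, RR b t0 ε μ t + f t ≤ 1

lemma f_int {ε t0 : ℝ} {f : ℝ → ℝ} (hf : ContinuousOn f (Set.Icc ε t0)) (lam : Measure ℝ)
    [IsFiniteMeasure lam] (h : lam (Set.Icc ε t0)ᶜ = 0) : Integrable f lam := by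
  have h1 : IntegrableOn f (Set.Icc ε t0) lam := hf.integrableOn_Icc
  have h2 : lam.restrict (Set.Icc ε t0) = lam := Measure.restrict_eq_self_of_ae_mem (lam_ae h)
  rwa [IntegrableOn, h2] at h1

lemma feas_int {b : ℝ → ℝ} {t0 ε : ℝ} (hε : ε ∈ Set.Ioo 0 t0)
    (hb : ContinuousOn b (Set.Icc ε t0)) {f : ℝ → ℝ} (hf : ContinuousOn f (Set.Icc ε t0))
    {μ : Measure ℝ} (hμ : Feas b t0 ε f μ) (lam : Measure ℝ)
    [IsFiniteMeasure lam] (h : lam (Set.Icc ε t0)ᶜ = 0) :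
    ∫ t, f t ∂lam + ∫ t, RR b t0 ε μ t ∂lam ≤ lam.real Set.univ := by
  have := hμ.1.1
  rw [← integral_add (f_int hf lam h) (RR_int hε hb μ lam)]
  calc _ ≤ ∫ t, (1:ℝ) ∂lam := by
        apply integral_mono_ae ((f_int hf lam h).add (RR_int hε hb μ lam)) (integrable_const _)
        filter_upwards [lam_ae h] with t ht
        have := hμ.2 t ht
        rw [Pi.add_apply]
        linarith
    _ = _ := by simp

lemma v1_le {b : ℝ → ℝ} {t0 ε : ℝ} (x0 : ℝ) (hε : ε ∈ Set.Ioo 0 t0)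
    (hb : ContinuousOn b (Set.Icc ε t0)) {f : ℝ → ℝ} (hf : ContinuousOn f (Set.Icc ε t0))
    {μ : Measure ℝ} (hμ : Feas b t0 ε f μ) :
    v1 b t0 x0 ε f ≤ ((-GG t0 x0 μ : ℝ) : EReal) := by
  refine iInf₂_le_of_le μ hμ.1 (iSup₂_le fun lam hlam => ?_)
  have := hμ.1.1
  have := hlam.1
  rw [L1_eq x0 hε hb μ lam hlam.2 f]
  have := feas_int hε hb hf hμ lam hlam.2
  exact EReal.coe_le_coe_iff.2 (by linarith)

lemma le_v1 {b : ℝ → ℝ} {t0 ε : ℝ} (x0 : ℝ) (hε : ε ∈ Set.Ioo 0 t0)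
    (hb : ContinuousOn b (Set.Icc ε t0)) {f : ℝ → ℝ} {x : EReal}
    (hx : ∀ μ, Feas b t0 ε f μ → x ≤ ((-GG t0 x0 μ : ℝ) : EReal)) :
    x ≤ v1 b t0 x0 ε f := by
  refine le_iInf₂ fun μ hμ => ?_
  have := hμ.1
  by_cases hF : Feas b t0 ε f μ
  · refine (hx μ hF).trans (le_iSup₂_of_le 0 ⟨inferInstance, by simp⟩ ?_)
    rw [L1_eq x0 hε hb μ 0 (by simp) f]
    simp
  · have : ∃ t ∈ Set.Icc ε t0, 1 < RR b t0 ε μ t + f t := by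
      by_contra! hh
      exact hF ⟨hμ, hh⟩
    obtain ⟨t, ht, h1⟩ := this
    suffices hT : (⨆ lam ∈ LamSet ε t0, L1inner b t0 x0 ε f lam μ) = ⊤ by
      rw [hT]; exact le_top
    rw [EReal.eq_top_iff_forall_lt]
    intro y
    obtain ⟨n, hn⟩ := exists_nat_gt ((y + GG t0 x0 μ) / (RR b t0 ε μ t + f t - 1))
    rw [div_lt_iff₀ (by linarith)] at hn
    have hl : ((n : ℝ≥0) • Measure.dirac t : Measure ℝ) (Set.Icc ε t0)ᶜ = 0 := by
      simp only [Measure.smul_apply]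
      rw [Measure.dirac_apply' _ measurableSet_Icc.compl]
      simp [ht.1, ht.2]
    refine lt_of_lt_of_le ?_ (le_iSup₂ (f := fun lam _ => L1inner b t0 x0 ε f lam μ)
      ((n : ℝ≥0) • Measure.dirac t) ⟨inferInstance, hl⟩)
    rw [L1_eq x0 hε hb μ _ hl f]
    rw [EReal.coe_lt_coe_iff, integral_smul_nnreal_measure, integral_smul_nnreal_measure,
      integral_dirac, integral_dirac]
    have : (((n : ℝ≥0) • Measure.dirac t : Measure ℝ)).real Set.univ = n := by
      simp [Measure.real]
    rw [this]
    simp only [NNReal.smul_def, NNReal.coe_natCast, smul_eq_mul]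
    linarith

lemma GG_le {b : ℝ → ℝ} {t0 ε x0 : ℝ} (hε : ε ∈ Set.Ioo 0 t0)
    (hb : ContinuousOn b (Set.Icc ε t0)) (hb0 : 0 < b 0) (hx0 : x0 < b t0) {f : ℝ → ℝ}
    {μ : Measure ℝ} (hμ : Feas b t0 ε f μ) : GG t0 x0 μ ≤ 1 - f t0 := by
  have := hμ.1.1
  have ht : t0 ∈ Set.Icc ε t0 := ⟨hε.2.le, le_rfl⟩
  have h0 : 0 < t0 := hε.1.trans hε.2
  have h1 : GG t0 x0 μ ≤ RR b t0 ε μ t0 := by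
    apply integral_mono_ae (g_int_s7 x0 h0 μ) (kk_int_theta hε hb μ t0)
    have hae : ∀ᵐ θ ∂μ, θ ∈ Set.Ici (2 * b 0) := by rw [ae_iff]; exact hμ.1.2
    filter_upwards [hae] with θ hθ
    rw [kk_eq _ ht]
    unfold rTheta
    apply Real.exp_le_exp.2
    have : 0 ≤ θ := le_trans (by positivity) hθ
    gcongr
  linarith [hμ.2 t0 ht]

lemma v1_ne_bot {b : ℝ → ℝ} {t0 ε x0 : ℝ} (hε : ε ∈ Set.Ioo 0 t0)
    (hb : ContinuousOn b (Set.Icc ε t0)) (hb0 : 0 < b 0) (hx0 : x0 < b t0) (f : ℝ → ℝ) :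
    v1 b t0 x0 ε f ≠ ⊥ := by
  have h : ((f t0 - 1 : ℝ) : EReal) ≤ v1 b t0 x0 ε f := by
    apply le_v1 x0 hε hb
    intro μ hμ
    have := GG_le hε hb hb0 hx0 hμ
    exact EReal.coe_le_coe_iff.2 (by linarith)
  intro hh
  rw [hh, le_bot_iff] at h
  exact EReal.coe_ne_bot _ h

lemma adm_iff {b : ℝ → ℝ} {t0 ε : ℝ} (hε : ε ∈ Set.Ioo 0 t0)
    (hb : ContinuousOn b (Set.Icc ε t0)) (μ : Measure ℝ) :
    μ ∈ {μ ∈ MuSet b | ∀ t ∈ Set.Icc ε t0, rMu μ t (b t) ≤ 1} ↔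
      Feas b t0 ε (fun _ => 0) μ := by
  refine and_congr_right fun hμ => forall₂_congr fun t ht => ?_
  have := hμ.1
  rw [rMu_eq hε hb μ ht, ENNReal.ofReal_le_one, add_zero]

lemma part1 {b : ℝ → ℝ} {t0 ε : ℝ} (x0 : ℝ) (hε : ε ∈ Set.Ioo 0 t0)
    (hb : ContinuousOn b (Set.Icc ε t0)) :
    v1 b t0 x0 ε (fun _ => 0) = -(d1eps b t0 x0 ε) := by
  have h0 : 0 < t0 := hε.1.trans hε.2
  apply le_antisymm
  · rw [EReal.le_neg]
    refine iSup₂_le fun μ hμ => ?_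
    rw [adm_iff hε hb] at hμ
    have := hμ.1.1
    rw [g_lint x0 h0, EReal.le_neg, ← EReal.coe_neg]
    exact v1_le x0 hε hb continuousOn_const hμ
  · apply le_v1 x0 hε hb
    intro μ hμ
    have := hμ.1.1
    rw [EReal.coe_neg, EReal.neg_le_neg_iff, ← g_lint x0 h0]
    exact le_iSup₂ (f := fun μ _ => (((∫⁻ θ, ENNReal.ofReal (rTheta θ t0 x0) ∂μ) : ℝ≥0∞) : EReal))
      μ ((adm_iff hε hb μ).2 hμ)

lemma exists_feas {b : ℝ → ℝ} {t0 ε : ℝ} (x0 : ℝ) (hε : ε ∈ Set.Ioo 0 t0)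
    (hb : ContinuousOn b (Set.Icc ε t0)) {f : ℝ → ℝ} {a : ℝ}
    (h : v1 b t0 x0 ε f < (a : EReal)) : ∃ μ, Feas b t0 ε f μ ∧ -GG t0 x0 μ < a := by
  by_contra! hh
  exact absurd (le_v1 x0 hε hb fun μ hμ => EReal.coe_le_coe_iff.2 (hh μ hμ)) h.not_ge

lemma mix {b : ℝ → ℝ} {t0 ε : ℝ} (x0 : ℝ) (hε : ε ∈ Set.Ioo 0 t0)
    (hb : ContinuousOn b (Set.Icc ε t0)) {f1 f2 : ℝ → ℝ} {μ1 μ2 : Measure ℝ}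
    (h1 : Feas b t0 ε f1 μ1) (h2 : Feas b t0 ε f2 μ2) {α : ℝ} (hα : α ∈ Set.Ioo (0 : ℝ) 1) :
    ∃ μ, Feas b t0 ε (fun t => α * f1 t + (1 - α) * f2 t) μ ∧
      GG t0 x0 μ = α * GG t0 x0 μ1 + (1 - α) * GG t0 x0 μ2 := by
  have i1 := h1.1.1
  have i2 := h2.1.1
  have h0 : 0 < t0 := hε.1.trans hε.2
  have ha : ((α.toNNReal : ℝ≥0) : ℝ) = α := Real.coe_toNNReal _ hα.1.le
  have hc : (((1 - α).toNNReal : ℝ≥0) : ℝ) = 1 - α := Real.coe_toNNReal _ (by linarith [hα.2])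
  have key : ∀ φ : ℝ → ℝ, Integrable φ μ1 → Integrable φ μ2 →
      ∫ θ, φ θ ∂(α.toNNReal • μ1 + (1 - α).toNNReal • μ2) =
        α * ∫ θ, φ θ ∂μ1 + (1 - α) * ∫ θ, φ θ ∂μ2 := by
    intro φ hφ1 hφ2
    rw [integral_add_measure (hφ1.smul_measure_nnreal) (hφ2.smul_measure_nnreal),
      integral_smul_nnreal_measure, integral_smul_nnreal_measure]
    simp only [NNReal.smul_def, ha, hc, smul_eq_mul]
  refine ⟨α.toNNReal • μ1 + (1 - α).toNNReal • μ2, ⟨⟨inferInstance, ?_⟩, fun t ht => ?_⟩,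
    key _ (g_int_s7 x0 h0 _) (g_int_s7 x0 h0 _)⟩
  · simp [h1.1.2, h2.1.2, -compl_Ici]
  · unfold RR
    rw [key _ (kk_int_theta hε hb _ t) (kk_int_theta hε hb _ t)]
    have e1 := mul_le_mul_of_nonneg_left (h1.2 t ht) hα.1.le
    have e2 := mul_le_mul_of_nonneg_left (h2.2 t ht) (sub_nonneg.2 hα.2.le)
    unfold RR at e1 e2
    nlinarith

lemma part2 {b : ℝ → ℝ} {t0 ε x0 : ℝ} (hε : ε ∈ Set.Ioo 0 t0)
    (hb : ContinuousOn b (Set.Icc ε t0)) (hb0 : 0 < b 0) (hx0 : x0 < b t0) (f1 f2 : ℝ → ℝ)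
    (hf1 : ContinuousOn f1 (Set.Icc ε t0)) (hf2 : ContinuousOn f2 (Set.Icc ε t0))
    (α : ℝ) (hα : α ∈ Set.Ioo (0 : ℝ) 1) :
    v1 b t0 x0 ε (fun t => α * f1 t + (1 - α) * f2 t)
      ≤ (α : EReal) * v1 b t0 x0 ε f1 + ((1 - α : ℝ) : EReal) * v1 b t0 x0 ε f2 := by
  have n1 := v1_ne_bot hε hb hb0 hx0 f1
  have n2 := v1_ne_bot hε hb hb0 hx0 f2
  have hα' : 0 < 1 - α := by linarith [hα.2]
  have main : ∀ a c : ℝ, v1 b t0 x0 ε f1 < (a : EReal) → v1 b t0 x0 ε f2 < (c : EReal) →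
      v1 b t0 x0 ε (fun t => α * f1 t + (1 - α) * f2 t) ≤ ((α * a + (1 - α) * c : ℝ) : EReal) := by
    intro a c ha hc
    obtain ⟨μ1, m1, l1⟩ := exists_feas x0 hε hb ha
    obtain ⟨μ2, m2, l2⟩ := exists_feas x0 hε hb hc
    obtain ⟨μ, m, l⟩ := mix x0 hε hb m1 m2 hα
    refine (v1_le x0 hε hb (by fun_prop) m).trans (EReal.coe_le_coe_iff.2 ?_)
    rw [l]
    nlinarith [mul_lt_mul_of_pos_left l1 hα.1, mul_lt_mul_of_pos_left l2 hα']
  generalize v1 b t0 x0 ε f1 = u1 at *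
  generalize v1 b t0 x0 ε f2 = u2 at *
  generalize v1 b t0 x0 ε (fun t => α * f1 t + (1 - α) * f2 t) = u at *
  induction u1 with
  | bot => exact absurd rfl n1
  | top =>
    rw [EReal.coe_mul_top_of_pos hα.1, EReal.top_add_of_ne_bot]
    · exact le_top
    · induction u2 with
      | bot => exact absurd rfl n2
      | top => rw [EReal.coe_mul_top_of_pos hα']; simp
      | coe y => rw [← EReal.coe_mul]; exact EReal.coe_ne_bot _
  | coe x =>
    induction u2 with
    | bot => exact absurd rfl n2
    | top =>
      rw [EReal.coe_mul_top_of_pos hα', ← EReal.coe_mul, EReal.add_top_of_ne_bot]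
      · exact le_top
      · exact EReal.coe_ne_bot _
    | coe y =>
      rw [← EReal.coe_mul, ← EReal.coe_mul, ← EReal.coe_add, ← EReal.le_of_forall_lt_iff_le]
      intro z hz
      have hz := EReal.coe_lt_coe_iff.1 hz
      set δ := z - (α * x + (1 - α) * y) with hδ
      have h := main (x + δ) (y + δ) (EReal.coe_lt_coe_iff.2 (by linarith))
        (EReal.coe_lt_coe_iff.2 (by linarith))
      convert h using 2
      linear_combination hδ

lemma weak {b : ℝ → ℝ} {t0 ε : ℝ} (x0 : ℝ) (hε : ε ∈ Set.Ioo 0 t0)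
    (hb : ContinuousOn b (Set.Icc ε t0)) {μ lam : Measure ℝ} (hμ : μ ∈ MuSet b)
    (hl : lam ∈ {lam ∈ LamSet ε t0 | ∀ θ ∈ Set.Ici (2 * b 0),
      ENNReal.ofReal (rTheta θ t0 x0) ≤ ∫⁻ t, ENNReal.ofReal (rTheta θ t (b t)) ∂lam}) :
    GG t0 x0 μ ≤ ∫ t, RR b t0 ε μ t ∂lam := by
  have := hμ.1
  have := hl.1.1
  rw [← swap_eq hε hb]
  apply integral_mono_ae (g_int_s7 x0 (hε.1.trans hε.2) μ) (in_int hε hb μ lam)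
  have hae : ∀ᵐ θ ∂μ, θ ∈ Set.Ici (2 * b 0) := by rw [ae_iff]; exact hμ.2
  filter_upwards [hae] with θ hθ
  have h := hl.2 θ hθ
  rw [lam_lint hε hb lam hl.1.2,
    ENNReal.ofReal_le_ofReal_iff (integral_nonneg fun _ => (kk_pos ..).le)] at h
  exact h

lemma part4 {b : ℝ → ℝ} {t0 ε : ℝ} (x0 : ℝ) (hε : ε ∈ Set.Ioo 0 t0)
    (hb : ContinuousOn b (Set.Icc ε t0)) : d1eps b t0 x0 ε ≤ p1eps b t0 x0 ε := by
  refine iSup₂_le fun μ hμ => le_iInf₂ fun lam hl => ?_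
  rw [adm_iff hε hb] at hμ
  have := hμ.1.1
  have := hl.1.1
  rw [g_lint x0 (hε.1.trans hε.2), lam_real lam hl.1.2, EReal.coe_le_coe_iff]
  have h1 := weak x0 hε hb hμ.1 hl
  have h2 := feas_int hε hb continuousOn_const hμ lam hl.1.2
  simp only [integral_zero, zero_add] at h2
  linarith

lemma exists_test (P N : Measure ℝ) [IsFiniteMeasure P] [IsFiniteMeasure N] (h : P ⟂ₘ N)
    (hN : N ≠ 0) : ∃ φ : ℝ → ℝ, Continuous φ ∧ (∀ t, 0 ≤ φ t) ∧ ∫ t, φ t ∂P < ∫ t, φ t ∂N := by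
  obtain ⟨A, hA, hP, hNA⟩ := h
  have h1 : 0 < N A := by
    rw [pos_iff_ne_zero]
    intro h0
    apply hN
    rw [← Measure.measure_univ_eq_zero, ← measure_add_measure_compl hA, h0, hNA, add_zero]
  obtain ⟨F, hFA, hF, hFN⟩ := hA.exists_lt_isClosed_of_ne_top (measure_ne_top N A) h1
  have hPF : P F = 0 := measure_mono_null hFA hP
  have tP := HasOuterApproxClosed.tendsto_lintegral_apprSeq hF P
  rw [hPF] at tP
  obtain ⟨n, hn⟩ := (tP.eventually_lt_const hFN).exists
  have hn2 := hn.trans_le (HasOuterApproxClosed.measure_le_lintegral hF N n)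
  refine ⟨fun t => (hF.apprSeq n t : ℝ), by fun_prop, fun t => NNReal.coe_nonneg _, ?_⟩
  rw [← BoundedContinuousFunction.toReal_lintegral_coe_eq_integral,
    ← BoundedContinuousFunction.toReal_lintegral_coe_eq_integral]
  exact (ENNReal.toReal_lt_toReal (BoundedContinuousFunction.lintegral_lt_top_of_nnreal _ _).ne
    (BoundedContinuousFunction.lintegral_lt_top_of_nnreal _ _).ne).2
    (lt_of_lt_of_le hn (HasOuterApproxClosed.measure_le_lintegral hF N n))

lemma le_star {b : ℝ → ℝ} {t0 ε : ℝ} (x0 : ℝ) (hε : ε ∈ Set.Ioo 0 t0)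
    (hb : ContinuousOn b (Set.Icc ε t0)) {f : ℝ → ℝ} (hf : ContinuousOn f (Set.Icc ε t0))
    {μ : Measure ℝ} (hμ : Feas b t0 ε f μ) (s : SignedMeasure ℝ) :
    ((intSigned f s + GG t0 x0 μ : ℝ) : EReal) ≤ v1Star b t0 x0 ε s := by
  refine le_trans ?_ (le_iSup₂ (f := fun f _ => ((intSigned f s : ℝ) : EReal) - v1 b t0 x0 ε f)
    f hf)
  have h := v1_le x0 hε hb hf hμ
  calc ((intSigned f s + GG t0 x0 μ : ℝ) : EReal)
      = ((intSigned f s : ℝ) : EReal) - ((-GG t0 x0 μ : ℝ) : EReal) := by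
        rw [← EReal.coe_sub, sub_neg_eq_add]
    _ ≤ _ := EReal.sub_le_sub le_rfl h

lemma intSigned_aff {ε t0 : ℝ} (s : SignedMeasure ℝ)
    (h1 : s.toJordanDecomposition.posPart (Set.Icc ε t0)ᶜ = 0)
    (h2 : s.toJordanDecomposition.negPart (Set.Icc ε t0)ᶜ = 0) {φ : ℝ → ℝ} (hφ : Continuous φ)
    (n : ℝ) : intSigned (fun t => 1 - n * φ t) s =
      intSigned (fun _ => 1) s - n * (∫ t, φ t ∂s.toJordanDecomposition.posPart
        - ∫ t, φ t ∂s.toJordanDecomposition.negPart) := by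
  unfold intSigned
  rw [integral_sub (integrable_const _) ((f_int hφ.continuousOn _ h1).const_mul n),
    integral_sub (integrable_const _) ((f_int hφ.continuousOn _ h2).const_mul n),
    integral_const_mul, integral_const_mul]
  ring

lemma eq_top_of_lin {v : EReal} {a c : ℝ} (hc : 0 < c)
    (h : ∀ n : ℕ, ((a + n * c : ℝ) : EReal) ≤ v) : v = ⊤ := by
  rw [EReal.eq_top_iff_forall_lt]
  intro y
  obtain ⟨n, hn⟩ := exists_nat_gt ((y - a) / c)
  rw [div_lt_iff₀ hc] at hn
  exact lt_of_lt_of_le (EReal.coe_lt_coe_iff.2 (by linarith)) (h n)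

lemma part3 {b : ℝ → ℝ} {t0 ε : ℝ} (x0 : ℝ) (hε : ε ∈ Set.Ioo 0 t0)
    (hb : ContinuousOn b (Set.Icc ε t0)) :
    v1StarStarZero b t0 x0 ε = -(p1eps b t0 x0 ε) := by
  apply le_antisymm
  · refine iSup₂_le fun s hs => ?_
    rw [EReal.neg_le_neg_iff]
    obtain ⟨hs1, hs2⟩ := hs
    by_cases hN : s.toJordanDecomposition.negPart = 0
    · by_cases hadm : ∀ θ ∈ Set.Ici (2 * b 0), ENNReal.ofReal (rTheta θ t0 x0) ≤
          ∫⁻ t, ENNReal.ofReal (rTheta θ t (b t)) ∂s.toJordanDecomposition.posPart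
      · refine (iInf₂_le (f := fun (lam : Measure ℝ) _ => ((lam (Set.Icc ε t0) : ℝ≥0∞) : EReal))
          s.toJordanDecomposition.posPart ⟨⟨inferInstance, hs1⟩, hadm⟩).trans ?_
        have hF : Feas b t0 ε (fun _ => 1) 0 := ⟨⟨inferInstance, by simp⟩, fun t _ => by
          simp [RR]⟩
        refine le_trans ?_ (le_star x0 hε hb continuousOn_const hF s)
        rw [lam_real _ hs1, EReal.coe_le_coe_iff]
        simp [intSigned, hN, GG]
      · push Not at hadm
        obtain ⟨θ, hθ, hlt⟩ := hadm
        rw [lam_lint hε hb _ hs1, ENNReal.ofReal_lt_ofReal_iff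
          (show 0 < rTheta θ t0 x0 from Real.exp_pos _)] at hlt
        have hT : v1Star b t0 x0 ε s = ⊤ := by
          refine eq_top_of_lin (a := intSigned (fun _ => 1) s) (sub_pos.2 hlt) fun n => ?_
          have hF : Feas b t0 ε (fun t => 1 - (n : ℝ) * kk b t0 ε θ t)
              ((n : ℝ≥0) • Measure.dirac θ) := by
            refine ⟨⟨inferInstance, ?_⟩, fun t _ => ?_⟩
            · rw [Measure.smul_apply, Measure.dirac_apply' _ measurableSet_Ici.compl]
              simp [Set.mem_Ici.1 hθ]
            · unfold RR
              rw [integral_smul_nnreal_measure, integral_dirac]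
              simp [NNReal.smul_def]
          have hk := kk_cont_t hε hb θ
          have h := le_star x0 hε hb (by fun_prop) hF s
          refine le_trans (EReal.coe_le_coe_iff.2 (le_of_eq ?_)) h
          rw [intSigned_aff s hs1 hs2 hk, hN, GG, integral_smul_nnreal_measure, integral_dirac]
          simp only [NNReal.smul_def, NNReal.coe_natCast, smul_eq_mul, integral_zero_measure]
          ring
        rw [hT]; exact le_top
    · obtain ⟨φ, hφ, hφ0, hlt⟩ :=
        exists_test _ _ s.toJordanDecomposition.mutuallySingular hN
      have hT : v1Star b t0 x0 ε s = ⊤ := by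
        refine eq_top_of_lin (a := intSigned (fun _ => 1) s) (sub_pos.2 hlt) fun n => ?_
        have hF : Feas b t0 ε (fun t => 1 - (n : ℝ) * φ t) 0 := by
          refine ⟨⟨inferInstance, by simp⟩, fun t _ => ?_⟩
          have := mul_nonneg (Nat.cast_nonneg (α := ℝ) n) (hφ0 t)
          simpa [RR] using this
        have h := le_star x0 hε hb (by fun_prop) hF s
        refine le_trans (EReal.coe_le_coe_iff.2 (le_of_eq ?_)) h
        rw [intSigned_aff s hs1 hs2 hφ, GG, integral_zero_measure]
        ring
      rw [hT]; exact le_top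
  · rw [EReal.neg_le]
    refine le_iInf₂ fun lam hl => ?_
    rw [EReal.neg_le]
    have := hl.1.1
    let j : JordanDecomposition ℝ := ⟨lam, 0, Measure.MutuallySingular.zero_right⟩
    have hj : j.toSignedMeasure.toJordanDecomposition = j :=
      JordanDecomposition.toJordanDecomposition_toSignedMeasure j
    refine le_trans ?_ (le_iSup₂ (f := fun s _ => -(v1Star b t0 x0 ε s)) j.toSignedMeasure
      ⟨by rw [hj]; exact hl.1.2, by rw [hj]; rfl⟩)
    rw [EReal.neg_le_neg_iff]
    refine iSup₂_le fun f hf => ?_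
    have hi : intSigned f j.toSignedMeasure = ∫ t, f t ∂lam := by
      unfold intSigned
      rw [hj]
      simp [j]
    rw [hi, lam_real lam hl.1.2, EReal.sub_le_iff_le_add (Or.inr (EReal.coe_ne_top _))
      (Or.inr (EReal.coe_ne_bot _)), add_comm, ← EReal.sub_le_iff_le_add (Or.inl (EReal.coe_ne_bot _))
      (Or.inl (EReal.coe_ne_top _)), ← EReal.coe_sub]
    apply le_v1 x0 hε hb
    intro μ hμ
    rw [EReal.coe_le_coe_iff]
    have h1 := weak x0 hε hb hμ.1 hl
    have h2 := feas_int hε hb hf hμ lam hl.1.2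
    linarith

theorem stmt_7 (b : ℝ → ℝ)
    (hba : AnalyticOnNhd ℝ b (Set.Ici 0)) (hbconc : ConcaveOn ℝ (Set.Ici 0) b)
    (hb0 : 0 < b 0) (hbderiv : ∃ d : ℝ, HasDerivWithinAt b d (Set.Ici 0) 0)
    (t0 x0 ε : ℝ) (ht0 : 0 < t0) (hx0 : x0 < b t0) (hε : ε ∈ Set.Ioo 0 t0) :
    v1 b t0 x0 ε (fun _ => 0) = -(d1eps b t0 x0 ε) ∧
    (∀ f1 f2 : ℝ → ℝ, ContinuousOn f1 (Set.Icc ε t0) → ContinuousOn f2 (Set.Icc ε t0) →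
      ∀ α : ℝ, α ∈ Set.Ioo (0 : ℝ) 1 →
        v1 b t0 x0 ε (fun t => α * f1 t + (1 - α) * f2 t)
          ≤ (α : EReal) * v1 b t0 x0 ε f1 + ((1 - α : ℝ) : EReal) * v1 b t0 x0 ε f2) ∧
    v1StarStarZero b t0 x0 ε = -(p1eps b t0 x0 ε) ∧
    d1eps b t0 x0 ε ≤ p1eps b t0 x0 ε := by
  have hb : ContinuousOn b (Set.Icc ε t0) :=
    hba.continuousOn.mono fun t ht => le_trans hε.1.le ht.1
  exact ⟨part1 x0 hε hb, part2 hε hb hb0 hx0, part3 x0 hε hb, part4 x0 hε hb⟩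
end
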